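/- arXiv:math/0209133 — 2 statements merged into one kernel-verified Lean document; each statement's English description precedes it below -/
import Mathlib

section
/- The family (r_g)_{g good}, where r_g = Ξ([g]), is a ℚ(q)-basis of 𝒰 (the Lyndon basis). -/
open scoped BigOperators

noncomputable section

/-- The field `ℚ(q)` of rational functions over `ℚ`. -/
abbrev K : Type := RatFunc ℚ

/-- The indeterminate `q`. -/
abbrev qq : K := RatFunc.X

/-- Words on the alphabet `{w_1, …, w_r}` (the free monoid `M`). -/
abbrev Word (r : ℕ) := List (Fin r)

/-- The space `F` with basis the words, as finitely supported families of coefficients. -/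
abbrev FA (r : ℕ) := Word r →₀ K

variable {r : ℕ}

/-- `(|w|, |x|)` : the symmetric bilinear form evaluated on the degrees of two words,
where `p i j = (α_i, α_j)` is the form on simple roots. -/
def pairW (p : Fin r → Fin r → ℤ) (w x : Word r) : ℤ :=
  (w.map fun i => (x.map fun j => p i j).sum).sum

/-- Auxiliary q-shuffle on *reversed* words:
`shAux p w x` is the q-shuffle of `w.reverse` and `x.reverse`; it implements the recursion
`(w·a) * (x·b) = (w * (x·b))·a + q^{-(|w·a|,|b|)} ((w·a) * x)·b`, `w[] * x = x * w[] = x`. -/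
def shAux (p : Fin r → Fin r → ℤ) : Word r → Word r → FA r
  | [], x => Finsupp.single x.reverse 1
  | w, [] => Finsupp.single w.reverse 1
  | a :: w, b :: x =>
      Finsupp.mapDomain (fun u => u ++ [a]) (shAux p w (b :: x))
      + (qq ^ (-(pairW p (a :: w) [b]))) •
          Finsupp.mapDomain (fun u => u ++ [b]) (shAux p (a :: w) x)
  termination_by w x => w.length + x.length
  decreasing_by all_goals (first | (simp only [List.length_cons]; omega) | omega)

/-- The q-shuffle product `*` on `F`, extended bilinearly from words. -/
def shuffle (p : Fin r → Fin r → ℤ) (f g : FA r) : FA r :=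
  f.sum fun w c => g.sum fun x d => (c * d) • shAux p w.reverse x.reverse

/-- Membership in `𝒰`, the `ℚ(q)`-subalgebra of `(F, *)` generated by the letters `w_i`. -/
inductive InU (p : Fin r → Fin r → ℤ) : FA r → Prop
  | letter (i : Fin r) : InU p (Finsupp.single [i] 1)
  | one : InU p (Finsupp.single ([] : Word r) 1)
  | add : ∀ {f g : FA r}, InU p f → InU p g → InU p (f + g)
  | smul : ∀ (c : K) {f : FA r}, InU p f → InU p (c • f)
  | mul : ∀ {f g : FA r}, InU p f → InU p g → InU p (shuffle p f g)

/-- The degree of a word in `Q⁺`, recorded as the multiplicity of each simple root. -/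
def deg (w : Word r) : Fin r → ℕ := fun i => w.count i

/-- `f` is homogeneous of degree `ν`. -/
def Homog (f : FA r) (ν : Fin r → ℕ) : Prop := ∀ w ∈ f.support, deg w = ν

/-- Lexicographic order on words (a proper left factor is smaller than the word). -/
def wlt (w x : Word r) : Prop := List.Lex (· < ·) w x

def wle (w x : Word r) : Prop := wlt w x ∨ w = x

/-- `g` is the lexicographically largest word occurring (with nonzero coefficient) in `f`. -/
def IsMaxWord (f : FA r) (g : Word r) : Prop :=
  f g ≠ 0 ∧ ∀ w ∈ f.support, wle w g

/-- Good words: words of the form `max(u)` for a nonzero homogeneous `u ∈ 𝒰`. -/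
def IsGood (p : Fin r → Fin r → ℤ) (g : Word r) : Prop :=
  ∃ u : FA r, InU p u ∧ (∃ ν, Homog u ν) ∧ IsMaxWord u g

/-- Lyndon words: nonempty words smaller than all their proper nonempty right factors. -/
def IsLyndon (l : Word r) : Prop :=
  l ≠ [] ∧ ∀ u v : Word r, l = u ++ v → u ≠ [] → v ≠ [] → wlt l v

/-- The concatenation product on `F`. -/
def cmul (f g : FA r) : FA r :=
  f.sum fun w c => g.sum fun x d => Finsupp.single (w ++ x) (c * d)

open scoped Classical in
/-- Length of the longest proper nonempty left factor of `l` which is a Lyndon word. -/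
def costdLen (l : Word r) : ℕ :=
  Nat.findGreatest (fun k => 0 < k ∧ k < l.length ∧ IsLyndon (l.take k)) (l.length - 1)

/-- The iterated q-bracketing `[l]` of a word: `[l] = l` for a letter, and
`[l] = [[l₁],[l₂]]_q = [l₁][l₂] − q^{(|l₁|,|l₂|)}[l₂][l₁]` for the co-standard
factorization `l = l₁ l₂`. -/
def bracket (p : Fin r → Fin r → ℤ) (l : Word r) : FA r :=
  if l.length ≤ 1 then Finsupp.single l 1
  else if hk : 0 < costdLen l ∧ costdLen l < l.length then
    cmul (bracket p (l.take (costdLen l))) (bracket p (l.drop (costdLen l)))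
      - qq ^ (pairW p (l.take (costdLen l)) (l.drop (costdLen l))) •
          cmul (bracket p (l.drop (costdLen l))) (bracket p (l.take (costdLen l)))
  else Finsupp.single l 1
  termination_by l.length
  decreasing_by
    all_goals (first | (simp only [List.length_take, List.length_drop]; omega) | omega)

/-- `[w] = [l₁][l₂]⋯[l_k]` : the concatenation product of the brackets of a list of words. -/
def cprod (p : Fin r → Fin r → ℤ) (ls : List (Word r)) : FA r :=
  (ls.map (bracket p)).foldr cmul (Finsupp.single ([] : Word r) 1)

/-- `Ξ` on a word: the q-shuffle product of its letters. -/
def xiWord (p : Fin r → Fin r → ℤ) : Word r → FA r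
  | [] => Finsupp.single ([] : Word r) 1
  | i :: w => shuffle p (Finsupp.single [i] 1) (xiWord p w)

/-- The linear map `Ξ : (F, concatenation) → (F, *)`, `Ξ(w_{i₁}⋯w_{i_k}) = w_{i₁} * ⋯ * w_{i_k}`. -/
def xi (p : Fin r → Fin r → ℤ) (f : FA r) : FA r :=
  f.sum fun w c => c • xiWord p w

/-- The data of the Cartan matrix `[a_{ij}]` of a finite-dimensional complex simple
Lie algebra of rank `r`: an integral matrix with `2` on the diagonal and nonpositive
off-diagonal entries, symmetrizable by `d_i ∈ {1,2,3}`, whose symmetrization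
`(α_i, α_j) = d_i a_{ij}` is positive definite, and which is indecomposable. -/
structure CartanData (r : ℕ) where
  a : Fin r → Fin r → ℤ
  d : Fin r → ℤ
  diag : ∀ i, a i i = 2
  offdiag : ∀ i j, i ≠ j → a i j ≤ 0
  dval : ∀ i, d i = 1 ∨ d i = 2 ∨ d i = 3
  dsymm : ∀ i j, d i * a i j = d j * a j i
  posdef : ∀ v : Fin r → ℚ, v ≠ 0 → 0 < ∑ i, ∑ j, v i * v j * ((d i * a i j : ℤ) : ℚ)
  indec : ∀ s : Finset (Fin r), s.Nonempty → s ≠ Finset.univ →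
    ∃ i ∈ s, ∃ j, j ∉ s ∧ a i j ≠ 0

/-- The symmetric bilinear form `(α_i, α_j) = d_i a_{ij}` on simple roots. -/
def CartanData.p (C : CartanData r) : Fin r → Fin r → ℤ := fun i j => C.d i * C.a i j

/-!
Since the q-shuffle product is associative, `𝒰` is the image of `Ξ`, i.e. the span of the `Ξ(w)`,
`w` a word. The left q-shuffle by a letter `w_j` is adjoint, for the pairing in which words are
orthonormal, to a q-derivation `e_j` deleting that letter, and comparing the two recursively shows
that the matrix of `Ξ` in the basis of words is symmetric. Hence an element `Ξ(f)` of `𝒰` has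
`⟨f, Ξ(x)⟩` as its coefficient at `x`, so that `g` is good if and only if some linear form vanishes
on `Ξ(x)` for all `x > g` but not on `Ξ(g)`: the good words are those `g` for which `Ξ(g)` is not a
combination of the `Ξ(x)` with `x > g`. Scanning words downwards, the `Ξ(g)`, `g` good, form a basis
of `𝒰`. Finally, if `l = l₁ l₂` is the co-standard factorization of a Lyndon word then
`l < l₂ < l₂ l₁`, which makes `[l]`, and then `[w]` for every word `w`, the sum of the word itself
and of larger rearrangements of it; so replacing `Ξ(g)` by `Ξ([g])` is a unitriangular change.
-/

open Finsupp (single)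

section UnitriangularFamilies

open Submodule Set

variable {ι R V : Type*}

theorem linearIndependent_of_notMem_span_Ioi [DivisionRing R] [AddCommGroup V] [Module R V]
    [LinearOrder ι] {v : ι → V} (hv : ∀ i, v i ∉ span R (v '' Ioi i)) :
    LinearIndependent R v := by
  suffices h : ∀ s : Finset ι, LinearIndepOn R v s from
    linearIndepOn_univ_iff.mp <| linearIndepOn_of_finite univ fun t _ ht => by
      simpa using h ht.toFinset
  intro s
  induction s using Finset.induction_on_min with
  | empty => simp
  | insert i s hi ih =>
    rw [Finset.coe_insert]
    exact ih.insert fun hmem => hv i <| span_mono (image_mono fun j hj => hi j hj) hmem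

theorem linearIndependent_of_sub_mem_span_Ioi [DivisionRing R] [AddCommGroup V] [Module R V]
    [LinearOrder ι] {v v' : ι → V} (hv' : ∀ i, v' i - v i ∈ span R (v '' Ioi i)) {G : Set ι}
    (hG : ∀ i ∈ G, v i ∉ span R (v '' Ioi i)) :
    LinearIndependent R fun i : G => v' i := by
  refine linearIndependent_of_notMem_span_Ioi fun i hi => hG i i.2 ?_
  have higher : span R ((fun j : G => v' j) '' Ioi i) ≤ span R (v '' Ioi i.1) := by
    rw [span_le]
    rintro _ ⟨j, hij : i.1 < j.1, rfl⟩
    have hj : v' j - v j ∈ span R (v '' Ioi i.1) :=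
      span_mono (image_mono (Ioi_subset_Ioi hij.le)) (hv' j)
    exact (sub_mem_iff_left _ (subset_span (mem_image_of_mem v hij))).mp hj
  exact (sub_mem_iff_right _ (higher hi)).mp (hv' i)

theorem span_range_eq_of_sub_mem_span [Ring R] [AddCommGroup V] [Module R V] {v v' : ι → V}
    {above : ι → Set ι} (wf : WellFounded fun j i => j ∈ above i)
    (hv' : ∀ i, v' i - v i ∈ span R (v '' above i)) {G : Set ι}
    (hG : ∀ i ∉ G, v i ∈ span R (v '' above i)) :
    span R (range fun i : G => v' i) = span R (range v) := by
  apply le_antisymm <;> rw [span_le]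
  · rintro _ ⟨i, rfl⟩
    exact (sub_mem_iff_left _ (subset_span (mem_range_self i.1))).mp
      (span_mono (image_subset_range _ _) (hv' i))
  · rintro _ ⟨i, rfl⟩
    induction i using wf.induction with
    | _ i ih =>
    have above_le : span R (v '' above i) ≤ span R (range fun i : G => v' i) := by
      rw [span_le]
      rintro _ ⟨j, hj, rfl⟩
      exact ih j hj
    by_cases hi : i ∈ G
    · exact (sub_mem_iff_right _ (subset_span (mem_range_self (⟨i, hi⟩ : G)))).mp (above_le (hv' i))
    · exact above_le (hG i hi)

end UnitriangularFamilies

section Supported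

variable {α R V : Type*} [Semiring R] [AddCommMonoid V] [Module R V]

theorem map_mem_of_mem_supported (A : (α →₀ R) →ₗ[R] V) {N : Submodule R V} {s : Set α}
    (hA : ∀ u ∈ s, A (single u 1) ∈ N) {f : α →₀ R} (hf : f ∈ Finsupp.supported R R s) :
    A f ∈ N := by
  rw [Finsupp.supported_eq_span_single] at hf
  have hle : Submodule.span R ((fun u => single u (1 : R)) '' s) ≤ N.comap A :=
    Submodule.span_le.mpr (Set.forall_mem_image.mpr hA)
  exact hle hf

theorem map_eq_map_of_mem_supported {A B : (α →₀ R) →ₗ[R] V} {s : Set α}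
    (hAB : ∀ u ∈ s, A (single u 1) = B (single u 1)) {f : α →₀ R}
    (hf : f ∈ Finsupp.supported R R s) : A f = B f := by
  rw [Finsupp.supported_eq_span_single] at hf
  exact LinearMap.eqOn_span (Set.forall_mem_image.mpr hAB) hf

end Supported

section LexicographicOrder

variable {α : Type*}

theorem isPrefix_or_exists_lt_of_lex_lt [LT α] {u v : List α} (h : u < v) :
    u <+: v ∨ ∃ c a s b t, a < b ∧ u = c ++ a :: s ∧ v = c ++ b :: t := by
  replace h : List.Lex (· < ·) u v := h
  induction h with
  | nil => exact .inl (List.nil_prefix)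
  | @cons x u v _ ih =>
    rcases ih with huv | ⟨c, a, s, b, t, hab, rfl, rfl⟩
    · exact .inl ((List.prefix_cons_inj x).mpr huv)
    · exact .inr ⟨x :: c, a, s, b, t, hab, rfl, rfl⟩
  | rel hab => exact .inr ⟨[], _, _, _, _, hab, rfl, rfl⟩

theorem append_lex_lt_append_of_length_le [LT α] {u v : List α} (h : u < v)
    (hlen : v.length ≤ u.length) (s t : List α) : u ++ s < v ++ t := by
  replace h : List.Lex (· < ·) u v := h
  induction h with
  | nil => simp at hlen
  | cons _ ih => exact List.Lex.cons (ih (by simpa using hlen))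
  | rel hab => exact List.Lex.rel hab

theorem lex_lt_append [LT α] (u : List α) {v : List α} (hv : v ≠ []) : u < u ++ v := by
  obtain ⟨a, v, rfl⟩ := List.exists_cons_of_ne_nil hv
  simpa using List.append_left_lt (l₁ := u) (List.nil_lt_cons a v)

theorem lt_of_append_lex_lt_append_left [Preorder α] {u v w : List α} (h : u ++ v < u ++ w) :
    v < w := by
  induction u with
  | nil => exact h
  | cons a u ih => exact ih (List.cons_lt_cons_self.mp h)

end LexicographicOrder

section LyndonWords

theorem isLyndon_singleton (a : Fin r) : IsLyndon [a] := by
  refine ⟨by simp, fun u v huv hu hv => ?_⟩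
  simp [List.singleton_eq_append_iff, hu, hv] at huv

theorem IsLyndon.append_lt_right {a b : Word r} (ha : IsLyndon a) (hb : IsLyndon b)
    (hab : a < b) : a ++ b < b := by
  rcases isPrefix_or_exists_lt_of_lex_lt hab with ⟨t, rfl⟩ | ⟨c, x, s, y, t, hxy, rfl, rfl⟩
  · have ht : t ≠ [] := by
      rintro rfl
      simp at hab
    exact List.append_left_lt (hb.2 a t rfl ha.1 ht)
  · rw [List.append_assoc]
    exact List.append_left_lt (.rel hxy)

theorem IsLyndon.append {a b : Word r} (ha : IsLyndon a) (hb : IsLyndon b) (hab : a < b) :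
    IsLyndon (a ++ b) := by
  have hlt : a ++ b < b := ha.append_lt_right hb hab
  refine ⟨by simp [ha.1], fun u v huv hu hv => ?_⟩
  rcases List.append_eq_append_iff.mp huv with ⟨c, -, rfl⟩ | ⟨c, rfl, rfl⟩
  · rcases eq_or_ne c [] with rfl | hc
    · exact hlt
    · exact hlt.trans (hb.2 c v rfl hc hv)
  · rcases eq_or_ne c [] with rfl | hc
    · simpa [wlt] using hlt
    · exact append_lex_lt_append_of_length_le (ha.2 u c rfl hu hc) (by simp) b b

theorem IsLyndon.append_singleton_of_lt {c t : Word r} {a b : Fin r}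
    (h : IsLyndon (c ++ a :: t)) (hab : a < b) : IsLyndon (c ++ [b]) := by
  refine ⟨by simp, fun u x hux hu hx => ?_⟩
  obtain ⟨v, rfl, rfl⟩ : ∃ v, c = u ++ v ∧ x = v ++ [b] := by
    rcases List.append_eq_append_iff.mp hux with ⟨d, rfl, hd⟩ | ⟨d, hc, hd⟩
    · obtain ⟨rfl, rfl⟩ | ⟨-, rfl⟩ := List.singleton_eq_append_iff.mp hd
      · exact ⟨[], by simp, rfl⟩
      · exact absurd rfl hx
    · exact ⟨d, hc, hd⟩
  obtain ⟨c₁, c₂, hc, hlen⟩ : ∃ c₁ c₂, u ++ v = c₁ ++ c₂ ∧ c₁.length = v.length + 1 :=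
    ⟨_, _, (List.take_append_drop (v.length + 1) _).symm, by
      have := List.length_pos_iff.mpr hu
      simp only [List.length_take, List.length_append]
      omega⟩
  -- Otherwise `c a t`, which begins with `c₁`, would exceed its suffix `v a t`.
  have hc₁a : c₁ ≤ v ++ [a] := by
    by_contra! hlt
    have hsuffix : u ++ v ++ a :: t < v ++ a :: t := h.2 u (v ++ a :: t) (by simp) hu (by simp)
    have hprefix : v ++ [a] ++ t < c₁ ++ (c₂ ++ a :: t) :=
      append_lex_lt_append_of_length_le hlt (by simp [hlen]) _ _
    rw [hc] at hsuffix
    exact lt_asymm hsuffix (by simpa using hprefix)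
  have hc₁b : c₁ < v ++ [b] := hc₁a.trans_lt (List.append_left_lt (.rel hab))
  rw [hc, List.append_assoc]
  simpa [wlt] using append_lex_lt_append_of_length_le hc₁b (by simp [hlen]) (c₂ ++ [b]) []

theorem IsLyndon.exists_isLyndon_prefix {a y : Word r} (ha : IsLyndon a) (hay : a ++ y < y) :
    ∃ m s, y = m ++ s ∧ IsLyndon m ∧ a < m := by
  have hy : y ≠ [] := by
    rintro rfl
    exact List.not_lt_nil _ hay
  have hlt : a < y := (lex_lt_append a hy).trans hay
  rcases isPrefix_or_exists_lt_of_lex_lt hlt with ⟨t, rfl⟩ | ⟨c, x, s, z, t, hxz, rfl, rfl⟩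
  · obtain ⟨m, s, rfl, hm, ham⟩ :=
      ha.exists_isLyndon_prefix (lt_of_append_lex_lt_append_left hay)
    exact ⟨a ++ m, s, by simp, ha.append hm ham, lex_lt_append a hm.1⟩
  · exact ⟨c ++ [z], t, by simp, ha.append_singleton_of_lt hxz, List.append_left_lt (.rel hxz)⟩
termination_by y.length
decreasing_by
  subst y
  simpa using List.length_pos_iff.mpr ha.1

theorem costdLen_spec {l : Word r} (hlen : 1 < l.length) :
    0 < costdLen l ∧ costdLen l < l.length ∧ IsLyndon (l.take (costdLen l)) := by
  classical
  have first_letter : 0 < 1 ∧ 1 < l.length ∧ IsLyndon (l.take 1) := by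
    obtain ⟨a, l, rfl⟩ := List.exists_cons_of_length_pos (zero_lt_one.trans hlen)
    exact ⟨one_pos, hlen, isLyndon_singleton a⟩
  exact Nat.findGreatest_spec
    (P := fun k => 0 < k ∧ k < l.length ∧ IsLyndon (l.take k)) (by omega) first_letter

theorem not_isLyndon_take_of_costdLen_lt {l : Word r} {k : ℕ} (hk : costdLen l < k)
    (hkl : k < l.length) : ¬ IsLyndon (l.take k) := by
  classical
  exact fun hly => Nat.findGreatest_is_greatest hk (by omega) ⟨by omega, hkl, hly⟩

theorem IsLyndon.drop_costdLen {l : Word r} (hl : IsLyndon l) (hlen : 1 < l.length) :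
    IsLyndon (l.drop (costdLen l)) := by
  obtain ⟨-, hlt, hleft⟩ := costdLen_spec hlen
  have hsplit : l.take (costdLen l) ++ l.drop (costdLen l) = l := List.take_append_drop _ l
  have hright : l.drop (costdLen l) ≠ [] := by simpa using hlt
  have hsuffix : l.take (costdLen l) ++ l.drop (costdLen l) < l.drop (costdLen l) := by
    conv_lhs => rw [hsplit]
    exact hl.2 _ _ hsplit.symm hleft.1 hright
  obtain ⟨m, s, hms, hm, hleft_lt⟩ := hleft.exists_isLyndon_prefix hsuffix
  rcases eq_or_ne s [] with rfl | hs
  · rwa [hms, List.append_nil]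
  -- A proper prefix `m` of the right factor could be moved to the left factor, which is maximal.
  have htake : l.take (costdLen l + m.length) = l.take (costdLen l) ++ m := by
    rw [List.take_add, hms, List.take_left]
  have hlen_split := congrArg List.length hms
  have hm_pos := List.length_pos_iff.mpr hm.1
  have hs_pos := List.length_pos_iff.mpr hs
  rw [List.length_drop, List.length_append] at hlen_split
  exact absurd (htake ▸ hleft.append hm hleft_lt)
    (not_isLyndon_take_of_costdLen_lt (by omega) (by omega))

end LyndonWords

section WeightSpaces

/-- The homogeneous component of `F` whose degree is that of the word `v`. -/
def weightSpace (v : Word r) : Submodule K (FA r) := Finsupp.supported K K {u | u.Perm v}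

/-- Concatenation with a letter on the right, `f ↦ f · w_a`. -/
def snoc (a : Fin r) : FA r →ₗ[K] FA r := Finsupp.lmapDomain K K (· ++ [a])

/-- Concatenation with a letter on the left, `f ↦ w_a · f`. -/
def cons (a : Fin r) : FA r →ₗ[K] FA r := Finsupp.lmapDomain K K (a :: ·)

@[simp]
theorem snoc_single (a : Fin r) (w : Word r) (c : K) :
    snoc a (single w c) = single (w ++ [a]) c := by
  simp [snoc]

@[simp]
theorem cons_single (a : Fin r) (w : Word r) (c : K) :
    cons a (single w c) = single (a :: w) c := by
  simp [cons]

theorem snoc_cons (a b : Fin r) (f : FA r) : snoc b (cons a f) = cons a (snoc b f) := by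
  have h : snoc b ∘ₗ cons a = cons a ∘ₗ snoc b := by
    ext
    simp
  exact LinearMap.congr_fun h f

theorem single_mem_weightSpace {u v : Word r} (h : u.Perm v) (c : K) :
    single u c ∈ weightSpace v :=
  Finsupp.single_mem_supported K c h

theorem perm_of_mem_weightSpace {v u : Word r} {f : FA r} (hf : f ∈ weightSpace v)
    (hu : f u ≠ 0) : u.Perm v :=
  (Finsupp.mem_supported K f).mp hf (Finsupp.mem_support_iff.mpr hu)

theorem weightSpace_congr {v v' : Word r} (h : v.Perm v') : weightSpace v = weightSpace v' := by
  have hset : {u : Word r | u.Perm v} = {u | u.Perm v'} :=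
    Set.ext fun u => ⟨fun hu => hu.trans h, fun hu => hu.trans h.symm⟩
  rw [weightSpace, hset, weightSpace]

theorem snoc_mem_weightSpace (a : Fin r) {v : Word r} {f : FA r} (hf : f ∈ weightSpace v) :
    snoc a f ∈ weightSpace (v ++ [a]) :=
  map_mem_of_mem_supported (snoc a)
    (fun u (hu : u.Perm v) => by simpa using single_mem_weightSpace (hu.append_right [a]) 1) hf

theorem homog_of_mem_weightSpace {v : Word r} {f : FA r} (hf : f ∈ weightSpace v) :
    Homog f (deg v) := fun _ hu =>
  funext fun i => (perm_of_mem_weightSpace hf (Finsupp.mem_support_iff.mp hu)).count_eq i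

end WeightSpaces

section DegreePairing

variable (p : Fin r → Fin r → ℤ)

theorem pairW_perm_left {w w' : Word r} (h : w.Perm w') (x : Word r) :
    pairW p w x = pairW p w' x :=
  (h.map _).sum_eq

theorem pairW_append_left (w w' x : Word r) :
    pairW p (w ++ w') x = pairW p w x + pairW p w' x := by
  simp [pairW]

theorem pairW_append_right (w x x' : Word r) :
    pairW p w (x ++ x') = pairW p w x + pairW p w x' := by
  simp [pairW, List.sum_map_add]

theorem pairW_perm_right {x x' : Word r} (h : x.Perm x') (w : Word r) :
    pairW p w x = pairW p w x' := by
  simp only [pairW, (h.map _).sum_eq]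

end DegreePairing

section Shuffle

variable (p : Fin r → Fin r → ℤ)

/-- The q-shuffle product `*` as a bilinear map. -/
def shuffleₗ : FA r →ₗ[K] FA r →ₗ[K] FA r :=
  Finsupp.linearCombination K fun w =>
    Finsupp.linearCombination K fun x => shAux p w.reverse x.reverse

theorem shuffle_eq_shuffleₗ (f g : FA r) : shuffle p f g = shuffleₗ p f g := by
  simp only [shuffle, shuffleₗ, Finsupp.linearCombination_apply, Finsupp.sum,
    LinearMap.sum_apply, LinearMap.smul_apply, Finset.smul_sum, smul_smul]

theorem shuffleₗ_single_single (w x : Word r) :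
    shuffleₗ p (single w 1) (single x 1) = shAux p w.reverse x.reverse := by
  simp [shuffleₗ]

@[simp]
theorem shuffleₗ_one_left (f : FA r) : shuffleₗ p (single [] 1) f = f := by
  have h : shuffleₗ p (single [] 1) = LinearMap.id := by
    ext x : 2
    simp [shuffleₗ_single_single, shAux]
  exact LinearMap.congr_fun h f

@[simp]
theorem shuffleₗ_one_right (f : FA r) : shuffleₗ p f (single [] 1) = f := by
  have h : (shuffleₗ p).flip (single [] 1) = LinearMap.id := by
    ext w : 2
    rcases List.eq_nil_or_concat w with rfl | ⟨w, a, rfl⟩ <;>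
      simp [shuffleₗ_single_single, shAux]
  exact LinearMap.congr_fun h f

theorem shuffleₗ_single_snoc_single_snoc (w x : Word r) (a b : Fin r) :
    shuffleₗ p (single (w ++ [a]) 1) (single (x ++ [b]) 1) =
      snoc a (shuffleₗ p (single w 1) (single (x ++ [b]) 1)) +
        qq ^ (-pairW p (w ++ [a]) [b]) •
          snoc b (shuffleₗ p (single (w ++ [a]) 1) (single x 1)) := by
  have hperm : (a :: w.reverse).Perm (w ++ [a]) := by
    simpa using List.reverse_perm (w ++ [a])
  simp only [shuffleₗ_single_single, List.reverse_append, List.reverse_singleton,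
    List.singleton_append]
  rw [shAux, pairW_perm_left p hperm]
  rfl

theorem shuffleₗ_snoc_snoc {v : Word r} {f : FA r} (hf : f ∈ weightSpace v) (g : FA r)
    (a b : Fin r) :
    shuffleₗ p (snoc a f) (snoc b g) =
      snoc a (shuffleₗ p f (snoc b g)) +
        qq ^ (-pairW p (v ++ [a]) [b]) • snoc b (shuffleₗ p (snoc a f) g) := by
  have h : (shuffleₗ p ∘ₗ snoc a).compl₂ (snoc b) f =
      ((shuffleₗ p).compl₂ (snoc b)).compr₂ (snoc a) f +
        (qq ^ (-pairW p (v ++ [a]) [b]) • (shuffleₗ p ∘ₗ snoc a).compr₂ (snoc b)) f := by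
    rw [← LinearMap.add_apply]
    refine map_eq_map_of_mem_supported (V := FA r →ₗ[K] FA r) (fun u (hu : u.Perm v) => ?_) hf
    ext x : 2
    simp [shuffleₗ_single_snoc_single_snoc, pairW_perm_left p (hu.append_right [a])]
  simpa using LinearMap.congr_fun h g

theorem shuffleₗ_single_single_mem_weightSpace (w x : Word r) :
    shuffleₗ p (single w 1) (single x 1) ∈ weightSpace (w ++ x) := by
  induction w using List.reverseRecOn generalizing x with
  | nil => simpa using single_mem_weightSpace (.refl x) 1
  | append_singleton w a ihw =>
    induction x using List.reverseRecOn with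
    | nil => simpa using single_mem_weightSpace (.refl (w ++ [a])) 1
    | append_singleton x b ihx =>
      rw [shuffleₗ_single_snoc_single_snoc]
      refine add_mem ?_ (Submodule.smul_mem _ _ ?_)
      · have hperm : (w ++ (x ++ [b]) ++ [a]).Perm (w ++ [a] ++ (x ++ [b])) := by
          simpa using (List.perm_append_comm (l₁ := x ++ [b]) (l₂ := [a])).append_left w
        exact weightSpace_congr hperm ▸ snoc_mem_weightSpace a (ihw (x ++ [b]))
      · simpa using snoc_mem_weightSpace b ihx

theorem shuffleₗ_mem_weightSpace {w x : Word r} {f g : FA r} (hf : f ∈ weightSpace w)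
    (hg : g ∈ weightSpace x) : shuffleₗ p f g ∈ weightSpace (w ++ x) := by
  refine map_mem_of_mem_supported ((shuffleₗ p).flip g) (fun u (hu : u.Perm w) => ?_) hf
  refine map_mem_of_mem_supported (shuffleₗ p (single u 1)) (fun y (hy : y.Perm x) => ?_) hg
  exact weightSpace_congr (hu.append hy) ▸ shuffleₗ_single_single_mem_weightSpace p u y

theorem shuffleₗ_assoc_single (u v w : Word r) :
    shuffleₗ p (shuffleₗ p (single u 1) (single v 1)) (single w 1) =
      shuffleₗ p (single u 1) (shuffleₗ p (single v 1) (single w 1)) := by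
  induction u using List.reverseRecOn generalizing v w with
  | nil => simp
  | append_singleton u a ihu =>
  induction v using List.reverseRecOn generalizing w with
  | nil => simp
  | append_singleton v b ihv =>
  induction w using List.reverseRecOn with
  | nil => simp
  | append_singleton w c ihw =>
  specialize ihu (v ++ [b]) (w ++ [c])
  specialize ihv (w ++ [c])
  simp only [← snoc_single] at ihu ihv ihw ⊢
  have hu := single_mem_weightSpace (.refl u) 1
  have hv := single_mem_weightSpace (.refl v) 1
  have huv := shuffleₗ_mem_weightSpace p hu (snoc_mem_weightSpace b hv)
  have huv' := shuffleₗ_mem_weightSpace p (snoc_mem_weightSpace a hu) hv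
  have hpair : pairW p (u ++ (v ++ [b]) ++ [a]) [c] =
      pairW p (v ++ [b]) [c] + pairW p (u ++ [a]) [c] := by
    simp only [pairW_append_left]
    ring
  have hpair' : pairW p (u ++ [a] ++ v ++ [b]) [c] =
      pairW p (v ++ [b]) [c] + pairW p (u ++ [a]) [c] := by
    simp only [pairW_append_left]
    ring
  have expand_vw := shuffleₗ_snoc_snoc p hv (single w 1) b c
  rw [expand_vw, map_add, map_smul] at ihu
  rw [shuffleₗ_snoc_snoc p hu, map_add, map_smul, LinearMap.add_apply, LinearMap.smul_apply] at ihw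
  rw [expand_vw, map_add, map_smul, shuffleₗ_snoc_snoc p hu, shuffleₗ_snoc_snoc p hu,
    shuffleₗ_snoc_snoc p hu, map_add, map_smul, LinearMap.add_apply, LinearMap.smul_apply,
    shuffleₗ_snoc_snoc p huv, shuffleₗ_snoc_snoc p huv', hpair, hpair', ihu, ihv, ← ihw,
    neg_add, zpow_add₀ RatFunc.X_ne_zero]
  simp only [map_add, map_smul, smul_add, smul_smul]
  rw [mul_comm (qq ^ (-pairW p (u ++ [a]) [b])), mul_assoc]
  abel

theorem shuffleₗ_assoc (f g h : FA r) :
    shuffleₗ p (shuffleₗ p f g) h = shuffleₗ p f (shuffleₗ p g h) := by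
  have hcomp : (shuffleₗ p).compr₂ (shuffleₗ p) =
      (LinearMap.llcomp K (FA r) (FA r) (FA r) ∘ₗ shuffleₗ p).compl₂ (shuffleₗ p) := by
    ext u v w : 6
    exact shuffleₗ_assoc_single p u v w
  exact LinearMap.congr_fun (LinearMap.congr_fun (LinearMap.congr_fun hcomp f) g) h

end Shuffle

section Xi

variable (p : Fin r → Fin r → ℤ)

/-- The map `Ξ` as a linear map. -/
def xiₗ : FA r →ₗ[K] FA r := Finsupp.linearCombination K (xiWord p)

theorem xi_eq_xiₗ (f : FA r) : xi p f = xiₗ p f := rfl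

@[simp]
theorem xiₗ_single (w : Word r) : xiₗ p (single w 1) = xiWord p w := by
  simp [xiₗ]

theorem xiWord_cons (i : Fin r) (w : Word r) :
    xiWord p (i :: w) = shuffleₗ p (single [i] 1) (xiWord p w) := by
  rw [xiWord, shuffle_eq_shuffleₗ]

theorem xiₗ_cons (i : Fin r) (f : FA r) :
    xiₗ p (cons i f) = shuffleₗ p (single [i] 1) (xiₗ p f) := by
  have h : xiₗ p ∘ₗ cons i = shuffleₗ p (single [i] 1) ∘ₗ xiₗ p := by
    ext w : 2
    simp [xiWord_cons]
  exact LinearMap.congr_fun h f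

theorem xiWord_append (w x : Word r) :
    xiWord p (w ++ x) = shuffleₗ p (xiWord p w) (xiWord p x) := by
  induction w with
  | nil => simp [xiWord]
  | cons i w ih => rw [List.cons_append, xiWord_cons, ih, xiWord_cons, shuffleₗ_assoc]

theorem xiWord_mem_weightSpace (w : Word r) : xiWord p w ∈ weightSpace w := by
  induction w with
  | nil => exact single_mem_weightSpace (.refl []) 1
  | cons i w ih =>
    rw [xiWord_cons]
    exact shuffleₗ_mem_weightSpace p (single_mem_weightSpace (.refl [i]) 1) ih

theorem xiₗ_mem_weightSpace {v : Word r} {f : FA r} (hf : f ∈ weightSpace v) :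
    xiₗ p f ∈ weightSpace v :=
  map_mem_of_mem_supported (xiₗ p) (fun u (hu : u.Perm v) => by
    simpa [weightSpace_congr hu] using xiWord_mem_weightSpace p u) hf

theorem inU_xiWord (w : Word r) : InU p (xiWord p w) := by
  induction w with
  | nil => exact .one
  | cons i w ih => exact .mul (.letter i) ih

theorem mem_span_xiWord_of_inU {f : FA r} (hf : InU p f) :
    f ∈ Submodule.span K (Set.range (xiWord p)) := by
  induction hf with
  | letter i => exact Submodule.subset_span ⟨[i], by simp [xiWord, shuffle_eq_shuffleₗ]⟩
  | one => exact Submodule.subset_span ⟨[], rfl⟩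
  | add _ _ hf hg => exact add_mem hf hg
  | smul c _ hf => exact Submodule.smul_mem _ c hf
  | mul _ _ hf hg =>
    have hmul := Submodule.apply_mem_map₂ (shuffleₗ p) hf hg
    rw [Submodule.map₂_span_span] at hmul
    rw [shuffle_eq_shuffleₗ]
    refine Submodule.span_mono ?_ hmul
    rintro _ ⟨_, ⟨w, rfl⟩, _, ⟨x, rfl⟩, rfl⟩
    exact ⟨w ++ x, xiWord_append p w x⟩

theorem inU_iff_mem_span_xiWord {f : FA r} :
    InU p f ↔ f ∈ Submodule.span K (Set.range (xiWord p)) := by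
  refine ⟨mem_span_xiWord_of_inU p, fun hf => ?_⟩
  induction hf using Submodule.span_induction with
  | mem f hf =>
    obtain ⟨w, rfl⟩ := hf
    exact inU_xiWord p w
  | zero => simpa using InU.smul (0 : K) (InU.one (p := p))
  | add f g _ _ hf hg => exact hf.add hg
  | smul c f _ hf => exact hf.smul c

theorem inU_iff_exists_xiₗ_eq {f : FA r} : InU p f ↔ ∃ g, xiₗ p g = f := by
  rw [inU_iff_mem_span_xiWord, ← Finsupp.range_linearCombination, LinearMap.mem_range, xiₗ]

end Xi

section Symmetry

/-- The symmetric bilinear form on `F` for which the words are orthonormal. -/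
def wordPairing : FA r →ₗ[K] FA r →ₗ[K] K := Finsupp.linearCombination K Finsupp.lapply

@[simp]
theorem wordPairing_single_left (w : Word r) (g : FA r) : wordPairing (single w 1) g = g w := by
  simp [wordPairing]

theorem wordPairing_comm (f g : FA r) : wordPairing f g = wordPairing g f := by
  have h : (wordPairing : FA r →ₗ[K] FA r →ₗ[K] K) = wordPairing.flip := by
    ext w x
    simp [Finsupp.single_apply, eq_comm]
  exact LinearMap.congr_fun (LinearMap.congr_fun h f) g

@[simp]
theorem wordPairing_single_right (f : FA r) (w : Word r) : wordPairing f (single w 1) = f w := by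
  rw [wordPairing_comm, wordPairing_single_left]

theorem cons_apply_nil (a : Fin r) (f : FA r) : cons a f [] = 0 :=
  Finsupp.mapDomain_of_notMem_range _ _ (by simp)

theorem cons_apply_cons (a b : Fin r) (f : FA r) (w : Word r) :
    cons a f (b :: w) = if a = b then f w else 0 := by
  split_ifs with hab
  · subst hab
    exact Finsupp.mapDomain_apply (List.cons_injective) f w
  · exact Finsupp.mapDomain_of_notMem_range _ _ (by simp [hab])

variable (p : Fin r → Fin r → ℤ)

theorem shuffleₗ_letter_single_cons (j a : Fin r) (x : Word r) :
    shuffleₗ p (single [j] 1) (single (a :: x) 1) =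
      qq ^ (-pairW p [j] (a :: x)) • single (j :: a :: x) 1 +
        cons a (shuffleₗ p (single [j] 1) (single x 1)) := by
  have letter_snoc (y : Word r) (b : Fin r) :
      shuffleₗ p (single [j] 1) (single (y ++ [b]) 1) = single (y ++ [b, j]) 1 +
        qq ^ (-pairW p [j] [b]) • snoc b (shuffleₗ p (single [j] 1) (single y 1)) := by
    simpa using shuffleₗ_single_snoc_single_snoc p [] y j b
  induction x using List.reverseRecOn with
  | nil => simpa [add_comm] using letter_snoc [] a
  | append_singleton x b ih =>
    have hpair : -pairW p [j] (a :: x ++ [b]) = -pairW p [j] [b] + -pairW p [j] (a :: x) := by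
      rw [pairW_append_right]
      ring
    rw [← List.cons_append, letter_snoc, ih, letter_snoc, hpair, zpow_add₀ RatFunc.X_ne_zero]
    simp only [map_add, map_smul, snoc_single, cons_single, snoc_cons, smul_add, smul_smul,
      List.cons_append]
    abel

/-- The sum over all ways to delete one letter `w_j` from a word, weighted by `q^{-(α_j, |x|)}`
when `x` is what follows the deleted letter: the adjoint of `f ↦ w_j * f`. -/
def deleteLetterWord (j : Fin r) : Word r → FA r
  | [] => 0
  | i :: w => (if i = j then qq ^ (-pairW p [j] w) • single w 1 else 0) +
      cons i (deleteLetterWord j w)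

/-- The linear extension of `deleteLetterWord`. -/
def deleteLetter (j : Fin r) : FA r →ₗ[K] FA r :=
  Finsupp.linearCombination K (deleteLetterWord p j)

@[simp]
theorem deleteLetter_single (j : Fin r) (w : Word r) :
    deleteLetter p j (single w 1) = deleteLetterWord p j w := by
  simp [deleteLetter]

theorem shuffleₗ_letter_single_apply (j : Fin r) (x y : Word r) :
    shuffleₗ p (single [j] 1) (single x 1) y = deleteLetterWord p j y x := by
  induction x generalizing y with
  | nil =>
    cases y with
    | nil => simp [deleteLetterWord]
    | cons i y =>
      rcases eq_or_ne i j with rfl | hij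
      · cases y <;> simp [deleteLetterWord, cons_apply_nil, pairW]
      · simp [deleteLetterWord, cons_apply_nil, hij]
  | cons a x ih =>
    rw [shuffleₗ_letter_single_cons]
    cases y with
    | nil => simp [deleteLetterWord, cons_apply_nil]
    | cons i y =>
      simp only [deleteLetterWord, Finsupp.add_apply, cons_apply_cons, ih, eq_comm (a := a)]
      congr 1
      by_cases hij : i = j
      · subst hij
        by_cases hy : a :: x = y
        · simp [hy]
        · simp [hy, Ne.symm hy]
      · simp [hij]

theorem wordPairing_shuffleₗ_letter_left (j : Fin r) (f g : FA r) :
    wordPairing (shuffleₗ p (single [j] 1) f) g = wordPairing f (deleteLetter p j g) := by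
  have h : wordPairing ∘ₗ shuffleₗ p (single [j] 1) = wordPairing.compl₂ (deleteLetter p j) := by
    ext x y
    simp [shuffleₗ_letter_single_apply]
  exact LinearMap.congr_fun (LinearMap.congr_fun h f) g

theorem xiWord_apply_cons (j : Fin r) (w x : Word r) :
    xiWord p w (j :: x) = xiₗ p (deleteLetterWord p j w) x := by
  induction w generalizing x with
  | nil => simp [xiWord, deleteLetterWord]
  | cons i w ih =>
    have ih_linear (g : FA r) : wordPairing (xiWord p w) (cons j g) =
        wordPairing (xiₗ p (deleteLetterWord p j w)) g := by
      have h : wordPairing (xiWord p w) ∘ₗ cons j =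
          wordPairing (xiₗ p (deleteLetterWord p j w)) := by
        ext x
        simp [ih]
      exact LinearMap.congr_fun h g
    have first_letter : wordPairing (xiWord p w)
        (if j = i then qq ^ (-pairW p [i] x) • single x 1 else 0) =
          xiₗ p (if i = j then qq ^ (-pairW p [j] w) • single w 1 else 0) x := by
      rcases eq_or_ne i j with rfl | hij
      · -- The two powers of `q` agree since `Ξ(w)` is supported on the rearrangements of `w`.
        simp only [if_true, map_smul, wordPairing_single_right, xiₗ_single, Finsupp.smul_apply]
        by_cases hx : xiWord p w x = 0
        · simp only [hx, smul_zero]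
        · rw [pairW_perm_right p (perm_of_mem_weightSpace (xiWord_mem_weightSpace p w) hx)]
      · simp [hij, hij.symm]
    calc xiWord p (i :: w) (j :: x)
        = wordPairing (xiWord p w) (deleteLetterWord p i (j :: x)) := by
          rw [← wordPairing_single_right, xiWord_cons, wordPairing_shuffleₗ_letter_left,
            deleteLetter_single]
      _ = xiₗ p (if i = j then qq ^ (-pairW p [j] w) • single w 1 else 0) x +
            wordPairing (xiₗ p (deleteLetterWord p j w)) (deleteLetterWord p i x) := by
          rw [deleteLetterWord, map_add, first_letter, ih_linear]
      _ = xiₗ p (deleteLetterWord p j (i :: w)) x := by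
          rw [deleteLetterWord, map_add, Finsupp.add_apply, xiₗ_cons,
            ← wordPairing_single_right (shuffleₗ _ _ _), wordPairing_shuffleₗ_letter_left,
            deleteLetter_single]

theorem xiWord_apply_comm (w x : Word r) : xiWord p w x = xiWord p x w := by
  induction x generalizing w with
  | nil =>
    cases w with
    | nil => rfl
    | cons i w =>
      rw [← wordPairing_single_right, xiWord_cons, wordPairing_shuffleₗ_letter_left]
      simp [deleteLetterWord, xiWord]
  | cons j x ih =>
    have ih_linear : Finsupp.lapply x ∘ₗ xiₗ p = wordPairing (xiWord p x) := by
      ext w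
      simp [ih]
    calc xiWord p w (j :: x)
        = xiₗ p (deleteLetterWord p j w) x := xiWord_apply_cons p j w x
      _ = wordPairing (xiWord p x) (deleteLetterWord p j w) := LinearMap.congr_fun ih_linear _
      _ = xiWord p (j :: x) w := by
          rw [← deleteLetter_single, ← wordPairing_shuffleₗ_letter_left, ← xiWord_cons,
            wordPairing_single_right]

theorem wordPairing_xiWord_right (f : FA r) (x : Word r) :
    wordPairing f (xiWord p x) = xiₗ p f x := by
  have h : wordPairing.flip (xiWord p x) = Finsupp.lapply x ∘ₗ xiₗ p := by
    ext w
    simp [xiWord_apply_comm p x]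
  exact LinearMap.congr_fun h f

end Symmetry

section GoodWords

/-- The rearrangements of the word `w` that are lexicographically larger than `w`. -/
def higherRearrangements (w : Word r) : Set (Word r) := {x | x.Perm w ∧ w < x}

theorem higherRearrangements_subset_Ioi (w : Word r) : higherRearrangements w ⊆ Set.Ioi w :=
  fun _ hx => hx.2

theorem finite_higherRearrangements (w : Word r) : (higherRearrangements w).Finite :=
  w.permutations.toFinset.finite_toSet.subset fun x hx => by simpa using hx.1

theorem wellFounded_mem_higherRearrangements :
    WellFounded fun x w : Word r => x ∈ higherRearrangements w := by
  refine Subrelation.wf (fun {x w} hx => ?_)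
    (measure fun w : Word r => (higherRearrangements w).ncard).wf
  refine Set.ncard_lt_ncard ⟨fun y hy => ⟨hy.1.trans hx.1, hx.2.trans hy.2⟩, fun hsub => ?_⟩
    (finite_higherRearrangements w)
  exact lt_irrefl x (hsub hx).2

variable (p : Fin r → Fin r → ℤ)

theorem IsGood.xiWord_notMem_span {g : Word r} (hg : IsGood p g) :
    xiWord p g ∉ Submodule.span K (xiWord p '' Set.Ioi g) := by
  obtain ⟨u, hu, -, hug, hmax⟩ := hg
  obtain ⟨f, rfl⟩ := (inU_iff_exists_xiₗ_eq p).mp hu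
  have higher_le_ker :
      Submodule.span K (xiWord p '' Set.Ioi g) ≤ LinearMap.ker (wordPairing f) := by
    rw [Submodule.span_le]
    rintro _ ⟨x, hgx : g < x, rfl⟩
    rw [SetLike.mem_coe, LinearMap.mem_ker, wordPairing_xiWord_right]
    by_contra hx
    rcases hmax x (Finsupp.mem_support_iff.mpr hx) with hxg | rfl
    · exact lt_asymm hgx hxg
    · exact lt_irrefl x hgx
  intro hmem
  exact hug (wordPairing_xiWord_right p f g ▸ higher_le_ker hmem)

theorem exists_mem_weightSpace_wordPairing_eq (φ : FA r →ₗ[K] K) (w : Word r) :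
    ∃ f ∈ weightSpace w, ∀ g ∈ weightSpace w, wordPairing f g = φ g := by
  let f : FA r := Finsupp.onFinset w.permutations.toFinset
    (fun u => if u.Perm w then φ (single u 1) else 0)
    fun u hu => by simpa using (ite_ne_right_iff.mp hu).1
  have hf {u : Word r} (hu : u.Perm w) : f u = φ (single u 1) := by simp [f, hu]
  refine ⟨f, (Finsupp.mem_supported K f).mpr fun u hu => ?_, fun g hg => ?_⟩
  · exact (ite_ne_right_iff.mp (Finsupp.mem_support_iff.mp hu)).1
  · exact map_eq_map_of_mem_supported (fun u (hu : u.Perm w) => by simp [hf hu]) hg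

theorem xiWord_mem_span_of_not_isGood {w : Word r} (hw : ¬ IsGood p w) :
    xiWord p w ∈ Submodule.span K (xiWord p '' higherRearrangements w) := by
  by_contra hmem
  obtain ⟨φ, hφw, hφ⟩ := Submodule.exists_le_ker_of_notMem hmem
  obtain ⟨f, hf, hfφ⟩ := exists_mem_weightSpace_wordPairing_eq φ w
  have coeff_eq {x : Word r} (hx : x.Perm w) : xiₗ p f x = φ (xiWord p x) := by
    rw [← wordPairing_xiWord_right,
      hfφ _ (weightSpace_congr hx ▸ xiWord_mem_weightSpace p x)]
  have hxi := xiₗ_mem_weightSpace p hf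
  refine hw ⟨xiₗ p f, (inU_iff_exists_xiₗ_eq p).mpr ⟨f, rfl⟩, ⟨_, homog_of_mem_weightSpace hxi⟩,
    coeff_eq (.refl w) ▸ hφw, fun x hx => ?_⟩
  have hx0 : xiₗ p f x ≠ 0 := Finsupp.mem_support_iff.mp hx
  have hxw : x.Perm w := perm_of_mem_weightSpace hxi hx0
  have hle : x ≤ w := by
    by_contra! hlt
    exact hx0 <| (coeff_eq hxw).trans <|
      hφ (Submodule.subset_span (Set.mem_image_of_mem _ ⟨hxw, hlt⟩))
  exact hle.lt_or_eq

end GoodWords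

section Brackets

/-- The concatenation product as a bilinear map. -/
def cmulₗ : FA r →ₗ[K] FA r →ₗ[K] FA r :=
  Finsupp.linearCombination K fun w =>
    Finsupp.linearCombination K fun x => single (w ++ x) 1

theorem cmul_eq_cmulₗ (f g : FA r) : cmul f g = cmulₗ f g := by
  simp only [cmul, cmulₗ, Finsupp.linearCombination_apply, Finsupp.sum, LinearMap.sum_apply,
    LinearMap.smul_apply, Finset.smul_sum, Finsupp.smul_single, smul_eq_mul, mul_one]

theorem cmulₗ_single_single (w x : Word r) :
    cmulₗ (single w 1) (single x 1) = single (w ++ x) 1 := by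
  simp [cmulₗ]

theorem cmulₗ_mem_supported {s t u : Set (Word r)} {f g : FA r}
    (hf : f ∈ Finsupp.supported K K s) (hg : g ∈ Finsupp.supported K K t)
    (h : ∀ x ∈ s, ∀ y ∈ t, x ++ y ∈ u) : cmulₗ f g ∈ Finsupp.supported K K u := by
  refine map_mem_of_mem_supported (cmulₗ.flip g) (fun x hx => ?_) hf
  refine map_mem_of_mem_supported (cmulₗ (single x 1)) (fun y hy => ?_) hg
  rw [cmulₗ_single_single]
  exact Finsupp.single_mem_supported K 1 (h x hx y hy)

/-- `f` is homogeneous, and its lexicographically smallest word is `w`, with coefficient `1`. -/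
def HasMonicMinWord (f : FA r) (w : Word r) : Prop :=
  f - single w 1 ∈ Finsupp.supported K K (higherRearrangements w)

theorem hasMonicMinWord_single (w : Word r) : HasMonicMinWord (single w 1) w := by
  simp [HasMonicMinWord]

theorem HasMonicMinWord.mem_supported {f : FA r} {w : Word r} (hf : HasMonicMinWord f w) :
    f ∈ Finsupp.supported K K {x | x.Perm w ∧ w ≤ x} := by
  have hsub : higherRearrangements w ⊆ {x | x.Perm w ∧ w ≤ x} := fun x hx => ⟨hx.1, hx.2.le⟩
  have hw : single w (1 : K) ∈ Finsupp.supported K K {x : Word r | x.Perm w ∧ w ≤ x} :=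
    Finsupp.single_mem_supported K 1 ⟨.refl w, le_rfl⟩
  exact (Submodule.sub_mem_iff_left _ hw).mp (Finsupp.supported_mono hsub hf)

theorem HasMonicMinWord.cmul {f g : FA r} {w x : Word r} (hf : HasMonicMinWord f w)
    (hg : HasMonicMinWord g x) : HasMonicMinWord (cmul f g) (w ++ x) := by
  have hsplit : cmulₗ f g - single (w ++ x) 1 =
      cmulₗ (f - single w 1) g + cmulₗ (single w 1) (g - single x 1) := by
    rw [map_sub, map_sub, LinearMap.sub_apply, cmulₗ_single_single]
    abel
  rw [HasMonicMinWord, cmul_eq_cmulₗ, hsplit]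
  refine add_mem (cmulₗ_mem_supported hf hg.mem_supported ?_)
    (cmulₗ_mem_supported (Finsupp.single_mem_supported K 1 (Set.mem_singleton w)) hg ?_)
  · rintro u ⟨huw, hlt⟩ v ⟨hvx, -⟩
    exact ⟨huw.append hvx, append_lex_lt_append_of_length_le hlt huw.length_eq.le x v⟩
  · rintro _ rfl v ⟨hvx, hlt⟩
    exact ⟨hvx.append_left _, List.append_left_lt hlt⟩

variable (p : Fin r → Fin r → ℤ)

theorem IsLyndon.hasMonicMinWord_bracket {l : Word r} (hl : IsLyndon l) :
    HasMonicMinWord (bracket p l) l := by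
  rw [bracket]
  split_ifs with hlen hcost
  · exact hasMonicMinWord_single l
  · rw [not_le] at hlen
    obtain ⟨-, -, hleft⟩ := costdLen_spec hlen
    have hright := hl.drop_costdLen hlen
    have hsplit : l.take (costdLen l) ++ l.drop (costdLen l) = l := List.take_append_drop _ l
    have bracket_left := hleft.hasMonicMinWord_bracket
    have bracket_right := hright.hasMonicMinWord_bracket
    have left_right := bracket_left.cmul bracket_right
    rw [hsplit] at left_right
    rw [HasMonicMinWord, sub_right_comm]
    refine sub_mem left_right (Submodule.smul_mem _ _ ?_)
    refine Finsupp.supported_mono ?_ (bracket_right.cmul bracket_left).mem_supported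
    rintro x ⟨hperm, hle⟩
    have hlt_swap : l < l.drop (costdLen l) ++ l.take (costdLen l) :=
      lt_trans (hl.2 _ _ hsplit.symm hleft.1 hright.1) (lex_lt_append _ hleft.1)
    exact ⟨hperm.trans (List.perm_append_comm.trans (.of_eq hsplit)), hlt_swap.trans_le hle⟩
  · exact hasMonicMinWord_single l
termination_by l.length
decreasing_by
  · rw [List.length_take]
    omega
  · rw [List.length_drop]
    omega

theorem hasMonicMinWord_cprod {ls : List (Word r)} (hls : ∀ l ∈ ls, IsLyndon l) :
    HasMonicMinWord (cprod p ls) ls.flatten := by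
  induction ls with
  | nil => exact hasMonicMinWord_single []
  | cons l ls ih =>
    rw [List.forall_mem_cons] at hls
    exact (hls.1.hasMonicMinWord_bracket p).cmul (ih hls.2)

theorem HasMonicMinWord.xi_sub_xiWord_mem_span {f : FA r} {w : Word r}
    (hf : HasMonicMinWord f w) :
    xi p f - xiWord p w ∈ Submodule.span K (xiWord p '' higherRearrangements w) := by
  rw [xi_eq_xiₗ, ← xiₗ_single, ← map_sub]
  refine map_mem_of_mem_supported (xiₗ p) (fun x hx => ?_) hf
  rw [xiₗ_single]
  exact Submodule.subset_span (Set.mem_image_of_mem _ hx)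

end Brackets

theorem lyndon_basis_of_U_general (p : Fin r → Fin r → ℤ) (Lf : Word r → List (Word r))
    (hLf : ∀ w : Word r, (∀ l ∈ Lf w, IsLyndon l) ∧ (Lf w).flatten = w) :
    LinearIndependent K (fun g : {g : Word r // IsGood p g} => xi p (cprod p (Lf g.1))) ∧
    ∀ f : FA r, InU p f ↔
      f ∈ Submodule.span K
        (Set.range fun g : {g : Word r // IsGood p g} => xi p (cprod p (Lf g.1))) := by
  have triangular (w : Word r) : xi p (cprod p (Lf w)) - xiWord p w ∈
      Submodule.span K (xiWord p '' higherRearrangements w) := by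
    refine HasMonicMinWord.xi_sub_xiWord_mem_span p ?_
    simpa only [(hLf w).2] using hasMonicMinWord_cprod p (hLf w).1
  constructor
  · exact linearIndependent_of_sub_mem_span_Ioi (v := xiWord p) (G := {g | IsGood p g})
      (v' := fun w => xi p (cprod p (Lf w)))
      (fun w => Submodule.span_mono (Set.image_mono (higherRearrangements_subset_Ioi w))
        (triangular w))
      fun _ hg => hg.xiWord_notMem_span
  · intro f
    have hspan := span_range_eq_of_sub_mem_span (G := {g | IsGood p g})
      wellFounded_mem_higherRearrangements triangular fun _ => xiWord_mem_span_of_not_isGood p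
    rw [inU_iff_mem_span_xiWord, ← hspan]
    rfl

/-- Proposition 4.4 (Rosso): the Lyndon basis `(r_g)_{g good}`, where `r_g = Ξ([g])`
and `[g] = [l₁]⋯[l_k]` for the canonical nonincreasing Lyndon factorization `g = l₁⋯l_k`,
is a `ℚ(q)`-basis of `𝒰`. -/
theorem lyndon_basis_of_U {r : ℕ} (hr : 1 ≤ r) (C : CartanData r)
    (Lf : Word r → List (Word r))
    (hLf : ∀ w : Word r, (∀ l ∈ Lf w, IsLyndon l) ∧
      List.Chain' (fun a b => wle b a) (Lf w) ∧ (Lf w).flatten = w) :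
    LinearIndependent K
      (fun g : {g : Word r // IsGood C.p g} => xi C.p (cprod C.p (Lf g.1))) ∧
    ∀ f : FA r, InU C.p f ↔
      f ∈ Submodule.span K
        (Set.range fun g : {g : Word r // IsGood C.p g} => xi C.p (cprod C.p (Lf g.1))) :=
  lyndon_basis_of_U_general C.p Lf fun w => ⟨(hLf w).1, (hLf w).2.2⟩
end
end

section
/- If l is a good Lyndon word and g is any good word with |g| = |l| (the same degree in Q), then l ≤ g lexicographically; in particular, any two good Lyndon words of the same degree are equal, and the good Lyndon word of a given degree is the lexicographically smallest good word of that degree. -/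
open scoped BigOperators

noncomputable section

variable {r : ℕ}

/-!
The algebra `𝒰` carries a symmetric bilinear form for which pairing with the product of the letters
of a word `w` reads off the coefficient of `w`, so that multiplication by a letter is adjoint to
stripping that letter from words. After specializing `q` to a transcendental real number `θ > 1`,
this form is positive definite. This is proved by induction on the degree `ν`: some simple root
`α_i` of `ν` satisfies `0 < (α_i, ν)`, and then the elements of degree `ν` are obtained from lower
degrees by multiplication by the letter `i` and by `q`-commutators with it, whose norms are
controlled by `sl₂`-type strings, finite because of the Serre relations.

Now let `l` be a good Lyndon word and let `x ∈ 𝒰` have the degree of `l` and all its words below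
`l`. Let `z` be an element of `𝒰` with largest word `l`, made orthogonal to all such elements.
Shuffles of two nonempty words which are at most `l` and whose lengths add up to that of `l` are
below `l`, hence `z` is orthogonal to the left ideal generated by the elements of `𝒰` supported
below `l`. In a minimal counterexample to `x = 0 ∨ z = 0` for such pairs, no proper suffix of a
word of `z` has the degree of a proper prefix of a word of `x`, and then the commutator `[z, x]` has
norm `2 (q ^ (-(γ, γ)) - 1) (z, z) (x, x)`, where `γ` is the degree. As `q > 1`, this is negative
unless `x = 0` or `z = 0`. Thus `x = 0`, and no good word of the degree of `l` is below `l`.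
-/

/-! ### Shuffles of words -/

section Shuffles

variable {α : Type*}

/-- `IsShuffle a b s` says that the word `s` is an interleaving of the words `a` and `b`. -/
inductive IsShuffle : List α → List α → List α → Prop
  | nil : IsShuffle [] [] []
  | left (c : α) {a b s : List α} : IsShuffle a b s → IsShuffle (c :: a) b (c :: s)
  | right (c : α) {a b s : List α} : IsShuffle a b s → IsShuffle a (c :: b) (c :: s)

namespace IsShuffle

variable {a b s a' b' s' : List α}

lemma symm (h : IsShuffle a b s) : IsShuffle b a s := by
  induction h with
  | nil => exact .nil
  | left c _ ih => exact .right c ih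
  | right c _ ih => exact .left c ih

lemma nil_left (b : List α) : IsShuffle [] b b := by
  induction b with
  | nil => exact .nil
  | cons c b ih => exact .right c ih

lemma append (h : IsShuffle a b s) (h' : IsShuffle a' b' s') :
    IsShuffle (a ++ a') (b ++ b') (s ++ s') := by
  induction h with
  | nil => exact h'
  | left c _ ih => exact .left c ih
  | right c _ ih => exact .right c ih

lemma concat (a b : List α) : IsShuffle a b (a ++ b) := by
  simpa using (nil_left a).symm.append (nil_left b)

lemma length_eq (h : IsShuffle a b s) : s.length = a.length + b.length := by
  induction h with
  | nil => rfl
  | left c _ ih => simp only [List.length_cons, ih]; omega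
  | right c _ ih => simp only [List.length_cons, ih]; omega

lemma count_eq [DecidableEq α] (h : IsShuffle a b s) (c : α) :
    s.count c = a.count c + b.count c := by
  induction h with
  | nil => rfl
  | left d _ ih => simp only [List.count_cons, ih]; omega
  | right d _ ih => simp only [List.count_cons, ih]; omega

lemma eq_of_nil_left (h : IsShuffle [] b s) : s = b := by
  induction b generalizing s with
  | nil => cases h; rfl
  | cons c b ih => cases h with | right _ h => rw [ih h]

lemma exists_split_left {p v x w : List α} (h : IsShuffle (p ++ v) x w) :
    ∃ x₁ x₂ w₁ w₂, x = x₁ ++ x₂ ∧ w = w₁ ++ w₂ ∧ IsShuffle p x₁ w₁ ∧ IsShuffle v x₂ w₂ := by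
  generalize hpv : p ++ v = a at h
  induction h generalizing p with
  | nil =>
    obtain ⟨rfl, rfl⟩ := List.append_eq_nil_iff.1 hpv
    exact ⟨[], [], [], [], rfl, rfl, .nil, .nil⟩
  | @left c a b s h ih =>
    cases p with
    | nil => exact ⟨[], b, [], c :: s, rfl, rfl, .nil, by simpa [← hpv] using h.left c⟩
    | cons d p =>
      obtain ⟨rfl, hpv'⟩ := List.cons.inj hpv
      obtain ⟨x₁, x₂, w₁, w₂, rfl, rfl, h₁, h₂⟩ := ih hpv'
      exact ⟨x₁, x₂, d :: w₁, w₂, rfl, rfl, h₁.left d, h₂⟩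
  | @right c a b s h ih =>
    obtain ⟨x₁, x₂, w₁, w₂, rfl, rfl, h₁, h₂⟩ := ih hpv
    exact ⟨c :: x₁, x₂, c :: w₁, w₂, rfl, rfl, h₁.right c, h₂⟩

lemma exists_split_output {s₁ s₂ : List α} (h : IsShuffle a b (s₁ ++ s₂)) :
    ∃ a₁ a₂ b₁ b₂, a = a₁ ++ a₂ ∧ b = b₁ ++ b₂ ∧ IsShuffle a₁ b₁ s₁ ∧ IsShuffle a₂ b₂ s₂ := by
  induction s₁ generalizing a b with
  | nil => exact ⟨[], a, [], b, rfl, rfl, .nil, h⟩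
  | cons c s₁ ih =>
    cases h with
    | left _ h =>
      obtain ⟨a₁, a₂, b₁, b₂, rfl, rfl, h₁, h₂⟩ := ih h
      exact ⟨c :: a₁, a₂, b₁, b₂, rfl, rfl, h₁.left c, h₂⟩
    | right _ h =>
      obtain ⟨a₁, a₂, b₁, b₂, rfl, rfl, h₁, h₂⟩ := ih h
      exact ⟨a₁, a₂, c :: b₁, b₂, rfl, rfl, h₁.right c, h₂⟩

end IsShuffle

end Shuffles

/-! ### Shuffles and the lexicographic order -/

section LexOrder

variable {α : Type*} [LinearOrder α]

/-- `LtAtLetter x y` says that at the first place where `x` and `y` differ both have a letter, that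
of `x` being the smaller one. Unlike `x < y`, it is preserved by appending words on the right. -/
inductive LtAtLetter : List α → List α → Prop
  | head {a b : α} (x y : List α) : a < b → LtAtLetter (a :: x) (b :: y)
  | tail (a : α) {x y : List α} : LtAtLetter x y → LtAtLetter (a :: x) (a :: y)

lemma LtAtLetter.append_lt_append {x y : List α} (h : LtAtLetter x y) (u v : List α) :
    x ++ u < y ++ v := by
  induction h with
  | head x y h => exact List.Lex.rel h
  | tail a _ ih => exact List.Lex.cons ih

lemma LtAtLetter.lt {x y : List α} (h : LtAtLetter x y) : x < y := by
  simpa using h.append_lt_append [] []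

-- Core states the order lemmas below for `List.instLE`, which is not Mathlib's order on lists.
lemma cons_le_cons_iff_lex {a b : α} {x y : List α} :
    a :: x ≤ b :: y ↔ a < b ∨ a = b ∧ x ≤ y := by
  rw [← not_lt, ← not_lt]
  exact List.cons_le_cons_iff

lemma append_le_append_iff_lex (p : List α) {x y : List α} : p ++ x ≤ p ++ y ↔ x ≤ y := by
  induction p with
  | nil => rfl
  | cons a p ih => simpa [cons_le_cons_iff_lex] using ih

lemma ltAtLetter_or_prefix_of_le {x y : List α} (h : x ≤ y) : LtAtLetter x y ∨ x <+: y := by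
  induction x generalizing y with
  | nil => exact .inr y.nil_prefix
  | cons a x ih =>
    cases y with
    | nil => exact absurd h (not_le.2 List.Lex.nil)
    | cons b y =>
      rcases cons_le_cons_iff_lex.1 h with hab | ⟨rfl, hxy⟩
      · exact .inl (.head _ _ hab)
      · exact (ih hxy).imp (.tail a) (List.prefix_cons_inj a).2

lemma LtAtLetter.or_prefix_of_append {x₁ x₂ v : List α} (h : LtAtLetter (x₁ ++ x₂) v) :
    LtAtLetter x₁ v ∨ x₁ <+: v := by
  refine ltAtLetter_or_prefix_of_le (le_trans ?_ h.lt.le)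
  exact not_lt.1 List.le_append_left

lemma le_take_length_of_le {w l : List α} (h : w ≤ l) (hlen : w.length ≤ l.length) :
    w ≤ l.take w.length := by
  rcases ltAtLetter_or_prefix_of_le h with hlt | hprefix
  · clear h
    induction hlt with
    | head x y hab => exact cons_le_cons_iff_lex.2 (.inl hab)
    | tail a _ ih => exact cons_le_cons_iff_lex.2 (.inr ⟨rfl, ih (by simpa using hlen)⟩)
  · exact (List.prefix_iff_eq_take.1 hprefix).le

namespace IsShuffle

variable {a b s b' : List α}

lemma exists_of_ltAtLetter (h : IsShuffle a b s) (hb : LtAtLetter b b') :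
    ∃ s', IsShuffle a b' s' ∧ LtAtLetter s s' := by
  induction h generalizing b' with
  | nil => cases hb
  | left c _ ih =>
    obtain ⟨s', hs', hlt⟩ := ih hb
    exact ⟨_, .left c hs', .tail c hlt⟩
  | right c _ ih =>
    cases hb with
    | head _ y hlt => exact ⟨_, .right _ (concat _ y), .head _ _ hlt⟩
    | tail _ hb =>
      obtain ⟨s', hs', hlt⟩ := ih hb
      exact ⟨_, .right c hs', .tail c hlt⟩

lemma exists_le_of_le (h : IsShuffle a b s) (hb : b ≤ b') (hlen : b.length = b'.length) :
    ∃ s', IsShuffle a b' s' ∧ s ≤ s' := by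
  rcases ltAtLetter_or_prefix_of_le hb with hlt | hprefix
  · obtain ⟨s', hs', hlt'⟩ := h.exists_of_ltAtLetter hlt
    exact ⟨s', hs', hlt'.lt.le⟩
  · rw [← hprefix.eq_of_length hlen]
    exact ⟨s, h, le_rfl⟩

lemma exists_exchange {p v x w : List α} (hxv : x ≤ v) (h : IsShuffle (p ++ v) x w) :
    ∃ w', IsShuffle v (p ++ x) w' ∧ w ≤ w' := by
  induction hn : x.length using Nat.strong_induction_on generalizing p v x w with
  | _ n ih =>
  subst hn
  obtain ⟨x₁, x₂, w₁, w₂, rfl, rfl, h₁, h₂⟩ := h.exists_split_left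
  rcases eq_or_ne x₁ [] with rfl | hx₁
  · obtain rfl := h₁.symm.eq_of_nil_left
    exact ⟨w₁ ++ w₂, (nil_left w₁).append h₂, le_rfl⟩
  have hx₁v : LtAtLetter x₁ v ∨ x₁ <+: v :=
    (ltAtLetter_or_prefix_of_le hxv).elim LtAtLetter.or_prefix_of_append
      fun hprefix => .inr ((List.prefix_append _ _).trans hprefix)
  rcases hx₁v with hlt | ⟨v', rfl⟩
  · obtain ⟨w', hw', hlt'⟩ := h₁.exists_of_ltAtLetter hlt
    refine ⟨w' ++ (x₁ ++ x₂), ?_, (hlt'.append_lt_append _ _).le⟩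
    simpa using hw'.symm.append (nil_left (x₁ ++ x₂))
  · have hlen : x₂.length < (x₁ ++ x₂).length := by
      simpa using List.length_pos_of_ne_nil hx₁
    obtain ⟨w', hw', hle⟩ := ih _ hlen ((append_le_append_iff_lex _).1 hxv) h₂ rfl
    exact ⟨w₁ ++ w', h₁.symm.append hw', (append_le_append_iff_lex _).2 hle⟩

lemma le_append_of_suffix {l t w : List α} (hl : ∀ v, v <:+ l → v ≠ [] → l ≤ v) (ht : t <:+ l)
    (h : IsShuffle t l w) : w ≤ t ++ l := by
  induction t generalizing w with
  | nil => exact h.eq_of_nil_left.le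
  | cons c t ih =>
    have ht' : t <:+ l := (List.suffix_cons c t).trans ht
    have hle : l ≤ c :: t := hl _ ht (List.cons_ne_nil c t)
    cases h with
    | left _ h => exact cons_le_cons_iff_lex.2 (.inr ⟨rfl, ih ht' h⟩)
    | @right c' _ l' s h =>
      rcases cons_le_cons_iff_lex.1 hle with hlt | ⟨rfl, hle'⟩
      · exact cons_le_cons_iff_lex.2 (.inl hlt)
      · obtain ⟨w', hw', hsw'⟩ := exists_exchange (p := [c']) hle' h
        exact cons_le_cons_iff_lex.2 (.inr ⟨rfl, hsw'.trans (ih ht' hw')⟩)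

-- Any shuffle of the prefixes of `l` of the two lengths extends to a shuffle of `l` with itself,
-- which is at most `l ++ l`.
lemma lt_of_take_of_take {l s : List α} {m n : ℕ}
    (hl : ∀ u v, l = u ++ v → u ≠ [] → v ≠ [] → l < v) (hm : 0 < m) (hn : 0 < n)
    (hmn : m + n = l.length) (h : IsShuffle (l.take m) (l.take n) s) : s < l := by
  have hsuffix : ∀ v, v <:+ l → v ≠ [] → l ≤ v := by
    rintro v ⟨u, huv⟩ hv
    rcases eq_or_ne u [] with rfl | hu
    · exact huv.ge
    · exact (hl u v huv.symm hu hv).le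
  have hle : s ++ (l.drop m ++ l.drop n) ≤ l ++ l := by
    refine le_append_of_suffix hsuffix l.suffix_refl ?_
    simpa only [List.take_append_drop] using h.append (concat (l.drop m) (l.drop n))
  have hlen : s.length = l.length := by rw [h.length_eq]; simp only [List.length_take]; omega
  rcases lt_trichotomy s l with hlt | rfl | hgt
  · exact hlt
  · have hdrop : s < s.drop m := by
      refine hl _ _ (List.take_append_drop m s).symm ?_ ?_ <;>
        simp only [ne_eq, ← List.length_eq_zero_iff, List.length_take, List.length_drop] <;> omega
    have hprefix : s.drop m ≤ s.drop m ++ s.drop n := not_lt.1 List.le_append_left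
    exact absurd (hprefix.trans ((append_le_append_iff_lex _).1 hle)) (not_le.2 hdrop)
  · rcases ltAtLetter_or_prefix_of_le hgt.le with hlt | hprefix
    · exact absurd (hlt.append_lt_append _ _) (not_lt.2 hle)
    · exact absurd (hprefix.eq_of_length hlen.symm) hgt.ne

lemma lt_of_le_of_le {l w x s : List α} (hl : ∀ u v, l = u ++ v → u ≠ [] → v ≠ [] → l < v)
    (hw : w ≠ []) (hx : x ≠ []) (hlen : w.length + x.length = l.length)
    (hwl : w ≤ l) (hxl : x ≤ l) (hs : IsShuffle w x s) : s < l := by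
  obtain ⟨s₁, hs₁, hle₁⟩ :=
    hs.exists_le_of_le (le_take_length_of_le hxl (by omega)) (by simp; omega)
  obtain ⟨s₂, hs₂, hle₂⟩ :=
    hs₁.symm.exists_le_of_le (le_take_length_of_le hwl (by omega)) (by simp; omega)
  exact (hle₁.trans hle₂).trans_lt <| hs₂.lt_of_take_of_take hl (List.length_pos_of_ne_nil hx)
    (List.length_pos_of_ne_nil hw) (by omega)

end IsShuffle

end LexOrder

/-! ### The `q`-shuffle algebra -/

lemma deg_nil : deg ([] : Word r) = 0 := by
  funext _; simp [deg]

lemma deg_cons (c : Fin r) (w : Word r) : deg (c :: w) = deg w + Pi.single c 1 := by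
  funext i
  rcases eq_or_ne c i with rfl | h
  · simp [deg]
  · simp [deg, h, h.symm]

lemma deg_append (a b : Word r) : deg (a ++ b) = deg a + deg b := by
  funext i; simp [deg]

lemma deg_singleton (c : Fin r) : deg [c] = Pi.single c 1 := by
  rw [deg_cons, deg_nil, zero_add]

lemma sum_deg (w : Word r) : ∑ j, deg w j = w.length := by
  induction w with
  | nil => simp [deg_nil]
  | cons c w ih => simp [deg_cons, Finset.sum_add_distrib, ih]

lemma deg_eq_zero_iff {w : Word r} : deg w = 0 ↔ w = [] := by
  refine ⟨fun h => List.length_eq_zero_iff.1 ?_, fun h => h ▸ deg_nil⟩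
  rw [← sum_deg, h]
  exact Finset.sum_const_zero

lemma IsShuffle.deg_eq {a b s : Word r} (h : IsShuffle a b s) : deg s = deg a + deg b := by
  funext i; exact h.count_eq i

/-- The pairing `(α_c, ν)` of a simple root with an element `ν` of `Q⁺`, where
`p i j = (α_i, α_j)`. -/
def rootPairing (p : Fin r → Fin r → ℤ) (c : Fin r) : (Fin r → ℕ) →+ ℤ where
  toFun ν := ∑ j, p c j * ν j
  map_zero' := by simp
  map_add' μ ν := by simp [mul_add, Finset.sum_add_distrib]

lemma rootPairing_single (p : Fin r → Fin r → ℤ) (c e : Fin r) (t : ℕ) :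
    rootPairing p c (Pi.single e t) = p c e * t := by
  simp [rootPairing, Pi.single_apply]

/-- The parameters of a `q`-shuffle algebra on `r` letters: a symmetric integral form on the simple
roots and an invertible scalar `q`. -/
structure ShuffleDatum (r : ℕ) (𝕜 : Type*) [Field 𝕜] where
  p : Fin r → Fin r → ℤ
  p_symm : ∀ i j, p i j = p j i
  q : 𝕜
  q_ne_zero : q ≠ 0

/-- The completed `q`-shuffle algebra: all functions on words, with the `q`-shuffle product. In the
product, a first letter `c` coming from the left factor moves past the right factor and picks up
`q ^ (-(α_c, ·))`. -/
def QShuffle {𝕜 : Type*} [Field 𝕜] (_D : ShuffleDatum r 𝕜) : Type _ := Word r → 𝕜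

namespace QShuffle

variable {𝕜 : Type*} [Field 𝕜] {D : ShuffleDatum r 𝕜}

instance : AddCommGroup (QShuffle D) := inferInstanceAs (AddCommGroup (Word r → 𝕜))

instance : Module 𝕜 (QShuffle D) := inferInstanceAs (Module 𝕜 (Word r → 𝕜))

@[ext] lemma ext {f g : QShuffle D} (h : ∀ s, f s = g s) : f = g := funext h

@[simp] lemma zero_apply (s : Word r) : (0 : QShuffle D) s = 0 := rfl

@[simp] lemma add_apply (f g : QShuffle D) (s : Word r) : (f + g) s = f s + g s := rfl

@[simp] lemma sub_apply (f g : QShuffle D) (s : Word r) : (f - g) s = f s - g s := rfl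

@[simp] lemma smul_apply (a : 𝕜) (f : QShuffle D) (s : Word r) : (a • f) s = a * f s := rfl

/-- The map `f ↦ f (w ++ ·)`, which strips the prefix `w` from the words supporting `f`. For a
letter `w` it is a `q`-derivation. -/
def leftDeriv (w : Word r) : QShuffle D →ₗ[𝕜] QShuffle D where
  toFun f := fun s => f (w ++ s)
  map_add' _ _ := rfl
  map_smul' _ _ := rfl

/-- The map `f ↦ f (· ++ w)`, which strips the suffix `w` from the words supporting `f`. For a
letter `w` it is a `q`-derivation. -/
def rightDeriv (w : Word r) : QShuffle D →ₗ[𝕜] QShuffle D where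
  toFun f := fun s => f (s ++ w)
  map_add' _ _ := rfl
  map_smul' _ _ := rfl

/-- The operator which multiplies the coefficient of a word of degree `ν` by `q ^ (-(α_c, ν))`. -/
def twist (c : Fin r) : QShuffle D →ₗ[𝕜] QShuffle D where
  toFun f := fun s => D.q ^ (-rootPairing D.p c (deg s)) * f s
  map_add' f g := by ext s; exact mul_add _ _ _
  map_smul' a f := by ext s; exact mul_left_comm _ _ _

/-- The word `w` as an element of the `q`-shuffle algebra. -/
def single (w : Word r) : QShuffle D := fun s => if s = w then 1 else 0

lemma single_apply (w s : Word r) : (single w : QShuffle D) s = if s = w then 1 else 0 := rfl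

lemma sum_apply {ι : Type*} (s : Finset ι) (f : ι → QShuffle D) (w : Word r) :
    (∑ i ∈ s, f i) w = ∑ i ∈ s, f i w :=
  Finset.sum_apply (M := fun _ : Word r => 𝕜) w s f

lemma leftDeriv_apply (w s : Word r) (f : QShuffle D) : leftDeriv w f s = f (w ++ s) := rfl

lemma rightDeriv_apply (w s : Word r) (f : QShuffle D) : rightDeriv w f s = f (s ++ w) := rfl

lemma twist_apply (c : Fin r) (f : QShuffle D) (s : Word r) :
    twist c f s = D.q ^ (-rootPairing D.p c (deg s)) * f s := rfl

lemma leftDeriv_rightDeriv (v w : Word r) (f : QShuffle D) :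
    leftDeriv v (rightDeriv w f) = rightDeriv w (leftDeriv v f) := by
  ext s; simp [leftDeriv_apply, rightDeriv_apply]

lemma leftDeriv_twist (c d : Fin r) (f : QShuffle D) :
    leftDeriv [d] (twist c f) = D.q ^ (-D.p c d) • twist c (leftDeriv [d] f) := by
  ext s
  simp only [leftDeriv_apply, twist_apply, deg_append, deg_singleton, map_add, rootPairing_single,
    neg_add, zpow_add₀ D.q_ne_zero, smul_apply, Nat.cast_one, mul_one, mul_assoc]

lemma rightDeriv_twist (c d : Fin r) (f : QShuffle D) :
    rightDeriv [d] (twist c f) = D.q ^ (-D.p c d) • twist c (rightDeriv [d] f) := by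
  ext s
  simp only [rightDeriv_apply, twist_apply, deg_append, deg_singleton, map_add, rootPairing_single,
    neg_add, zpow_add₀ D.q_ne_zero, smul_apply, Nat.cast_one, mul_one]
  ring

lemma twist_comm (c d : Fin r) (f : QShuffle D) : twist c (twist d f) = twist d (twist c f) := by
  ext s; exact mul_left_comm _ _ _

lemma twist_single (c : Fin r) (w : Word r) :
    twist c (single w : QShuffle D) = D.q ^ (-rootPairing D.p c (deg w)) • single w := by
  ext s
  by_cases h : s = w <;> simp [twist_apply, single, h]

lemma leftDeriv_single_nil (c : Fin r) : leftDeriv [c] (single [] : QShuffle D) = 0 := by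
  ext s; simp [leftDeriv_apply, single]

lemma rightDeriv_single_nil (c : Fin r) : rightDeriv [c] (single [] : QShuffle D) = 0 := by
  ext s; simp [rightDeriv_apply, single]

/-- The coefficient at a word of the `q`-shuffle product, by recursion on the word. -/
def mulCoeff : Word r → QShuffle D → QShuffle D → 𝕜
  | [], f, g => f [] * g []
  | c :: s, f, g => mulCoeff s f (leftDeriv [c] g) + mulCoeff s (leftDeriv [c] f) (twist c g)

instance : Mul (QShuffle D) := ⟨fun f g s => mulCoeff s f g⟩

instance : One (QShuffle D) := ⟨single []⟩

lemma one_def : (1 : QShuffle D) = single [] := rfl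

lemma mul_nil (f g : QShuffle D) : (f * g) [] = f [] * g [] := rfl

lemma mul_cons (f g : QShuffle D) (c : Fin r) (s : Word r) :
    (f * g) (c :: s) = (f * leftDeriv [c] g) s + (leftDeriv [c] f * twist c g) s := rfl

lemma leftDeriv_mul (c : Fin r) (f g : QShuffle D) :
    leftDeriv [c] (f * g) = f * leftDeriv [c] g + leftDeriv [c] f * twist c g := rfl

private lemma mul_add' (f g h : QShuffle D) : f * (g + h) = f * g + f * h := by
  ext s
  induction s generalizing f g h with
  | nil => exact mul_add _ _ _
  | cons c s ih => simp only [mul_cons, map_add, ih, add_apply]; ring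

private lemma add_mul' (f g h : QShuffle D) : (f + g) * h = f * h + g * h := by
  ext s
  induction s generalizing f g h with
  | nil => exact add_mul _ _ _
  | cons c s ih => simp only [mul_cons, map_add, ih, add_apply]; ring

private lemma smul_mul' (a : 𝕜) (f g : QShuffle D) : a • f * g = a • (f * g) := by
  ext s
  induction s generalizing f g with
  | nil => exact mul_assoc _ _ _
  | cons c s ih => simp only [mul_cons, map_smul, ih, smul_apply, mul_add]

private lemma mul_smul' (a : 𝕜) (f g : QShuffle D) : f * a • g = a • (f * g) := by
  ext s
  induction s generalizing f g with
  | nil => exact mul_left_comm _ _ _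
  | cons c s ih => simp only [mul_cons, map_smul, ih, smul_apply, mul_add]

lemma twist_mul (c : Fin r) (f g : QShuffle D) : twist c (f * g) = twist c f * twist c g := by
  ext s
  induction s generalizing f g with
  | nil => simp [mul_nil, twist_apply, deg_nil]
  | cons d s ih =>
    rw [mul_cons, leftDeriv_twist, leftDeriv_twist, mul_smul', smul_mul', twist_comm d c,
      smul_apply, smul_apply, ← ih, ← ih, twist_apply, twist_apply, twist_apply, mul_cons, deg_cons,
      map_add, rootPairing_single, neg_add, zpow_add₀ D.q_ne_zero, Nat.cast_one, mul_one]
    ring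

private lemma mul_assoc' (f g h : QShuffle D) : f * g * h = f * (g * h) := by
  ext s
  induction s generalizing f g h with
  | nil => exact mul_assoc _ _ _
  | cons d s ih =>
    simp only [mul_cons, leftDeriv_mul, add_mul', mul_add', twist_mul, add_apply, ih]; ring

private lemma zero_mul' (f : QShuffle D) : 0 * f = 0 := by
  simpa using smul_mul' 0 0 f

private lemma mul_zero' (f : QShuffle D) : f * 0 = 0 := by
  simpa using mul_smul' 0 f 0

private lemma one_mul' (f : QShuffle D) : 1 * f = f := by
  ext s
  induction s generalizing f with
  | nil => simp [mul_nil, one_def, single]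
  | cons d s ih =>
    rw [mul_cons, one_def, leftDeriv_single_nil, zero_mul', ← one_def, ih, zero_apply, add_zero]
    rfl

private lemma mul_one' (f : QShuffle D) : f * 1 = f := by
  ext s
  induction s generalizing f with
  | nil => simp [mul_nil, one_def, single]
  | cons d s ih =>
    rw [mul_cons, one_def, leftDeriv_single_nil, mul_zero', twist_single, deg_nil, map_zero,
      neg_zero, zpow_zero, one_smul, ← one_def, ih, zero_apply, zero_add]
    rfl

instance : Ring (QShuffle D) :=
  { (inferInstance : AddCommGroup (QShuffle D)) with
    left_distrib := mul_add'
    right_distrib := add_mul'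
    zero_mul := zero_mul'
    mul_zero := mul_zero'
    mul_assoc := mul_assoc'
    one_mul := one_mul'
    mul_one := mul_one' }

instance : Algebra 𝕜 (QShuffle D) := Algebra.ofModule smul_mul' fun a f g => mul_smul' a f g

lemma rightDeriv_mul (c : Fin r) (f g : QShuffle D) :
    rightDeriv [c] (f * g) = rightDeriv [c] f * g + twist c f * rightDeriv [c] g := by
  ext s
  induction s generalizing f g with
  | nil => simp [rightDeriv_apply, leftDeriv_apply, twist_apply, mul_cons, mul_nil, deg_nil]; ring
  | cons d s ih =>
    have hright := ih f (leftDeriv [d] g)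
    have hleft := ih (leftDeriv [d] f) (twist d g)
    simp only [rightDeriv_apply, add_apply] at hright hleft
    simp only [rightDeriv_apply, List.cons_append, mul_cons, add_apply, hright, hleft,
      leftDeriv_twist, rightDeriv_twist, leftDeriv_rightDeriv, mul_smul_comm, smul_mul_assoc,
      smul_apply, D.p_symm d c]
    ring

lemma leftDeriv_one (c : Fin r) : leftDeriv [c] (1 : QShuffle D) = 0 := leftDeriv_single_nil c

lemma rightDeriv_one (c : Fin r) : rightDeriv [c] (1 : QShuffle D) = 0 := rightDeriv_single_nil c

lemma exists_isShuffle_of_mul_ne_zero {f g : QShuffle D} {s : Word r} (h : (f * g) s ≠ 0) :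
    ∃ a b, IsShuffle a b s ∧ f a ≠ 0 ∧ g b ≠ 0 := by
  induction s generalizing f g with
  | nil => exact ⟨[], [], .nil, left_ne_zero_of_mul h, right_ne_zero_of_mul h⟩
  | cons c s ih =>
    rw [mul_cons] at h
    by_cases hright : (f * leftDeriv [c] g) s = 0
    · rw [hright, zero_add] at h
      obtain ⟨a, b, hab, ha, hb⟩ := ih h
      exact ⟨c :: a, b, hab.left c, ha, right_ne_zero_of_mul hb⟩
    · obtain ⟨a, b, hab, ha, hb⟩ := ih hright
      exact ⟨a, c :: b, hab.right c, ha, hb⟩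

end QShuffle

/-! ### The subalgebra generated by the letters and its bilinear form -/

namespace QShuffle

variable {𝕜 : Type*} [Field 𝕜] {D : ShuffleDatum r 𝕜}

/-- The one-letter word `i`, the generator of the `q`-shuffle algebra attached to `α_i`. -/
def letter (i : Fin r) : QShuffle D := single [i]

/-- The product of the letters of a word. -/
def letterProd (w : Word r) : QShuffle D := (w.map letter).prod

variable (D) in
/-- The algebra `𝒰` generated by the letters. -/
def letterAlgebra : Subalgebra 𝕜 (QShuffle D) := Algebra.adjoin 𝕜 (Set.range letter)

lemma twist_letter (c e : Fin r) :
    twist c (letter e : QShuffle D) = D.q ^ (-D.p c e) • letter e := by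
  rw [letter, twist_single, deg_singleton, rootPairing_single, Nat.cast_one, mul_one]

lemma leftDeriv_letter_self (i : Fin r) : leftDeriv [i] (letter i : QShuffle D) = 1 := by
  ext s; simp [leftDeriv_apply, letter, single, one_def]

lemma leftDeriv_letter_of_ne {c i : Fin r} (h : c ≠ i) :
    leftDeriv [c] (letter i : QShuffle D) = 0 := by
  ext s; simp [leftDeriv_apply, letter, single, h]

lemma rightDeriv_letter_self (i : Fin r) : rightDeriv [i] (letter i : QShuffle D) = 1 := by
  ext s; simp [rightDeriv_apply, letter, single, one_def]

lemma rightDeriv_letter_of_ne {c i : Fin r} (h : c ≠ i) :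
    rightDeriv [c] (letter i : QShuffle D) = 0 := by
  ext s
  simp only [rightDeriv_apply, letter, single, zero_apply, ite_eq_right_iff]
  intro hs
  exact absurd (by simpa using congrArg List.getLast? hs) h

@[simp] lemma letterProd_nil : (letterProd [] : QShuffle D) = 1 := rfl

lemma letterProd_cons (c : Fin r) (w : Word r) :
    (letterProd (c :: w) : QShuffle D) = letter c * letterProd w := List.prod_cons

@[simp] lemma letterProd_singleton (c : Fin r) : (letterProd [c] : QShuffle D) = letter c :=
  List.prod_singleton

lemma letterProd_append (v w : Word r) :
    (letterProd (v ++ w) : QShuffle D) = letterProd v * letterProd w := by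
  rw [letterProd, List.map_append, List.prod_append]; rfl

lemma twist_letterProd (c : Fin r) (w : Word r) :
    twist c (letterProd w : QShuffle D) =
      D.q ^ (-rootPairing D.p c (deg w)) • letterProd w := by
  induction w with
  | nil => rw [letterProd_nil, one_def, twist_single]
  | cons e w ih =>
    rw [letterProd_cons, twist_mul, ih, twist_letter, smul_mul_smul_comm, deg_cons, map_add,
      rootPairing_single, Nat.cast_one, mul_one, neg_add_rev, zpow_add₀ D.q_ne_zero]

lemma letter_mem (i : Fin r) : letter i ∈ letterAlgebra D :=
  Algebra.subset_adjoin (Set.mem_range_self i)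

lemma letterProd_mem (w : Word r) : letterProd w ∈ letterAlgebra D :=
  Subalgebra.list_prod_mem _ (by simp [letter_mem])

lemma toSubmodule_letterAlgebra :
    Subalgebra.toSubmodule (letterAlgebra D) = Submodule.span 𝕜 (Set.range letterProd) := by
  rw [letterAlgebra, Algebra.adjoin_eq_span, ← FreeMonoid.mrange_lift]
  congr 1
  ext u
  simp only [SetLike.mem_coe, MonoidHom.mem_mrange, FreeMonoid.lift_apply, Set.mem_range]
  rfl

/-- The pairing of a combination of words with a function on words. -/
def wordPairing : (Word r →₀ 𝕜) →ₗ[𝕜] QShuffle D →ₗ[𝕜] 𝕜 :=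
  LinearMap.flip (Finsupp.llift 𝕜 𝕜 𝕜 (Word r)).toLinearMap

lemma wordPairing_apply (f : Word r →₀ 𝕜) (u : QShuffle D) :
    wordPairing f u = f.sum fun w a => a * u w := by
  simp only [wordPairing]
  exact Finsupp.sum_congr fun _ _ => rfl

lemma wordPairing_single (w : Word r) (a : 𝕜) (u : QShuffle D) :
    wordPairing (Finsupp.single w a) u = a * u w := by
  simp [wordPairing_apply]

variable (D) in
/-- The linear map from the free algebra onto `𝒰` which sends a word to the product of its
letters. -/
def prodMap : (Word r →₀ 𝕜) →ₗ[𝕜] QShuffle D := Finsupp.linearCombination 𝕜 letterProd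

lemma range_prodMap :
    LinearMap.range (prodMap D) = Subalgebra.toSubmodule (letterAlgebra D) := by
  rw [toSubmodule_letterAlgebra, prodMap, Finsupp.range_linearCombination]

lemma prodMap_single (w : Word r) (a : 𝕜) : prodMap D (Finsupp.single w a) = a • letterProd w :=
  Finsupp.linearCombination_single _ _ _

variable (D) in
/-- The `q`-derivation of the free algebra attached to the letter `c`. It is adjoint to left
multiplication by `c`, and corresponds under `prodMap` to removing the first letter `c`. -/
def wordDeriv (c : Fin r) : Word r → (Word r →₀ 𝕜)
  | [] => 0
  | e :: w => Finsupp.mapDomain (List.cons e) (wordDeriv c w) +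
      if e = c then Finsupp.single w (D.q ^ (-rootPairing D.p c (deg w))) else 0

lemma wordPairing_mapDomain_cons (e : Fin r) (f : Word r →₀ 𝕜) (u : QShuffle D) :
    wordPairing (f.mapDomain (List.cons e)) u = wordPairing f (leftDeriv [e] u) := by
  rw [wordPairing_apply, wordPairing_apply,
    Finsupp.sum_mapDomain_index (by simp) (by simp [add_mul])]
  rfl

lemma prodMap_mapDomain_cons (e : Fin r) (f : Word r →₀ 𝕜) :
    prodMap D (f.mapDomain (List.cons e)) = letter e * prodMap D f := by
  induction f using Finsupp.induction_linear with
  | zero => simp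
  | add f g hf hg => rw [Finsupp.mapDomain_add, map_add, map_add, hf, hg, mul_add]
  | single w a =>
    rw [Finsupp.mapDomain_single, prodMap_single, prodMap_single, mul_smul_comm, letterProd_cons]

lemma letter_mul_apply (c : Fin r) (u : QShuffle D) (w : Word r) :
    (letter c * u : QShuffle D) w = wordPairing (wordDeriv D c w) u := by
  induction w generalizing u with
  | nil => simp [mul_nil, wordDeriv, letter, single]
  | cons e w ih =>
    rw [mul_cons, ih, wordDeriv, map_add, LinearMap.add_apply, wordPairing_mapDomain_cons]
    rcases eq_or_ne e c with rfl | hec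
    · simp [leftDeriv_letter_self, wordPairing_single, twist_apply]
    · simp [leftDeriv_letter_of_ne hec, hec]

lemma leftDeriv_letterProd (c : Fin r) (w : Word r) :
    leftDeriv [c] (letterProd w) = prodMap D (wordDeriv D c w) := by
  induction w with
  | nil => simp [wordDeriv, leftDeriv_one]
  | cons e w ih =>
    rw [letterProd_cons, leftDeriv_mul, ih, wordDeriv, map_add, prodMap_mapDomain_cons]
    rcases eq_or_ne e c with rfl | hec
    · simp [leftDeriv_letter_self, prodMap_single, twist_letterProd]
    · simp [leftDeriv_letter_of_ne hec.symm, hec]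

lemma prodMap_apply (f : Word r →₀ 𝕜) (w : Word r) :
    prodMap D f w = f.sum fun v a => a * (letterProd v : QShuffle D) w := by
  induction f using Finsupp.induction_linear with
  | zero => simp
  | add f g hf hg =>
    rw [map_add, add_apply, hf, hg, Finsupp.sum_add_index' (by simp) (by simp [add_mul])]
  | single v a => simp [prodMap_single]

lemma letterProd_apply_comm (v w : Word r) :
    (letterProd v : QShuffle D) w = (letterProd w : QShuffle D) v := by
  induction v generalizing w with
  | nil =>
    cases w with
    | nil => rfl
    | cons c w => simp [letterProd_cons, mul_nil, letter, single, one_def]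
  | cons c v ih =>
    have hderiv : (letterProd w : QShuffle D) (c :: v) = leftDeriv [c] (letterProd w) v := rfl
    rw [hderiv, leftDeriv_letterProd, prodMap_apply, letterProd_cons, letter_mul_apply,
      wordPairing_apply]
    simp only [ih]

lemma wordPairing_letterProd (f : Word r →₀ 𝕜) (w : Word r) :
    wordPairing f (letterProd w : QShuffle D) = prodMap D f w := by
  simp only [wordPairing_apply, prodMap_apply, letterProd_apply_comm w]

lemma wordPairing_prodMap_comm (f g : Word r →₀ 𝕜) :
    wordPairing f (prodMap D g) = wordPairing g (prodMap D f) := by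
  induction g using Finsupp.induction_linear with
  | zero => simp
  | add g g' hg hg' => simp [hg, hg']
  | single w a =>
    rw [wordPairing_single, prodMap_single, map_smul, wordPairing_letterProd, smul_eq_mul]

lemma prodMap_mem (f : Word r →₀ 𝕜) : prodMap D f ∈ letterAlgebra D := by
  rw [← Subalgebra.mem_toSubmodule, ← range_prodMap]
  exact LinearMap.mem_range_self _ _

lemma exists_prodMap_eq {u : QShuffle D} (hu : u ∈ letterAlgebra D) : ∃ f, prodMap D f = u := by
  rwa [← Subalgebra.mem_toSubmodule, ← range_prodMap] at hu

lemma map_mem_of_forall_letterProd {T : QShuffle D →ₗ[𝕜] QShuffle D}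
    (hT : ∀ w, T (letterProd w) ∈ letterAlgebra D) {u : QShuffle D} (hu : u ∈ letterAlgebra D) :
    T u ∈ letterAlgebra D := by
  rw [← Subalgebra.mem_toSubmodule, toSubmodule_letterAlgebra] at hu
  have hle : Submodule.span 𝕜 (Set.range letterProd) ≤
      (Subalgebra.toSubmodule (letterAlgebra D)).comap T :=
    Submodule.span_le.2 (Set.range_subset_iff.2 hT)
  exact hle hu

lemma map_eq_of_forall_letterProd {M : Type*} [AddCommGroup M] [Module 𝕜 M]
    {S T : QShuffle D →ₗ[𝕜] M} (hST : ∀ w, S (letterProd w) = T (letterProd w)) {u : QShuffle D}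
    (hu : u ∈ letterAlgebra D) : S u = T u := by
  rw [← Subalgebra.mem_toSubmodule, toSubmodule_letterAlgebra] at hu
  exact LinearMap.eqOn_span (Set.forall_mem_range.2 hST) hu

lemma leftDeriv_mem (w : Word r) {u : QShuffle D} (hu : u ∈ letterAlgebra D) :
    leftDeriv w u ∈ letterAlgebra D := by
  induction w generalizing u with
  | nil => exact hu
  | cons c _ ih =>
    refine ih (u := leftDeriv [c] u) (map_mem_of_forall_letterProd (fun v => ?_) hu)
    rw [leftDeriv_letterProd]
    exact prodMap_mem _

lemma rightDeriv_letterProd_mem (c : Fin r) (w : Word r) :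
    rightDeriv [c] (letterProd w) ∈ letterAlgebra D := by
  induction w with
  | nil => rw [letterProd_nil, rightDeriv_one]; exact zero_mem _
  | cons e w ih =>
    rw [letterProd_cons, rightDeriv_mul, twist_letter]
    refine add_mem (mul_mem ?_ (letterProd_mem w))
      (mul_mem (Subalgebra.smul_mem _ (letter_mem e) _) ih)
    rcases eq_or_ne c e with rfl | hce
    · rw [rightDeriv_letter_self]; exact one_mem _
    · rw [rightDeriv_letter_of_ne hce]; exact zero_mem _

lemma rightDeriv_append (v w : Word r) (u : QShuffle D) :
    rightDeriv (v ++ w) u = rightDeriv v (rightDeriv w u) := by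
  ext s; simp [rightDeriv_apply]

lemma rightDeriv_mem (w : Word r) {u : QShuffle D} (hu : u ∈ letterAlgebra D) :
    rightDeriv w u ∈ letterAlgebra D := by
  induction w with
  | nil =>
    have hnil : rightDeriv [] u = u := by ext s; simp [rightDeriv_apply]
    rwa [hnil]
  | cons c w ih =>
    rw [← List.singleton_append, rightDeriv_append]
    exact map_mem_of_forall_letterProd (rightDeriv_letterProd_mem c) ih

variable (D) in
lemma exists_prodMap_section :
    ∃ σ : QShuffle D →ₗ[𝕜] (Word r →₀ 𝕜), ∀ u ∈ letterAlgebra D, prodMap D (σ u) = u := by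
  obtain ⟨τ, hτ⟩ := (prodMap D).rangeRestrict.exists_rightInverse_of_surjective
    (prodMap D).range_rangeRestrict
  obtain ⟨σ, rfl⟩ := τ.exists_extend
  refine ⟨σ, fun u hu => ?_⟩
  rw [← Subalgebra.mem_toSubmodule, ← range_prodMap] at hu
  exact congrArg Subtype.val (LinearMap.congr_fun hτ ⟨u, hu⟩)

variable (D) in
/-- The symmetric bilinear form on `𝒰` for which the product of the letters of `w` pairs with `v`
to the coefficient of `w` in `v`. Being built from a chosen section of `prodMap`, it is meaningful
only on `𝒰`, although it is defined on all functions. -/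
def bilin : QShuffle D →ₗ[𝕜] QShuffle D →ₗ[𝕜] 𝕜 :=
  wordPairing.comp (exists_prodMap_section D).choose

variable {u v y : QShuffle D}

lemma bilin_prodMap (f : Word r →₀ 𝕜) (hv : v ∈ letterAlgebra D) :
    bilin D (prodMap D f) v = wordPairing f v := by
  obtain ⟨g, rfl⟩ := exists_prodMap_eq hv
  rw [bilin, LinearMap.comp_apply, wordPairing_prodMap_comm,
    (exists_prodMap_section D).choose_spec _ (prodMap_mem f), wordPairing_prodMap_comm]

lemma bilin_letterProd (w : Word r) (hv : v ∈ letterAlgebra D) :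
    bilin D (letterProd w) v = v w := by
  have hsingle := bilin_prodMap (Finsupp.single w 1) hv
  rwa [prodMap_single, one_smul, wordPairing_single, one_mul] at hsingle

lemma bilin_comm (hu : u ∈ letterAlgebra D) (hv : v ∈ letterAlgebra D) :
    bilin D u v = bilin D v u := by
  obtain ⟨f, rfl⟩ := exists_prodMap_eq hu
  obtain ⟨g, rfl⟩ := exists_prodMap_eq hv
  rw [bilin_prodMap f hv, bilin_prodMap g hu, wordPairing_prodMap_comm]

lemma bilin_letterProd_mul (w : Word r) (hy : y ∈ letterAlgebra D) (hv : v ∈ letterAlgebra D) :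
    bilin D (letterProd w * y) v = bilin D y (leftDeriv w v) := by
  refine map_eq_of_forall_letterProd (S := (bilin D).flip v ∘ₗ LinearMap.mulLeft 𝕜 (letterProd w))
    (T := (bilin D).flip (leftDeriv w v)) (fun x => ?_) hy
  simp only [LinearMap.comp_apply, LinearMap.mulLeft_apply, LinearMap.flip_apply]
  rw [← letterProd_append, bilin_letterProd _ hv, bilin_letterProd _ (leftDeriv_mem w hv)]
  rfl

lemma bilin_mul_letterProd (w : Word r) (hy : y ∈ letterAlgebra D) (hv : v ∈ letterAlgebra D) :
    bilin D (y * letterProd w) v = bilin D y (rightDeriv w v) := by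
  refine map_eq_of_forall_letterProd (S := (bilin D).flip v ∘ₗ LinearMap.mulRight 𝕜 (letterProd w))
    (T := (bilin D).flip (rightDeriv w v)) (fun x => ?_) hy
  simp only [LinearMap.comp_apply, LinearMap.mulRight_apply, LinearMap.flip_apply]
  rw [← letterProd_append, bilin_letterProd _ hv, bilin_letterProd _ (rightDeriv_mem w hv)]
  rfl

lemma bilin_letter_mul (i : Fin r) (hy : y ∈ letterAlgebra D) (hv : v ∈ letterAlgebra D) :
    bilin D (letter i * y) v = bilin D y (leftDeriv [i] v) := by
  rw [← letterProd_singleton, bilin_letterProd_mul [i] hy hv]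

lemma bilin_mul_letter (i : Fin r) (hy : y ∈ letterAlgebra D) (hv : v ∈ letterAlgebra D) :
    bilin D (y * letter i) v = bilin D y (rightDeriv [i] v) := by
  rw [← letterProd_singleton, bilin_mul_letterProd [i] hy hv]

end QShuffle

/-! ### Weight spaces -/

namespace QShuffle

variable {𝕜 : Type*} [Field 𝕜] {D : ShuffleDatum r 𝕜} {μ ν : Fin r → ℕ} {u v : QShuffle D}

variable (D) in
/-- The elements of `𝒰` which are homogeneous of degree `ν`. -/
def weightSpace (ν : Fin r → ℕ) : Submodule 𝕜 (QShuffle D) where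
  carrier := {u | u ∈ letterAlgebra D ∧ ∀ w, deg w ≠ ν → u w = 0}
  add_mem' := by
    rintro u v ⟨hu, hu'⟩ ⟨hv, hv'⟩
    exact ⟨add_mem hu hv, fun w hw => by rw [add_apply, hu' w hw, hv' w hw, add_zero]⟩
  zero_mem' := ⟨zero_mem _, fun w _ => rfl⟩
  smul_mem' := by
    rintro a u ⟨hu, hu'⟩
    exact ⟨Subalgebra.smul_mem _ hu a, fun w hw => by rw [smul_apply, hu' w hw, mul_zero]⟩

lemma deg_eq_of_apply_ne_zero (hu : u ∈ weightSpace D ν) {w : Word r} (hw : u w ≠ 0) :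
    deg w = ν := not_imp_comm.1 (hu.2 w) hw

lemma leftDeriv_mem_weightSpace {w : Word r} (hw : deg w = μ) (hu : u ∈ weightSpace D (μ + ν)) :
    leftDeriv w u ∈ weightSpace D ν := by
  refine ⟨leftDeriv_mem w hu.1, fun s hs => hu.2 (w ++ s) ?_⟩
  rwa [deg_append, hw, ne_eq, add_right_inj]

lemma rightDeriv_mem_weightSpace {w : Word r} (hw : deg w = ν) (hu : u ∈ weightSpace D (μ + ν)) :
    rightDeriv w u ∈ weightSpace D μ := by
  refine ⟨rightDeriv_mem w hu.1, fun s hs => hu.2 (s ++ w) ?_⟩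
  rwa [deg_append, hw, ne_eq, add_left_inj]

lemma leftDeriv_letter_mem_weightSpace (c : Fin r) (hu : u ∈ weightSpace D (ν + Pi.single c 1)) :
    leftDeriv [c] u ∈ weightSpace D ν :=
  leftDeriv_mem_weightSpace (deg_singleton c) (add_comm ν _ ▸ hu)

lemma rightDeriv_letter_mem_weightSpace (c : Fin r) (hu : u ∈ weightSpace D (ν + Pi.single c 1)) :
    rightDeriv [c] u ∈ weightSpace D ν :=
  rightDeriv_mem_weightSpace (deg_singleton c) hu

lemma leftDeriv_eq_zero_of_apply_eq_zero {c : Fin r} (hc : ν c = 0) (hu : u ∈ weightSpace D ν) :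
    leftDeriv [c] u = 0 := by
  ext w
  refine hu.2 (c :: w) fun h => ?_
  simpa [deg, hc] using congrFun h c

lemma rightDeriv_eq_zero_of_apply_eq_zero {c : Fin r} (hc : ν c = 0)
    (hu : u ∈ weightSpace D ν) : rightDeriv [c] u = 0 := by
  ext w
  refine hu.2 (w ++ [c]) fun h => ?_
  simpa [deg, hc] using congrFun h c

lemma twist_eq_smul (c : Fin r) (hu : u ∈ weightSpace D ν) :
    twist c u = D.q ^ (-rootPairing D.p c ν) • u := by
  ext w
  rw [twist_apply, smul_apply]
  by_cases hw : deg w = ν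
  · rw [hw]
  · rw [hu.2 w hw, mul_zero, mul_zero]

lemma single_apply_eq_zero_of_deg_ne {v w : Word r} (h : deg v ≠ deg w) :
    (single w : QShuffle D) v = 0 :=
  if_neg fun hvw => h (congrArg deg hvw)

lemma one_mem_weightSpace : (1 : QShuffle D) ∈ weightSpace D 0 :=
  ⟨one_mem _, fun _ hw => single_apply_eq_zero_of_deg_ne (deg_nil (r := r) ▸ hw)⟩

lemma eq_smul_one_of_mem_weightSpace_zero (hu : u ∈ weightSpace D 0) : u = u [] • 1 := by
  ext w
  by_cases hw : w = []
  · simp [hw, one_def, single_apply]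
  · rw [smul_apply, one_def, single_apply, if_neg hw, mul_zero]
    exact hu.2 w (deg_eq_zero_iff.not.2 hw)

lemma letter_mem_weightSpace (c : Fin r) : letter c ∈ weightSpace D (Pi.single c 1) :=
  ⟨letter_mem c, fun _ hw => single_apply_eq_zero_of_deg_ne (deg_singleton c ▸ hw)⟩

lemma mul_mem_weightSpace (hu : u ∈ weightSpace D μ) (hv : v ∈ weightSpace D ν) :
    u * v ∈ weightSpace D (μ + ν) := by
  refine ⟨mul_mem hu.1 hv.1, fun w hw => ?_⟩
  by_contra hne
  obtain ⟨a, b, hab, ha, hb⟩ := exists_isShuffle_of_mul_ne_zero hne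
  rw [hab.deg_eq, deg_eq_of_apply_ne_zero hu ha, deg_eq_of_apply_ne_zero hv hb] at hw
  exact hw rfl

lemma letter_mul_mem_weightSpace (i : Fin r) (hu : u ∈ weightSpace D ν) :
    letter i * u ∈ weightSpace D (ν + Pi.single i 1) :=
  add_comm ν _ ▸ mul_mem_weightSpace (letter_mem_weightSpace i) hu

lemma mul_letter_mem_weightSpace (i : Fin r) (hu : u ∈ weightSpace D ν) :
    u * letter i ∈ weightSpace D (ν + Pi.single i 1) :=
  mul_mem_weightSpace hu (letter_mem_weightSpace i)

lemma letterProd_mem_weightSpace (w : Word r) : letterProd w ∈ weightSpace D (deg w) := by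
  induction w with
  | nil => rw [deg_nil]; exact one_mem_weightSpace
  | cons c w ih => rw [deg_cons, letterProd_cons]; exact letter_mul_mem_weightSpace c ih

/-- The projection of a function on words to its part of degree `ν`. -/
def component (ν : Fin r → ℕ) : QShuffle D →ₗ[𝕜] QShuffle D where
  toFun f := fun w => if deg w = ν then f w else 0
  map_add' f g := by ext w; exact ite_add_zero
  map_smul' a f := by ext w; exact (mul_ite_zero (deg w = ν) a (f w)).symm

lemma component_eq_self (hu : ∀ w, deg w ≠ ν → u w = 0) : component ν u = u := by
  ext w
  by_cases hw : deg w = ν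
  · exact if_pos hw
  · exact (if_neg hw).trans (hu w hw).symm

lemma component_eq_zero (hu : ∀ w, deg w = ν → u w = 0) : component ν u = 0 := by
  ext w
  exact ite_eq_right_iff.2 (hu w)

variable (D) in
lemma weightSpace_eq_span (ν : Fin r → ℕ) :
    weightSpace D ν = Submodule.span 𝕜 (letterProd '' {w | deg w = ν}) := by
  apply le_antisymm
  · rintro u ⟨hu, hdeg⟩
    rw [← component_eq_self hdeg]
    have hle : Submodule.span 𝕜 (Set.range letterProd) ≤
        (Submodule.span 𝕜 (letterProd '' {w | deg w = ν})).comap (component (D := D) ν) := by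
      rw [Submodule.span_le, Set.range_subset_iff]
      intro w
      by_cases hw : deg w = ν
      · rw [SetLike.mem_coe, Submodule.mem_comap,
          component_eq_self (hw ▸ (letterProd_mem_weightSpace w).2)]
        exact Submodule.subset_span ⟨w, hw, rfl⟩
      · rw [SetLike.mem_coe, Submodule.mem_comap, component_eq_zero fun v hv =>
          (letterProd_mem_weightSpace w).2 v (hv.trans_ne (Ne.symm hw))]
        exact zero_mem _
    rw [← Subalgebra.mem_toSubmodule, toSubmodule_letterAlgebra] at hu
    exact hle hu
  · rw [Submodule.span_le]
    rintro _ ⟨w, rfl, rfl⟩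
    exact letterProd_mem_weightSpace w

lemma map_eq_of_forall_letterProd_deg {M : Type*} [AddCommGroup M] [Module 𝕜 M]
    {S T : QShuffle D →ₗ[𝕜] M} (hST : ∀ w, deg w = ν → S (letterProd w) = T (letterProd w))
    (hu : u ∈ weightSpace D ν) : S u = T u := by
  rw [weightSpace_eq_span] at hu
  exact LinearMap.eqOn_span (Set.forall_mem_image.2 hST) hu

end QShuffle

/-! ### Raising operators -/

namespace QShuffle

variable {𝕜 : Type*} [Field 𝕜] {D : ShuffleDatum r 𝕜} {ν : Fin r → ℕ} {y z v : QShuffle D}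

lemma leftDeriv_letter_mul_self (i : Fin r) (y : QShuffle D) :
    leftDeriv [i] (letter i * y) = letter i * leftDeriv [i] y + twist i y := by
  rw [leftDeriv_mul, leftDeriv_letter_self, one_mul]

lemma leftDeriv_letter_mul_of_ne {c i : Fin r} (h : c ≠ i) (y : QShuffle D) :
    leftDeriv [c] (letter i * y) = letter i * leftDeriv [c] y := by
  rw [leftDeriv_mul, leftDeriv_letter_of_ne h, zero_mul, add_zero]

lemma leftDeriv_mul_letter_self (i : Fin r) (y : QShuffle D) :
    leftDeriv [i] (y * letter i) = y + D.q ^ (-D.p i i) • (leftDeriv [i] y * letter i) := by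
  rw [leftDeriv_mul, leftDeriv_letter_self, mul_one, twist_letter, mul_smul_comm]

lemma leftDeriv_mul_letter_of_ne {c i : Fin r} (h : c ≠ i) (y : QShuffle D) :
    leftDeriv [c] (y * letter i) = D.q ^ (-D.p c i) • (leftDeriv [c] y * letter i) := by
  rw [leftDeriv_mul, leftDeriv_letter_of_ne h, mul_zero, zero_add, twist_letter, mul_smul_comm]

lemma rightDeriv_letter_mul_self (i : Fin r) (y : QShuffle D) :
    rightDeriv [i] (letter i * y) = y + D.q ^ (-D.p i i) • (letter i * rightDeriv [i] y) := by
  rw [rightDeriv_mul, rightDeriv_letter_self, one_mul, twist_letter, smul_mul_assoc]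

lemma rightDeriv_mul_letter_self (i : Fin r) (y : QShuffle D) :
    rightDeriv [i] (y * letter i) = rightDeriv [i] y * letter i + twist i y := by
  rw [rightDeriv_mul, rightDeriv_letter_self, mul_one]

/-- The `q`-commutator `z ↦ z * i - q ^ k i * z` with the letter `i`. For `k = (α_i, ν)` it raises
the degree of the elements of degree `ν` in the kernel of `leftDeriv [i]`, inside this kernel. -/
def raise (i : Fin r) (k : ℤ) : QShuffle D →ₗ[𝕜] QShuffle D :=
  LinearMap.mulRight 𝕜 (letter i) - D.q ^ k • LinearMap.mulLeft 𝕜 (letter i)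

lemma raise_apply (i : Fin r) (k : ℤ) (z : QShuffle D) :
    raise i k z = z * letter i - D.q ^ k • (letter i * z) := rfl

lemma raise_mem_weightSpace (i : Fin r) (k : ℤ) (hz : z ∈ weightSpace D ν) :
    raise i k z ∈ weightSpace D (ν + Pi.single i 1) :=
  sub_mem (mul_letter_mem_weightSpace i hz)
    (Submodule.smul_mem _ _ (letter_mul_mem_weightSpace i hz))

lemma leftDeriv_raise {i : Fin r} (hz : z ∈ weightSpace D ν) (hleft : leftDeriv [i] z = 0) :
    leftDeriv [i] (raise i (rootPairing D.p i ν) z) = 0 := by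
  rw [raise_apply, map_sub, map_smul, leftDeriv_mul_letter_self, leftDeriv_letter_mul_self, hleft,
    twist_eq_smul i hz, zero_mul, mul_zero, smul_zero, add_zero, zero_add, smul_smul,
    zpow_neg, mul_inv_cancel₀ (zpow_ne_zero _ D.q_ne_zero), one_smul, sub_self]

lemma rightDeriv_raise (i : Fin r) (hz : z ∈ weightSpace D ν) :
    rightDeriv [i] (raise i (rootPairing D.p i ν) z) =
      raise i (rootPairing D.p i ν - D.p i i) (rightDeriv [i] z) +
        (D.q ^ (-rootPairing D.p i ν) - D.q ^ rootPairing D.p i ν) • z := by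
  rw [raise_apply, map_sub, map_smul, rightDeriv_mul_letter_self, rightDeriv_letter_mul_self,
    twist_eq_smul i hz, raise_apply, smul_add, smul_smul, sub_eq_add_neg (rootPairing D.p i ν),
    zpow_add₀ D.q_ne_zero, sub_smul]
  abel

lemma bilin_raise (i : Fin r) (k : ℤ) (hz : z ∈ letterAlgebra D) (hv : v ∈ letterAlgebra D)
    (hleft : leftDeriv [i] v = 0) : bilin D (raise i k z) v = bilin D z (rightDeriv [i] v) := by
  rw [raise_apply, map_sub, map_smul, LinearMap.sub_apply, LinearMap.smul_apply,
    bilin_letter_mul i hz hv, hleft, map_zero, smul_zero, sub_zero, bilin_mul_letter i hz hv]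

/-- The `t`-th iterate of the raising operators on `y`, where `k = (α_i, ν)` for `y` of degree
`ν`. -/
def raiseChain (i : Fin r) (k : ℤ) (y : QShuffle D) : ℕ → QShuffle D
  | 0 => y
  | t + 1 => raise i (k + D.p i i * t) (raiseChain i k y t)

lemma raiseChain_zero (i : Fin r) (k : ℤ) (y : QShuffle D) : raiseChain i k y 0 = y := rfl

lemma raiseChain_succ (i : Fin r) (k : ℤ) (y : QShuffle D) (t : ℕ) :
    raiseChain i k y (t + 1) = raise i (k + D.p i i * t) (raiseChain i k y t) := rfl

lemma raiseChain_mem_weightSpace (i : Fin r) (k : ℤ) (hy : y ∈ weightSpace D ν) (t : ℕ) :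
    raiseChain i k y t ∈ weightSpace D (ν + Pi.single i t) := by
  induction t with
  | zero => rwa [Pi.single_zero, add_zero]
  | succ t ih => rw [Pi.single_add, ← add_assoc]; exact raise_mem_weightSpace i _ ih

lemma rootPairing_add_single (p : Fin r → Fin r → ℤ) (i : Fin r) (ν : Fin r → ℕ) (t : ℕ) :
    rootPairing p i (ν + Pi.single i t) = rootPairing p i ν + p i i * t := by
  rw [map_add, rootPairing_single]

lemma leftDeriv_raiseChain {i : Fin r} (hy : y ∈ weightSpace D ν) (hleft : leftDeriv [i] y = 0)
    (t : ℕ) : leftDeriv [i] (raiseChain i (rootPairing D.p i ν) y t) = 0 := by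
  induction t with
  | zero => exact hleft
  | succ t ih =>
    rw [raiseChain_succ, ← rootPairing_add_single]
    exact leftDeriv_raise (raiseChain_mem_weightSpace i _ hy t) ih

variable (D) in
/-- The scalar by which `rightDeriv [i]` sends the `t`-th element of a raising chain to the one
before it. -/
def chainCoeff (i : Fin r) (k : ℤ) (t : ℕ) : 𝕜 :=
  ∑ s ∈ Finset.range t, (D.q ^ (-(k + D.p i i * s)) - D.q ^ (k + D.p i i * s))

lemma rightDeriv_raiseChain_succ {i : Fin r} (hy : y ∈ weightSpace D ν)
    (hright : rightDeriv [i] y = 0) (t : ℕ) :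
    rightDeriv [i] (raiseChain i (rootPairing D.p i ν) y (t + 1)) =
      chainCoeff D i (rootPairing D.p i ν) (t + 1) • raiseChain i (rootPairing D.p i ν) y t := by
  have hderiv := rightDeriv_raise i (raiseChain_mem_weightSpace i (rootPairing D.p i ν) hy t)
  rw [rootPairing_add_single, ← raiseChain_succ] at hderiv
  rw [hderiv, chainCoeff, Finset.sum_range_succ, add_smul, add_left_inj]
  cases t with
  | zero => simp [raiseChain_zero, hright]
  | succ t =>
    rw [rightDeriv_raiseChain_succ hy hright t, map_smul, Nat.cast_succ, mul_add_one,
      ← add_assoc, add_sub_cancel_right, ← raiseChain_succ, chainCoeff]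

end QShuffle

/-! ### Serre relations and nilpotency -/

/-- The pairing `(μ, ν)` on `Q⁺` extending the form `p i j = (α_i, α_j)` on simple roots. -/
def rootForm (p : Fin r → Fin r → ℤ) (μ ν : Fin r → ℕ) : ℤ := ∑ i, μ i * rootPairing p i ν

lemma rootForm_single_left (p : Fin r → Fin r → ℤ) (i : Fin r) (ν : Fin r → ℕ) :
    rootForm p (Pi.single i 1) ν = rootPairing p i ν := by
  simp [rootForm, Pi.single_apply]

/-- The symmetrized Cartan matrices of finite type, that is, of semisimple Lie algebras: the Cartan
matrix is `2 * p i j / p i i`, and positivity is only required on `Q⁺`. -/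
structure IsFiniteCartanForm (p : Fin r → Fin r → ℤ) : Prop where
  symm : ∀ i j, p i j = p j i
  offdiag_nonpos : ∀ i j, i ≠ j → p i j ≤ 0
  dvd_two_mul : ∀ i j, p i i ∣ 2 * p i j
  rootForm_self_pos : ∀ ν : Fin r → ℕ, ν ≠ 0 → 0 < rootForm p ν ν

namespace IsFiniteCartanForm

variable {p : Fin r → Fin r → ℤ}

lemma diag_pos (hp : IsFiniteCartanForm p) (i : Fin r) : 0 < p i i := by
  have hpos := hp.rootForm_self_pos (Pi.single i 1) (by simp)
  rwa [rootForm_single_left, rootPairing_single, Nat.cast_one, mul_one] at hpos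

lemma dvd_two_mul_rootPairing (hp : IsFiniteCartanForm p) (i : Fin r) (ν : Fin r → ℕ) :
    p i i ∣ 2 * rootPairing p i ν := by
  rw [rootPairing, AddMonoidHom.coe_mk, ZeroHom.coe_mk, Finset.mul_sum]
  refine Finset.dvd_sum fun j _ => ?_
  rw [← mul_assoc]
  exact (hp.dvd_two_mul i j).mul_right _

lemma exists_diag_mul_eq (hp : IsFiniteCartanForm p) {i : Fin r} {ν : Fin r → ℕ}
    (hν : rootPairing p i ν ≤ 0) : ∃ n : ℕ, p i i * n = -(2 * rootPairing p i ν) := by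
  obtain ⟨m, hm⟩ := hp.dvd_two_mul_rootPairing i ν
  have hm0 : m ≤ 0 := nonpos_of_mul_nonpos_right (by omega) (hp.diag_pos i)
  exact ⟨m.natAbs, by rw [Int.ofNat_natAbs_of_nonpos hm0, mul_neg, hm]⟩

lemma exists_pos_rootPairing (hp : IsFiniteCartanForm p) {ν : Fin r → ℕ} (hν : ν ≠ 0) :
    ∃ i, 0 < ν i ∧ 0 < rootPairing p i ν := by
  obtain ⟨i, -, hi⟩ := Finset.exists_lt_of_sum_lt (s := Finset.univ) (f := fun _ : Fin r => (0 : ℤ))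
    (g := fun i => (ν i : ℤ) * rootPairing p i ν)
    (Finset.sum_const_zero.trans_lt (hp.rootForm_self_pos ν hν))
  have hpair : 0 < rootPairing p i ν := pos_of_mul_pos_right hi (Int.natCast_nonneg _)
  exact ⟨i, by exact_mod_cast pos_of_mul_pos_left hi hpair.le, hpair⟩

end IsFiniteCartanForm

namespace QShuffle

variable {𝕜 : Type*} [Field 𝕜] {D : ShuffleDatum r 𝕜} {ν : Fin r → ℕ} {u v y : QShuffle D}

lemma ext_leftDeriv (hnil : u [] = v []) (hderiv : ∀ c, leftDeriv [c] u = leftDeriv [c] v) :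
    u = v := by
  ext w
  cases w with
  | nil => exact hnil
  | cons c w => exact congrFun (hderiv c) w

lemma leftDeriv_raiseChain_letter_self {i j : Fin r} (h : j ≠ i) (t : ℕ) :
    leftDeriv [j] (raiseChain i (D.p i j) (letter j) t) =
      (∏ s ∈ Finset.range t, (D.q ^ (-D.p i j) - D.q ^ (D.p i j + D.p i i * s))) •
        (letter i : QShuffle D) ^ t := by
  induction t with
  | zero => simp [raiseChain_zero, leftDeriv_letter_self]
  | succ t ih =>
    rw [raiseChain_succ, raise_apply, map_sub, map_smul, leftDeriv_mul_letter_of_ne h,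
      leftDeriv_letter_mul_of_ne h, ih, smul_mul_assoc, mul_smul_comm, ← pow_succ, ← pow_succ',
      D.p_symm j i, smul_smul, smul_smul, ← sub_smul, ← sub_mul, Finset.prod_range_succ, mul_comm]

lemma leftDeriv_raiseChain_letter_of_ne {i j c : Fin r} (hi : c ≠ i) (hj : c ≠ j) (k : ℤ) (t : ℕ) :
    leftDeriv [c] (raiseChain i k (letter j) t : QShuffle D) = 0 := by
  induction t with
  | zero => exact leftDeriv_letter_of_ne hj
  | succ t ih =>
    rw [raiseChain_succ, raise_apply, map_sub, map_smul, leftDeriv_mul_letter_of_ne hi,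
      leftDeriv_letter_mul_of_ne hi, ih, zero_mul, mul_zero, smul_zero, smul_zero, sub_zero]

lemma raiseChain_letter_eq_zero {i j : Fin r} (h : j ≠ i) {n t : ℕ}
    (hn : D.p i i * n = -(2 * D.p i j)) (hnt : n < t) :
    raiseChain i (D.p i j) (letter j : QShuffle D) t = 0 := by
  refine ext_leftDeriv ?_ fun c => ?_
  · refine (raiseChain_mem_weightSpace i _ (letter_mem_weightSpace j) t).2 [] fun hdeg => ?_
    have hj := congrFun hdeg j
    rw [deg_nil, Pi.add_apply, Pi.single_eq_same, Pi.zero_apply] at hj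
    omega
  rw [map_zero]
  rcases eq_or_ne c i with rfl | hci
  · have hchain := leftDeriv_raiseChain (letter_mem_weightSpace (D := D) j)
      (leftDeriv_letter_of_ne h.symm) t
    rwa [rootPairing_single, Nat.cast_one, mul_one] at hchain
  rcases eq_or_ne c j with rfl | hcj
  · rw [leftDeriv_raiseChain_letter_self h, Finset.prod_eq_zero (Finset.mem_range.2 hnt), zero_smul]
    rw [hn, two_mul, neg_add, add_neg_cancel_left, sub_self]
  · exact leftDeriv_raiseChain_letter_of_ne hci hcj _ t

lemma exists_forall_raiseChain_letter_eq_zero (hp : IsFiniteCartanForm D.p) (i : Fin r) :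
    ∃ M : ℕ, ∀ j ≠ i, ∀ t, M < t → raiseChain i (D.p i j) (letter j : QShuffle D) t = 0 := by
  have hserre : ∀ j, ∃ n : ℕ, j ≠ i → D.p i i * n = -(2 * D.p i j) := by
    intro j
    rcases eq_or_ne j i with rfl | hji
    · exact ⟨0, fun h => absurd rfl h⟩
    · have hpair : rootPairing D.p i (Pi.single j 1) = D.p i j := by simp [rootPairing_single]
      obtain ⟨n, hn⟩ := hp.exists_diag_mul_eq (hpair.trans_le (hp.offdiag_nonpos i j hji.symm))
      exact ⟨n, fun _ => hpair ▸ hn⟩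
  choose n hn using hserre
  exact ⟨Finset.univ.sup n, fun j hj t ht => raiseChain_letter_eq_zero hj (hn j hj)
    ((Finset.le_sup (Finset.mem_univ j)).trans_lt ht)⟩

variable (D) in
/-- The right ideal of `𝒰` generated by the `n`-th power of the letter `i`. -/
def letterIdeal (i : Fin r) (n : ℕ) : Submodule 𝕜 (QShuffle D) :=
  (Subalgebra.toSubmodule (letterAlgebra D)).map (LinearMap.mulLeft 𝕜 (letter i ^ n))

lemma mem_letterIdeal {i : Fin r} {n : ℕ} :
    u ∈ letterIdeal D i n ↔ ∃ y ∈ letterAlgebra D, letter i ^ n * y = u := Iff.rfl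

lemma mem_letterIdeal_zero (i : Fin r) (hu : u ∈ letterAlgebra D) : u ∈ letterIdeal D i 0 :=
  ⟨u, hu, by simp⟩

lemma letter_mul_mem_letterIdeal {i : Fin r} {n : ℕ} (hu : u ∈ letterIdeal D i n) :
    letter i * u ∈ letterIdeal D i (n + 1) := by
  obtain ⟨y, hy, rfl⟩ := mem_letterIdeal.1 hu
  exact mem_letterIdeal.2 ⟨y, hy, by rw [pow_succ', mul_assoc]⟩

lemma mul_mem_letterIdeal {i : Fin r} {n : ℕ} (hu : u ∈ letterIdeal D i n)
    (hv : v ∈ letterAlgebra D) : u * v ∈ letterIdeal D i n := by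
  obtain ⟨y, hy, rfl⟩ := mem_letterIdeal.1 hu
  exact mem_letterIdeal.2 ⟨y * v, mul_mem hy hv, (mul_assoc _ _ _).symm⟩

variable (D) in
lemma antitone_letterIdeal (i : Fin r) : Antitone (letterIdeal D i) := by
  refine antitone_nat_of_succ_le fun n u hu => ?_
  obtain ⟨y, hy, rfl⟩ := mem_letterIdeal.1 hu
  exact mem_letterIdeal.2 ⟨letter i * y, mul_mem (letter_mem i) hy, by rw [pow_succ, mul_assoc]⟩

lemma raiseChain_mul_pow_mem_letterIdeal {i j : Fin r} {k : ℤ} {M : ℕ}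
    (hM : ∀ t, M < t → raiseChain i k (letter j : QShuffle D) t = 0) (t n : ℕ) :
    raiseChain i k (letter j) t * letter i ^ n ∈ letterIdeal D i (n + t - M) := by
  by_cases ht : M < t
  · rw [hM t ht, zero_mul]; exact zero_mem _
  induction n with
  | zero =>
    rw [pow_zero, mul_one, Nat.sub_eq_zero_of_le (by omega)]
    exact mem_letterIdeal_zero i (raiseChain_mem_weightSpace i k (letter_mem_weightSpace j) t).1
  | succ n ih =>
    have hstep : raiseChain i k (letter j : QShuffle D) t * letter i ^ (n + 1) =
        raiseChain i k (letter j) (t + 1) * letter i ^ n + D.q ^ (k + D.p i i * t) •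
          (letter i * (raiseChain i k (letter j) t * letter i ^ n)) := by
      rw [raiseChain_succ, raise_apply, sub_mul, smul_mul_assoc, pow_succ', mul_assoc, mul_assoc,
        sub_add_cancel]
    rw [hstep]
    refine add_mem ?_ (Submodule.smul_mem _ _ ?_)
    · rw [add_right_comm, add_assoc n]
      exact raiseChain_mul_pow_mem_letterIdeal hM (t + 1) n
    · exact antitone_letterIdeal D i (by omega) (letter_mul_mem_letterIdeal ih)
termination_by (M + 1 - t, n)

lemma letterProd_mem_letterIdeal {i : Fin r} {M : ℕ}
    (hM : ∀ j ≠ i, ∀ t, M < t → raiseChain i (D.p i j) (letter j : QShuffle D) t = 0) (w : Word r) :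
    letterProd w ∈ letterIdeal D i (w.count i - M * (w.length - w.count i)) := by
  induction w with
  | nil => exact mem_letterIdeal_zero i (letterProd_mem [])
  | cons c w ih =>
    have hcount : w.count i ≤ w.length := List.count_le_length
    rw [letterProd_cons, List.length_cons]
    rcases eq_or_ne c i with rfl | hc
    · rw [List.count_cons_self, Nat.add_sub_add_right]
      exact antitone_letterIdeal D c (by omega) (letter_mul_mem_letterIdeal ih)
    · rw [List.count_cons_of_ne hc, Nat.succ_sub hcount, Nat.mul_succ, ← Nat.sub_sub]
      obtain ⟨y, hy, hyw⟩ := mem_letterIdeal.1 ih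
      rw [← hyw, ← mul_assoc]
      exact mul_mem_letterIdeal (raiseChain_mul_pow_mem_letterIdeal (hM c hc) 0 _) hy

lemma exists_forall_eq_zero_of_leftDeriv_eq_zero (hp : IsFiniteCartanForm D.p) (i : Fin r)
    (ν : Fin r → ℕ) :
    ∃ N : ℕ, ∀ v ∈ weightSpace D (ν + Pi.single i N), leftDeriv [i] v = 0 → v = 0 := by
  obtain ⟨M, hM⟩ := exists_forall_raiseChain_letter_eq_zero (D := D) hp i
  refine ⟨M * (∑ j, ν j) + 1, fun v hv hleft => ?_⟩
  ext w
  by_cases hw : deg w = ν + Pi.single i (M * (∑ j, ν j) + 1)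
  · have hcount : w.count i = ν i + (M * (∑ j, ν j) + 1) := by simpa [deg] using congrFun hw i
    have hlength : w.length = ∑ j, ν j + (M * (∑ j, ν j) + 1) := by
      rw [← sum_deg, hw]; simp [Finset.sum_add_distrib]
    have hle : M * (w.length - w.count i) ≤ M * ∑ j, ν j := Nat.mul_le_mul_left _ (by omega)
    obtain ⟨y, hy, hyw⟩ := mem_letterIdeal.1
      (antitone_letterIdeal D i (show 1 ≤ _ by omega) (letterProd_mem_letterIdeal hM w))
    rw [← bilin_letterProd w hv.1, ← hyw, pow_one, bilin_letter_mul i hy hv.1, hleft, map_zero,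
      zero_apply]
  · exact hv.2 w hw

lemma two_mul_chainCoeff (i : Fin r) (k : ℤ) (t : ℕ) : 2 * chainCoeff D i k (t + 1) =
    ∑ s ∈ Finset.range (t + 1), ((D.q ^ (-(k + D.p i i * s)) - D.q ^ (k + D.p i i * s)) +
      (D.q ^ (-(k + D.p i i * (t - s : ℕ))) - D.q ^ (k + D.p i i * (t - s : ℕ)))) := by
  rw [Finset.sum_add_distrib, two_mul]
  congr 1
  exact (Finset.sum_range_reflect
    (fun s : ℕ => D.q ^ (-(k + D.p i i * s)) - D.q ^ (k + D.p i i * s)) (t + 1)).symm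

lemma chainCoeff_eq_zero [NeZero (2 : 𝕜)] {i : Fin r} {k : ℤ} {t : ℕ} (h : D.p i i * t = -(2 * k)) :
    chainCoeff D i k (t + 1) = 0 := by
  refine (mul_eq_zero.1 ?_).resolve_left (NeZero.ne (2 : 𝕜))
  rw [two_mul_chainCoeff]
  refine Finset.sum_eq_zero fun s hs => ?_
  have hcast : ((t - s : ℕ) : ℤ) = t - s := Int.ofNat_sub (Finset.mem_range_succ_iff.1 hs)
  have hneg : k + D.p i i * s = -(k + D.p i i * (t - s : ℕ)) := by rw [hcast]; linarith
  rw [hneg, neg_neg]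
  ring

section Ordered

variable [LinearOrder 𝕜] [IsStrictOrderedRing 𝕜]

lemma chainCoeff_neg (hq : 1 < D.q) {i : Fin r} (hi : 0 ≤ D.p i i) {k : ℤ} (hk : 0 < k) (t : ℕ) :
    chainCoeff D i k (t + 1) < 0 := by
  refine Finset.sum_neg (fun s _ => sub_neg.2 (zpow_lt_zpow_right₀ hq ?_)) (by simp)
  have hs : 0 ≤ D.p i i * s := by positivity
  omega

lemma chainCoeff_nonneg (hq : 1 < D.q) {i : Fin r} {k : ℤ} {t : ℕ}
    (h : 2 * k + D.p i i * t ≤ 0) : 0 ≤ chainCoeff D i k (t + 1) := by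
  refine nonneg_of_mul_nonneg_right (a := 2) ?_ two_pos
  rw [two_mul_chainCoeff]
  refine Finset.sum_nonneg fun s hs => ?_
  have hcast : ((t - s : ℕ) : ℤ) = t - s := Int.ofNat_sub (Finset.mem_range_succ_iff.1 hs)
  have hsum : (k + D.p i i * s) + (k + D.p i i * (t - s : ℕ)) ≤ 0 := by rw [hcast]; linarith
  have h₁ := zpow_le_zpow_right₀ hq.le
    (show k + D.p i i * s ≤ -(k + D.p i i * (t - s : ℕ)) by linarith)
  have h₂ := zpow_le_zpow_right₀ hq.le
    (show k + D.p i i * (t - s : ℕ) ≤ -(k + D.p i i * s) by linarith)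
  linarith

/-- A nonzero `y` would generate a raising chain which never vanishes, against nilpotency. -/
lemma eq_zero_of_leftDeriv_of_rightDeriv (hp : IsFiniteCartanForm D.p) (hq : 1 < D.q) {i : Fin r}
    (hν : 0 < rootPairing D.p i ν) (hy : y ∈ weightSpace D ν) (hleft : leftDeriv [i] y = 0)
    (hright : rightDeriv [i] y = 0) : y = 0 := by
  obtain ⟨N, hN⟩ := exists_forall_eq_zero_of_leftDeriv_eq_zero (D := D) hp i ν
  have hchain := hN _ (raiseChain_mem_weightSpace i _ hy N) (leftDeriv_raiseChain hy hleft N)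
  clear hN
  induction N with
  | zero => exact hchain
  | succ N ih =>
    have hderiv := rightDeriv_raiseChain_succ hy hright N
    rw [hchain, map_zero] at hderiv
    exact ih ((smul_eq_zero.1 hderiv.symm).resolve_left
      (chainCoeff_neg hq (hp.diag_pos i).le hν N).ne)

end Ordered

end QShuffle

/-! ### Positivity of the bilinear form -/

lemma finite_setOf_deg_eq (ν : Fin r → ℕ) : {w : Word r | deg w = ν}.Finite := by
  refine (List.finite_length_eq (Fin r) (∑ j, ν j)).subset ?_
  rintro w rfl
  exact (sum_deg w).symm

namespace QShuffle

variable {𝕜 : Type*} [Field 𝕜] {D : ShuffleDatum r 𝕜} {μ ν : Fin r → ℕ} {u v x y z : QShuffle D}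

lemma bilin_one_one : bilin D 1 1 = 1 := by
  rw [← letterProd_nil, bilin_letterProd [] (letterProd_mem []), letterProd_nil, one_def,
    single_apply, if_pos rfl]

lemma eq_zero_of_forall_bilin_eq_zero (hv : v ∈ weightSpace D ν)
    (h : ∀ y ∈ weightSpace D ν, bilin D y v = 0) : v = 0 := by
  ext w
  by_cases hw : deg w = ν
  · rw [← bilin_letterProd w hv.1]; exact h _ (hw ▸ letterProd_mem_weightSpace w)
  · exact hv.2 w hw

lemma eq_sum_single (hv : v ∈ weightSpace D ν) :
    v = ∑ w ∈ (finite_setOf_deg_eq ν).toFinset, v w • single w := by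
  ext w
  simp only [sum_apply, smul_apply, single_apply, mul_ite, mul_one, mul_zero]
  refine Eq.trans ?_ (Finset.sum_ite_eq _ w v).symm
  split_ifs with hw
  · rfl
  · exact hv.2 w fun h => hw ((Set.Finite.mem_toFinset _).2 h)

variable (D) in
lemma exists_bilin_eq (ν : Fin r → ℕ) (φ : QShuffle D →ₗ[𝕜] 𝕜) :
    ∃ x ∈ weightSpace D ν, ∀ v ∈ weightSpace D ν, bilin D x v = φ v := by
  refine ⟨∑ w ∈ (finite_setOf_deg_eq ν).toFinset, φ (single w) • letterProd w, ?_, fun v hv => ?_⟩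
  · refine sum_mem fun w hw => Submodule.smul_mem _ _ ?_
    rw [Set.Finite.mem_toFinset, Set.mem_ofPred_eq] at hw
    exact hw ▸ letterProd_mem_weightSpace w
  · conv_rhs => rw [eq_sum_single hv]
    simp only [map_sum, map_smul, LinearMap.sum_apply, LinearMap.smul_apply,
      bilin_letterProd _ hv.1, smul_eq_mul, mul_comm]

lemma weightSpace_le_of_forall_orthogonal {W : Submodule 𝕜 (QShuffle D)}
    (hW : ∀ x ∈ weightSpace D ν, (∀ v ∈ W, v ∈ weightSpace D ν → bilin D x v = 0) → x = 0) :
    weightSpace D ν ≤ W := by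
  intro u hu
  by_contra huW
  obtain ⟨φ, hφu, hφW⟩ := Submodule.exists_le_ker_of_notMem huW
  obtain ⟨x, hx, hxφ⟩ := exists_bilin_eq D ν φ
  have hx0 : x = 0 := hW x hx fun v hv hv' => (hxφ v hv').trans (hφW hv)
  rw [← hxφ u hu, hx0, map_zero, LinearMap.zero_apply] at hφu
  exact hφu rfl

variable (D) in
/-- The elements of `𝒰` of degree `ν` killed by `leftDeriv [i]`. -/
def leftKernel (i : Fin r) (ν : Fin r → ℕ) : Submodule 𝕜 (QShuffle D) :=
  weightSpace D ν ⊓ LinearMap.ker (leftDeriv [i])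

variable (D) in
/-- The elements of `𝒰` of degree `ν` killed by `leftDeriv [i]` and `rightDeriv [i]`: the starting
points of raising chains. -/
def biKernel (i : Fin r) (ν : Fin r → ℕ) : Submodule 𝕜 (QShuffle D) :=
  leftKernel D i ν ⊓ LinearMap.ker (rightDeriv [i])

lemma raise_mem_leftKernel {i : Fin r} (hz : z ∈ leftKernel D i ν) :
    raise i (rootPairing D.p i ν) z ∈ leftKernel D i (ν + Pi.single i 1) :=
  ⟨raise_mem_weightSpace i _ hz.1, leftDeriv_raise hz.1 hz.2⟩

lemma raiseChain_mem_leftKernel {i : Fin r} (hy : y ∈ leftKernel D i ν) (t : ℕ) :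
    raiseChain i (rootPairing D.p i ν) y t ∈ leftKernel D i (ν + Pi.single i t) :=
  ⟨raiseChain_mem_weightSpace i _ hy.1 t, leftDeriv_raiseChain hy.1 hy.2 t⟩

lemma rightDeriv_mem_leftKernel {i : Fin r} (hx : x ∈ leftKernel D i (ν + Pi.single i 1)) :
    rightDeriv [i] x ∈ leftKernel D i ν := by
  refine ⟨rightDeriv_letter_mem_weightSpace i hx.1, LinearMap.mem_ker.2 ?_⟩
  rw [leftDeriv_rightDeriv, LinearMap.mem_ker.1 hx.2, map_zero]

lemma bilin_letter_mul_eq_zero {i : Fin r} (hy : y ∈ letterAlgebra D) (hz : z ∈ leftKernel D i ν) :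
    bilin D (letter i * y) z = 0 := by
  rw [bilin_letter_mul i hy hz.1.1, LinearMap.mem_ker.1 hz.2, map_zero]

lemma bilin_letter_mul_self {i : Fin r} (hy : y ∈ weightSpace D ν) :
    bilin D (letter i * y) (letter i * y) =
      bilin D (leftDeriv [i] y) (leftDeriv [i] y) +
        D.q ^ (-rootPairing D.p i ν) * bilin D y y := by
  have hy' : leftDeriv [i] y ∈ letterAlgebra D := leftDeriv_mem [i] hy.1
  rw [bilin_letter_mul i hy.1 (letter_mul_mem_weightSpace i hy).1, leftDeriv_letter_mul_self,
    map_add, twist_eq_smul i hy, map_smul, smul_eq_mul,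
    bilin_comm hy.1 (mul_mem (letter_mem i) hy'), bilin_letter_mul i hy' hy.1]

lemma bilin_raiseChain_of_lt {i : Fin r} (hy : y ∈ biKernel D i μ) (hz : z ∈ weightSpace D ν)
    (k : ℤ) {s t : ℕ} (hst : s < t) :
    bilin D (raiseChain i k z t) (raiseChain i (rootPairing D.p i μ) y s) = 0 := by
  induction s generalizing t with
  | zero =>
    obtain ⟨t, rfl⟩ := Nat.exists_eq_succ_of_ne_zero hst.ne'
    rw [raiseChain_succ, raiseChain_zero,
      bilin_raise i _ (raiseChain_mem_weightSpace i _ hz t).1 hy.1.1.1 hy.1.2,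
      LinearMap.mem_ker.1 hy.2, map_zero]
  | succ s ih =>
    obtain ⟨t, rfl⟩ := Nat.exists_eq_succ_of_ne_zero (Nat.ne_zero_of_lt hst)
    have hchain := raiseChain_mem_leftKernel hy.1 (s + 1)
    rw [raiseChain_succ i k z,
      bilin_raise i _ (raiseChain_mem_weightSpace i _ hz t).1 hchain.1.1 hchain.2,
      rightDeriv_raiseChain_succ hy.1.1 hy.2, map_smul, ih (Nat.succ_lt_succ_iff.1 hst), smul_zero]

lemma bilin_raiseChain_of_ne {i : Fin r} (hy : y ∈ biKernel D i μ) (hz : z ∈ biKernel D i ν)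
    {s t : ℕ} (hst : s ≠ t) :
    bilin D (raiseChain i (rootPairing D.p i μ) y s) (raiseChain i (rootPairing D.p i ν) z t) =
      0 := by
  rcases hst.lt_or_gt with hlt | hgt
  · rw [bilin_comm (raiseChain_mem_leftKernel hy.1 s).1.1 (raiseChain_mem_leftKernel hz.1 t).1.1]
    exact bilin_raiseChain_of_lt hy hz.1.1 _ hlt
  · exact bilin_raiseChain_of_lt hz hy.1.1 _ hgt

lemma raiseChain_eq_zero_of_le (i : Fin r) (k : ℤ) {m t : ℕ} (hmt : m ≤ t)
    (hm : raiseChain i k y m = 0) : raiseChain i k y t = 0 := by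
  induction t, hmt using Nat.le_induction with
  | base => exact hm
  | succ t _ ih => rw [raiseChain_succ, ih, map_zero]

section Ordered

variable [LinearOrder 𝕜]

variable (D) in
/-- The bilinear form is positive definite on the elements of `𝒰` of degree `ν`. -/
def PosDefAt (ν : Fin r → ℕ) : Prop := ∀ u ∈ weightSpace D ν, u ≠ 0 → 0 < bilin D u u

lemma PosDefAt.bilin_self_nonneg (h : PosDefAt D ν) (hu : u ∈ weightSpace D ν) :
    0 ≤ bilin D u u := by
  rcases eq_or_ne u 0 with rfl | hu0
  · rw [map_zero]
  · exact (h u hu hu0).le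

lemma PosDefAt.eq_zero (h : PosDefAt D ν) (hu : u ∈ weightSpace D ν) (huu : bilin D u u = 0) :
    u = 0 := by
  by_contra hu0
  exact (h u hu hu0).ne' huu

lemma weightSpace_add_single_le {i : Fin r} (hμ : PosDefAt D μ)
    (hbi : ∀ x ∈ biKernel D i (μ + Pi.single i 1), bilin D x x = 0 → x = 0) :
    weightSpace D (μ + Pi.single i 1) ≤ (weightSpace D μ).map (LinearMap.mulLeft 𝕜 (letter i)) ⊔
      ((leftKernel D i μ).map (raise i (rootPairing D.p i μ)) ⊔
        biKernel D i (μ + Pi.single i 1)) := by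
  refine weightSpace_le_of_forall_orthogonal fun x hx horth => ?_
  have hleft : leftDeriv [i] x = 0 := by
    refine eq_zero_of_forall_bilin_eq_zero (leftDeriv_letter_mem_weightSpace i hx) fun y hy => ?_
    have hiy := letter_mul_mem_weightSpace i hy
    rw [← bilin_letter_mul i hy.1 hx.1, bilin_comm hiy.1 hx.1]
    exact horth _ (Submodule.mem_sup_left ⟨y, hy, rfl⟩) hiy
  have hderiv := rightDeriv_mem_leftKernel (i := i) ⟨hx, hleft⟩
  have hright : rightDeriv [i] x = 0 := by
    refine hμ.eq_zero hderiv.1 ?_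
    have hraise := raise_mem_leftKernel hderiv
    rw [← bilin_raise i (rootPairing D.p i μ) hderiv.1.1 hx.1 hleft, bilin_comm hraise.1.1 hx.1]
    exact horth _ (Submodule.mem_sup_right (Submodule.mem_sup_left ⟨_, hderiv, rfl⟩)) hraise.1
  have hxbi : x ∈ biKernel D i (μ + Pi.single i 1) := ⟨⟨hx, hleft⟩, hright⟩
  exact hbi x hxbi (horth x (Submodule.mem_sup_right (Submodule.mem_sup_right hxbi)) hx)

lemma exists_eq_add_raise_add {i : Fin r} (hμ : PosDefAt D μ)
    (hbi : ∀ x ∈ biKernel D i (μ + Pi.single i 1), bilin D x x = 0 → x = 0)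
    (hu : u ∈ weightSpace D (μ + Pi.single i 1)) :
    ∃ y ∈ weightSpace D μ, ∃ z ∈ leftKernel D i μ, ∃ x ∈ biKernel D i (μ + Pi.single i 1),
      u = letter i * y + (raise i (rootPairing D.p i μ) z + x) := by
  obtain ⟨_, ⟨y, hy, rfl⟩, _, hrest, rfl⟩ :=
    Submodule.mem_sup.1 (weightSpace_add_single_le hμ hbi hu)
  obtain ⟨_, ⟨z, hz, rfl⟩, x, hx, rfl⟩ := Submodule.mem_sup.1 hrest
  exact ⟨y, hy, z, hz, x, hx, rfl⟩

lemma exists_eq_raise_add {i : Fin r} (hμ : PosDefAt D μ)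
    (hμi : PosDefAt D (μ + Pi.single i 1)) (hu : u ∈ leftKernel D i (μ + Pi.single i 1)) :
    ∃ z ∈ leftKernel D i μ, ∃ x ∈ biKernel D i (μ + Pi.single i 1),
      u = raise i (rootPairing D.p i μ) z + x := by
  obtain ⟨y, hy, z, hz, x, hx, rfl⟩ :=
    exists_eq_add_raise_add hμ (fun x hx => hμi.eq_zero hx.1.1) hu.1
  have hrest := add_mem (raise_mem_leftKernel hz) hx.1
  have hiy : letter i * y ∈ leftKernel D i (μ + Pi.single i 1) :=
    (Submodule.add_mem_iff_left _ hrest).1 hu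
  rw [hμi.eq_zero hiy.1 (bilin_letter_mul_eq_zero hy.1 hiy), zero_add]
  exact ⟨z, hz, x, hx, rfl⟩

lemma exists_eq_sum_raiseChain {i : Fin r} (hν : ν i = 0) {n : ℕ}
    (hpos : ∀ m ≤ n, PosDefAt D (ν + Pi.single i m)) (hz : z ∈ leftKernel D i (ν + Pi.single i n)) :
    ∃ Y : ℕ → QShuffle D, (∀ m, Y m ∈ biKernel D i (ν + Pi.single i m)) ∧
      z = ∑ a ∈ Finset.HasAntidiagonal.antidiagonal n,
        raiseChain i (rootPairing D.p i (ν + Pi.single i a.1)) (Y a.1) a.2 := by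
  induction n generalizing z with
  | zero =>
    refine ⟨Function.update 0 0 z, fun m => ?_, by simp [raiseChain_zero]⟩
    rcases eq_or_ne m 0 with rfl | hm
    · rw [Function.update_self]
      exact ⟨hz, rightDeriv_eq_zero_of_apply_eq_zero (by simp [hν]) hz.1⟩
    · rw [Function.update_of_ne hm]; exact zero_mem _
  | succ n ih =>
    have hsucc : ν + Pi.single i (n + 1) = ν + Pi.single i n + Pi.single i 1 := by
      rw [Pi.single_add, add_assoc]
    rw [hsucc] at hz
    obtain ⟨z', hz', x, hx, rfl⟩ :=
      exists_eq_raise_add (hpos n n.le_succ) (hsucc ▸ hpos (n + 1) le_rfl) hz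
    obtain ⟨Y, hY, rfl⟩ := ih (fun m hm => hpos m (hm.trans n.le_succ)) hz'
    refine ⟨Function.update Y (n + 1) x, fun m => ?_, ?_⟩
    · rcases eq_or_ne m (n + 1) with rfl | hm
      · rw [Function.update_self, hsucc]; exact hx
      · rw [Function.update_of_ne hm]; exact hY m
    rw [Finset.Nat.sum_antidiagonal_succ', map_sum, add_comm]
    simp only [Function.update_self, raiseChain_zero]
    refine congrArg (x + ·) (Finset.sum_congr rfl fun a ha => ?_)
    have ha' := Finset.HasAntidiagonal.mem_antidiagonal.1 ha
    rw [Function.update_of_ne (by omega), raiseChain_succ, ← rootPairing_add_single, add_assoc,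
      ← Pi.single_add, ha']

variable [IsStrictOrderedRing 𝕜]

lemma chainCoeff_nonneg_or_raiseChain_eq_zero (hp : IsFiniteCartanForm D.p) (hq : 1 < D.q)
    {i : Fin r} (hy : y ∈ biKernel D i ν) {t : ℕ} (hpos : ∀ m ≤ t, PosDefAt D (ν + Pi.single i m)) :
    0 ≤ chainCoeff D i (rootPairing D.p i ν) (t + 1) ∨
      raiseChain i (rootPairing D.p i ν) y t = 0 := by
  rcases lt_or_ge 0 (rootPairing D.p i ν) with hν | hν
  · exact .inr (raiseChain_eq_zero_of_le i _ (Nat.zero_le t)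
      (eq_zero_of_leftDeriv_of_rightDeriv hp hq hν hy.1.1 hy.1.2 hy.2))
  obtain ⟨n, hn⟩ := hp.exists_diag_mul_eq hν
  rcases le_or_gt t n with htn | htn
  · refine .inl (chainCoeff_nonneg hq ?_)
    have hle : D.p i i * t ≤ D.p i i * n :=
      mul_le_mul_of_nonneg_left (by exact_mod_cast htn) (hp.diag_pos i).le
    linarith
  · refine .inr (raiseChain_eq_zero_of_le i _ htn ?_)
    have hchain := raiseChain_mem_leftKernel hy.1 (n + 1)
    refine (hpos (n + 1) htn).eq_zero hchain.1 ?_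
    have hnorm := bilin_raise i (rootPairing D.p i ν + D.p i i * n)
      (raiseChain_mem_leftKernel hy.1 n).1.1 hchain.1.1 hchain.2
    rwa [← raiseChain_succ, rightDeriv_raiseChain_succ hy.1.1 hy.2, chainCoeff_eq_zero hn,
      zero_smul, map_zero] at hnorm

/-- Decomposition along raising chains: `z` is a sum of orthogonal elements `Z a`, each of which is
an eigenvector of lowering after raising, with a nonnegative eigenvalue `c a` unless `Z a = 0`. -/
lemma exists_orthogonal_eq_sum (hp : IsFiniteCartanForm D.p) (hq : 1 < D.q) {i : Fin r}
    (hν : ν i = 0) {n : ℕ} (hpos : ∀ m ≤ n, PosDefAt D (ν + Pi.single i m))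
    (hz : z ∈ leftKernel D i (ν + Pi.single i n)) :
    ∃ (s : Finset (ℕ × ℕ)) (Z : ℕ × ℕ → QShuffle D) (c : ℕ × ℕ → 𝕜), z = ∑ a ∈ s, Z a ∧
      (∀ a ∈ s, Z a ∈ weightSpace D (ν + Pi.single i n)) ∧
      (∀ a ∈ s, rightDeriv [i] (raise i (rootPairing D.p i (ν + Pi.single i n)) (Z a)) =
        c a • Z a) ∧
      (∀ a ∈ s, 0 ≤ c a * bilin D (Z a) (Z a)) ∧
      ∀ a ∈ s, ∀ b ∈ s, a ≠ b → bilin D (Z a) (Z b) = 0 := by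
  obtain ⟨Y, hY, hzY⟩ := exists_eq_sum_raiseChain hν hpos hz
  have hweight : ∀ a ∈ Finset.HasAntidiagonal.antidiagonal n,
      ν + Pi.single i a.1 + Pi.single i a.2 = ν + Pi.single i n := fun a ha => by
    rw [add_assoc, ← Pi.single_add, Finset.HasAntidiagonal.mem_antidiagonal.1 ha]
  refine ⟨Finset.HasAntidiagonal.antidiagonal n,
    fun a => raiseChain i (rootPairing D.p i (ν + Pi.single i a.1)) (Y a.1) a.2,
    fun a => chainCoeff D i (rootPairing D.p i (ν + Pi.single i a.1)) (a.2 + 1), ?_, fun a ha => ?_,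
    fun a ha => ?_, fun a ha => ?_, fun a ha b hb hab => ?_⟩
  · exact hzY
  · exact hweight a ha ▸ raiseChain_mem_weightSpace i _ (hY a.1).1.1 a.2
  · rw [← hweight a ha, rootPairing_add_single, ← raiseChain_succ]
    exact rightDeriv_raiseChain_succ (hY a.1).1.1 (hY a.1).2 a.2
  · have hpos' : ∀ m ≤ a.2, PosDefAt D (ν + Pi.single i a.1 + Pi.single i m) := fun m hm => by
      have := Finset.HasAntidiagonal.mem_antidiagonal.1 ha
      rw [add_assoc, ← Pi.single_add]
      exact hpos _ (by omega)
    rcases chainCoeff_nonneg_or_raiseChain_eq_zero hp hq (hY a.1) hpos' with hc | hZ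
    · exact mul_nonneg hc
        ((hpos' a.2 le_rfl).bilin_self_nonneg (raiseChain_mem_leftKernel (hY a.1).1 a.2).1)
    · simp only [hZ, map_zero, mul_zero, le_refl]
  · refine bilin_raiseChain_of_ne (hY a.1) (hY b.1) fun h => hab ?_
    have ha' := Finset.HasAntidiagonal.mem_antidiagonal.1 ha
    have hb' := Finset.HasAntidiagonal.mem_antidiagonal.1 hb
    exact Prod.ext (by omega) h

lemma bilin_raise_self_pos (hp : IsFiniteCartanForm D.p) (hq : 1 < D.q) {i : Fin r}
    (hν : ν i = 0) {n : ℕ} (hpos : ∀ m ≤ n, PosDefAt D (ν + Pi.single i m))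
    (hk : 0 < rootPairing D.p i (ν + Pi.single i n + Pi.single i 1))
    (hz : z ∈ leftKernel D i (ν + Pi.single i n))
    (hz0 : raise i (rootPairing D.p i (ν + Pi.single i n)) z ≠ 0) :
    0 < bilin D (raise i (rootPairing D.p i (ν + Pi.single i n)) z)
      (raise i (rootPairing D.p i (ν + Pi.single i n)) z) := by
  obtain ⟨s, Z, c, hzZ, hZ, hderivZ, hnonneg, horth⟩ := exists_orthogonal_eq_sum hp hq hν hpos hz
  have hraise := raise_mem_leftKernel hz
  have hderiv : rightDeriv [i] (raise i (rootPairing D.p i (ν + Pi.single i n)) z) =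
      ∑ a ∈ s, c a • Z a := by
    rw [hzZ, map_sum, map_sum]
    exact Finset.sum_congr rfl hderivZ
  have hnorm : bilin D (raise i (rootPairing D.p i (ν + Pi.single i n)) z)
      (raise i (rootPairing D.p i (ν + Pi.single i n)) z) =
      ∑ a ∈ s, c a * bilin D (Z a) (Z a) := by
    rw [bilin_raise i _ hz.1.1 hraise.1.1 hraise.2, hderiv, map_sum]
    refine Finset.sum_congr rfl fun a ha => ?_
    rw [map_smul, smul_eq_mul, hzZ, map_sum, LinearMap.sum_apply,
      Finset.sum_eq_single a (fun b hb hba => horth b hb a ha hba) fun h => absurd ha h]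
  have hex : ∃ a ∈ s, c a • Z a ≠ 0 := by
    by_contra! hzero
    exact hz0 (eq_zero_of_leftDeriv_of_rightDeriv hp hq hk hraise.1 hraise.2
      (hderiv.trans (Finset.sum_eq_zero hzero)))
  obtain ⟨a, ha, hca⟩ := hex
  rw [hnorm]
  refine Finset.sum_pos' hnonneg ⟨a, ha, (hnonneg a ha).lt_of_ne' ?_⟩
  obtain ⟨hc, hZa⟩ := smul_ne_zero_iff.1 hca
  exact mul_ne_zero hc (hpos n le_rfl _ (hZ a ha) hZa).ne'

lemma bilin_letter_mul_self_pos (hq : 1 < D.q) {i : Fin r} (hν : ν i = 0) {n : ℕ}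
    (hpos : ∀ m ≤ n, PosDefAt D (ν + Pi.single i m)) (hy : y ∈ weightSpace D (ν + Pi.single i n))
    (hy0 : y ≠ 0) : 0 < bilin D (letter i * y) (letter i * y) := by
  have hderiv : 0 ≤ bilin D (leftDeriv [i] y) (leftDeriv [i] y) := by
    cases n with
    | zero => rw [leftDeriv_eq_zero_of_apply_eq_zero (by simp [hν]) hy, map_zero]
    | succ n =>
      rw [Pi.single_add, ← add_assoc] at hy
      exact (hpos n n.le_succ).bilin_self_nonneg (leftDeriv_letter_mem_weightSpace i hy)
  rw [bilin_letter_mul_self hy]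
  exact add_pos_of_nonneg_of_pos hderiv
    (mul_pos (zpow_pos (zero_lt_one.trans hq) _) (hpos n le_rfl y hy hy0))

lemma posDefAt_add_single_succ (hp : IsFiniteCartanForm D.p) (hq : 1 < D.q) {i : Fin r}
    (hν : ν i = 0) {n : ℕ} (hpos : ∀ m ≤ n, PosDefAt D (ν + Pi.single i m))
    (hk : 0 < rootPairing D.p i (ν + Pi.single i (n + 1))) :
    PosDefAt D (ν + Pi.single i (n + 1)) := by
  intro u hu hu0
  rw [Pi.single_add, ← add_assoc] at hu hk
  have hbi : ∀ x ∈ biKernel D i (ν + Pi.single i n + Pi.single i 1), x = 0 := fun x hx =>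
    eq_zero_of_leftDeriv_of_rightDeriv hp hq hk hx.1.1 hx.1.2 hx.2
  obtain ⟨y, hy, z, hz, x, hx, rfl⟩ :=
    exists_eq_add_raise_add (hpos n le_rfl) (fun x hx _ => hbi x hx) hu
  rw [hbi x hx, add_zero] at hu0 ⊢
  have hraise := raise_mem_leftKernel hz
  have hsplit : ∀ s t : QShuffle D, bilin D s t = 0 → bilin D t s = 0 →
      bilin D (s + t) (s + t) = bilin D s s + bilin D t t := fun s t hst hts => by
    rw [map_add, map_add, LinearMap.add_apply, LinearMap.add_apply, hst, hts, add_zero, zero_add]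
  have horth := bilin_letter_mul_eq_zero hy.1 hraise
  rw [hsplit _ _ horth ((bilin_comm hraise.1.1 (letter_mul_mem_weightSpace i hy).1).trans horth)]
  rcases eq_or_ne y 0 with rfl | hy0
  · rw [mul_zero, zero_add] at hu0
    rw [mul_zero, map_zero, zero_add]
    exact bilin_raise_self_pos hp hq hν hpos hk hz hu0
  refine add_pos_of_pos_of_nonneg (bilin_letter_mul_self_pos hq hν hpos hy hy0) ?_
  rcases eq_or_ne (raise i (rootPairing D.p i (ν + Pi.single i n)) z) 0 with hz0 | hz0
  · rw [hz0, map_zero]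
  · exact (bilin_raise_self_pos hp hq hν hpos hk hz hz0).le

lemma posDefAt_zero : PosDefAt D 0 := by
  intro u hu hu0
  have hone := eq_smul_one_of_mem_weightSpace_zero hu
  have hnil : u [] ≠ 0 := fun h => hu0 (by rw [hone, h, zero_smul])
  rw [hone, map_smul, map_smul, LinearMap.smul_apply, bilin_one_one, smul_eq_mul, smul_eq_mul,
    mul_one]
  exact mul_self_pos.2 hnil

theorem posDefAt (hp : IsFiniteCartanForm D.p) (hq : 1 < D.q) (ν : Fin r → ℕ) :
    PosDefAt D ν := by
  induction hN : ∑ j, ν j using Nat.strong_induction_on generalizing ν with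
  | _ N ih =>
    rcases eq_or_ne ν 0 with rfl | hν0
    · exact posDefAt_zero
    obtain ⟨i, hi, hk⟩ := hp.exists_pos_rootPairing hν0
    obtain ⟨n, hn⟩ := Nat.exists_eq_succ_of_ne_zero hi.ne'
    have hν : ν = Function.update ν i 0 + Pi.single i (n + 1) := by
      funext j
      rcases eq_or_ne j i with rfl | hj
      · simp [hn]
      · simp [hj]
    have hsum (m : ℕ) : ∑ j, (Function.update ν i 0 + Pi.single i m : Fin r → ℕ) j =
        ∑ j, Function.update ν i 0 j + m := by
      simp [Finset.sum_add_distrib]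
    rw [hν] at hk hN ⊢
    refine posDefAt_add_single_succ hp hq (by simp) (fun m hm => ih _ ?_ _ rfl) hk
    rw [← hN, hsum, hsum]
    omega

end Ordered

end QShuffle

/-! ### Products of elements without a common cut -/

namespace QShuffle

variable {𝕜 : Type*} [Field 𝕜] {D : ShuffleDatum r 𝕜} {γ δ : Fin r → ℕ}
  {f g u v x z : QShuffle D}

lemma mul_apply_eq_zero {s : Word r}
    (h : ∀ s₁ s₂, IsShuffle s₁ s₂ s → f s₁ ≠ 0 → g s₂ = 0) : (f * g) s = 0 := by
  by_contra hs
  obtain ⟨s₁, s₂, hshuffle, hf, hg⟩ := exists_isShuffle_of_mul_ne_zero hs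
  exact hg (h s₁ s₂ hshuffle hf)

lemma apply_ne_zero_of_twist {c : Fin r} {s : Word r} (h : twist c g s ≠ 0) : g s ≠ 0 :=
  right_ne_zero_of_mul h

lemma mul_apply_of_left_nil {b : Word r}
    (h : ∀ b₁ b₂, IsShuffle b₁ b₂ b → f b₁ ≠ 0 → g b₂ ≠ 0 → b₁ = []) :
    (f * g) b = f [] * g b := by
  induction b generalizing f g with
  | nil => rfl
  | cons c b ih =>
    have hzero : (leftDeriv [c] f * twist c g) b = 0 := mul_apply_eq_zero fun s₁ s₂ hs hf => by
      by_contra hg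
      exact List.cons_ne_nil c s₁ (h _ s₂ (.left c hs) hf (apply_ne_zero_of_twist hg))
    rw [mul_cons, hzero, add_zero, ih (f := f) (g := leftDeriv [c] g) fun b₁ b₂ hs =>
      h b₁ (c :: b₂) (.right c hs)]
    rfl

lemma mul_apply_of_right_nil {b : Word r}
    (h : ∀ b₁ b₂, IsShuffle b₁ b₂ b → f b₁ ≠ 0 → g b₂ ≠ 0 → b₂ = []) :
    (f * g) b = f b * g [] := by
  induction b generalizing f g with
  | nil => rfl
  | cons c b ih =>
    have hzero : (f * leftDeriv [c] g) b = 0 := mul_apply_eq_zero fun s₁ s₂ hs hf => by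
      by_contra hg
      exact List.cons_ne_nil c s₂ (h s₁ _ (.right c hs) hf hg)
    rw [mul_cons, hzero, zero_add, ih (f := leftDeriv [c] f) (g := twist c g) fun b₁ b₂ hs hf hg =>
      h (c :: b₁) b₂ (.left c hs) hf (apply_ne_zero_of_twist hg), twist_apply, deg_nil, map_zero,
      neg_zero, zpow_zero, one_mul]
    rfl

lemma rootForm_deg_cons (p : Fin r → Fin r → ℤ) (c : Fin r) (a : Word r) (ν : Fin r → ℕ) :
    rootForm p (deg (c :: a)) ν = rootPairing p c ν + rootForm p (deg a) ν := by
  rw [deg_cons, ← rootForm_single_left, add_comm]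
  simp only [rootForm, Pi.add_apply, Nat.cast_add, add_mul, Finset.sum_add_distrib]

lemma mul_apply_append_of_straight {a b : Word r}
    (h : ∀ a₁ a₂ b₁ b₂, IsShuffle a₁ a₂ a → IsShuffle b₁ b₂ b → f (a₁ ++ b₁) ≠ 0 →
      g (a₂ ++ b₂) ≠ 0 → a₂ = [] ∧ b₁ = []) :
    (f * g) (a ++ b) = D.q ^ (-rootForm D.p (deg a) (deg b)) * (f a * g b) := by
  induction a generalizing f g with
  | nil =>
    rw [List.nil_append,
      mul_apply_of_left_nil (f := f) (g := g) fun b₁ b₂ hs hf hg => (h [] [] b₁ b₂ .nil hs hf hg).2]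
    simp [rootForm, deg_nil]
  | cons c a ih =>
    have hzero : (f * leftDeriv [c] g) (a ++ b) = 0 := mul_apply_eq_zero fun s₁ s₂ hs hf => by
      by_contra hg
      obtain ⟨a₁, b₁, a₂, b₂, rfl, rfl, ha, hb⟩ := hs.exists_split_output
      exact List.cons_ne_nil c a₂ (h a₁ _ b₁ b₂ (.right c ha) hb hf hg).1
    rw [List.cons_append, mul_cons, hzero, zero_add,
      ih (f := leftDeriv [c] f) (g := twist c g) fun a₁ a₂ b₁ b₂ ha hb hf hg =>
        h (c :: a₁) a₂ b₁ b₂ (.left c ha) hb hf (apply_ne_zero_of_twist hg), twist_apply,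
      rootForm_deg_cons, neg_add, zpow_add₀ D.q_ne_zero, leftDeriv_apply, List.singleton_append]
    ring

lemma mul_apply_append_of_crossed {a b : Word r}
    (h : ∀ a₁ a₂ b₁ b₂, IsShuffle a₁ a₂ a → IsShuffle b₁ b₂ b → f (a₁ ++ b₁) ≠ 0 →
      g (a₂ ++ b₂) ≠ 0 → a₁ = [] ∧ b₂ = []) :
    (f * g) (a ++ b) = f b * g a := by
  induction a generalizing f g with
  | nil =>
    exact mul_apply_of_right_nil fun b₁ b₂ hs hf hg => (h [] [] b₁ b₂ .nil hs hf hg).2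
  | cons c a ih =>
    have hzero : (leftDeriv [c] f * twist c g) (a ++ b) = 0 :=
      mul_apply_eq_zero fun s₁ s₂ hs hf => by
        by_contra hg
        obtain ⟨a₁, b₁, a₂, b₂, rfl, rfl, ha, hb⟩ := hs.exists_split_output
        exact List.cons_ne_nil c a₁
          (h _ a₂ b₁ b₂ (.left c ha) hb hf (apply_ne_zero_of_twist hg)).1
    rw [List.cons_append, mul_cons, hzero, add_zero,
      ih (f := f) (g := leftDeriv [c] g) fun a₁ a₂ b₁ b₂ ha => h a₁ (c :: a₂) b₁ b₂ (.right c ha)]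
    rfl

lemma mul_apply_append {a b : Word r} (ha : a ≠ [])
    (h : ∀ a₁ a₂ b₁ b₂, IsShuffle a₁ a₂ a → IsShuffle b₁ b₂ b → f (a₁ ++ b₁) ≠ 0 →
      g (a₂ ++ b₂) ≠ 0 → (a₂ = [] ∧ b₁ = []) ∨ (a₁ = [] ∧ b₂ = [])) :
    (f * g) (a ++ b) =
      D.q ^ (-rootForm D.p (deg a) (deg b)) * (f a * g b) + f b * g a := by
  obtain ⟨c, a, rfl⟩ := List.exists_cons_of_ne_nil ha
  have hstraight : (leftDeriv [c] f * twist c g) (a ++ b) =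
      D.q ^ (-rootForm D.p (deg a) (deg b)) * (leftDeriv [c] f a * twist c g b) :=
    mul_apply_append_of_straight fun a₁ a₂ b₁ b₂ ha hb hf hg =>
      (h (c :: a₁) a₂ b₁ b₂ (.left c ha) hb hf (apply_ne_zero_of_twist hg)).resolve_right
        fun hnil => List.cons_ne_nil c a₁ hnil.1
  have hcrossed : (f * leftDeriv [c] g) (a ++ b) = f b * leftDeriv [c] g a :=
    mul_apply_append_of_crossed fun a₁ a₂ b₁ b₂ ha hb hf hg =>
      (h a₁ (c :: a₂) b₁ b₂ (.right c ha) hb hf hg).resolve_left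
        fun hnil => List.cons_ne_nil c a₂ hnil.1
  rw [List.cons_append, mul_cons, hstraight, hcrossed, twist_apply, rootForm_deg_cons, neg_add,
    zpow_add₀ D.q_ne_zero, leftDeriv_apply, leftDeriv_apply, List.singleton_append]
  ring

lemma mul_apply_append_of_mem_weightSpace (hf : f ∈ weightSpace D γ) (hg : g ∈ weightSpace D γ)
    (hγ : γ ≠ 0) (h : ∀ a₁ a₂ b₁ b₂, f (a₁ ++ b₁) ≠ 0 → g (a₂ ++ b₂) ≠ 0 → deg b₁ = deg a₂ →
      deg b₂ = deg a₁ → a₁ = [] ∨ a₂ = []) {a b : Word r} (ha : deg a = γ) (hb : deg b = γ) :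
    (f * g) (a ++ b) = D.q ^ (-rootForm D.p γ γ) * (f a * g b) + f b * g a := by
  rw [mul_apply_append (deg_eq_zero_iff.not.1 (ha ▸ hγ)), ha, hb]
  intro a₁ a₂ b₁ b₂ hshuffle _ hfa hga
  have hdeg := hshuffle.deg_eq
  have hdegf := deg_eq_of_apply_ne_zero hf hfa
  have hdegg := deg_eq_of_apply_ne_zero hg hga
  rw [ha] at hdeg
  rw [deg_append] at hdegf hdegg
  have hb₁ : deg b₁ = deg a₂ := add_left_cancel (hdegf.trans hdeg)
  have hb₂ : deg b₂ = deg a₁ :=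
    add_left_cancel (hdegg.trans (hdeg.trans (add_comm _ _)))
  rcases h a₁ a₂ b₁ b₂ hfa hga hb₁ hb₂ with rfl | rfl
  · exact .inr ⟨rfl, deg_eq_zero_iff.1 (hb₂.trans deg_nil)⟩
  · exact .inl ⟨rfl, deg_eq_zero_iff.1 (hb₁.trans deg_nil)⟩

/-- No proper suffix of a word of `z` has the degree of a proper prefix of a word of `x`. The
condition is meant for `z` and `x` homogeneous of the same degree. -/
def NoCommonCut (z x : QShuffle D) : Prop :=
  ∀ w w' v v', z (w ++ w') ≠ 0 → x (v ++ v') ≠ 0 → deg w' = deg v → w = [] ∨ v = []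

lemma NoCommonCut.sub_apply_append (h : NoCommonCut z x) (hz : z ∈ weightSpace D γ)
    (hx : x ∈ weightSpace D γ) (hγ : γ ≠ 0) {a b : Word r} (ha : deg a = γ) (hb : deg b = γ) :
    (z * x - x * z) (a ++ b) =
      (D.q ^ (-rootForm D.p γ γ) - 1) * (z a * x b - x a * z b) := by
  rw [sub_apply,
    mul_apply_append_of_mem_weightSpace hz hx hγ
      (fun a₁ a₂ b₁ b₂ hza hxa hb₁ _ => h a₁ b₁ a₂ b₂ hza hxa hb₁) ha hb,
    mul_apply_append_of_mem_weightSpace hx hz hγ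
      (fun a₁ a₂ b₁ b₂ hxa hza _ hb₂ => (h a₂ b₂ a₁ b₁ hza hxa hb₂).symm) ha hb]
  ring

lemma bilin_mul_eq_of_forall_apply_append (hz : z ∈ weightSpace D γ) (hx : x ∈ weightSpace D δ)
    (hv : v ∈ letterAlgebra D) (T : QShuffle D →ₗ[𝕜] QShuffle D →ₗ[𝕜] 𝕜)
    (h : ∀ a b, deg a = γ → deg b = δ → v (a ++ b) = T (letterProd a) (letterProd b)) :
    bilin D (z * x) v = T z x := by
  refine map_eq_of_forall_letterProd_deg (S := (bilin D).flip v ∘ₗ LinearMap.mulRight 𝕜 x)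
    (T := T.flip x) (fun a ha => ?_) hz
  refine map_eq_of_forall_letterProd_deg
    (S := (bilin D).flip v ∘ₗ LinearMap.mulLeft 𝕜 (letterProd a)) (T := T (letterProd a))
    (fun b hb => ?_) hx
  simp only [LinearMap.comp_apply, LinearMap.mulLeft_apply, LinearMap.flip_apply]
  rw [← letterProd_append, bilin_letterProd _ hv, h a b ha hb]

lemma NoCommonCut.bilin_mul_sub (h : NoCommonCut z x) (hz : z ∈ weightSpace D γ)
    (hx : x ∈ weightSpace D γ) (hγ : γ ≠ 0) (hu : u ∈ weightSpace D γ) (hv : v ∈ weightSpace D γ) :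
    bilin D (u * v) (z * x - x * z) = (D.q ^ (-rootForm D.p γ γ) - 1) *
      (bilin D u z * bilin D v x - bilin D u x * bilin D v z) := by
  rw [bilin_mul_eq_of_forall_apply_append hu hv
    (sub_mem (mul_mem hz.1 hx.1) (mul_mem hx.1 hz.1))
    ((D.q ^ (-rootForm D.p γ γ) - 1) •
      ((LinearMap.mul 𝕜 𝕜).compl₁₂ ((bilin D).flip z) ((bilin D).flip x) -
        (LinearMap.mul 𝕜 𝕜).compl₁₂ ((bilin D).flip x) ((bilin D).flip z)))]
  · rfl
  · intro a b ha hb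
    rw [h.sub_apply_append hz hx hγ ha hb, ← bilin_letterProd a hz.1, ← bilin_letterProd b hx.1,
      ← bilin_letterProd a hx.1, ← bilin_letterProd b hz.1]
    rfl

section Ordered

variable [LinearOrder 𝕜] [IsStrictOrderedRing 𝕜]

/-- The commutator `[z, x]` has norm `2 (q ^ (-(γ, γ)) - 1) (z, z) (x, x)`, which would be
negative. -/
lemma NoCommonCut.eq_zero_or_eq_zero (hp : IsFiniteCartanForm D.p) (hq : 1 < D.q)
    (h : NoCommonCut z x) (hz : z ∈ weightSpace D γ) (hx : x ∈ weightSpace D γ) (hγ : γ ≠ 0)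
    (hxz : bilin D x z = 0) : x = 0 ∨ z = 0 := by
  by_contra! hne
  have hzx : bilin D z x = 0 := (bilin_comm hz.1 hx.1).trans hxz
  have hnorm : bilin D (z * x - x * z) (z * x - x * z) =
      (D.q ^ (-rootForm D.p γ γ) - 1) * (2 * (bilin D z z * bilin D x x)) := by
    rw [map_sub (bilin D), LinearMap.sub_apply, h.bilin_mul_sub hz hx hγ hz hx,
      h.bilin_mul_sub hz hx hγ hx hz, hxz, hzx]
    ring
  have hneg : D.q ^ (-rootForm D.p γ γ) - 1 < 0 :=
    sub_neg.2 (zpow_lt_one_of_neg₀ hq (neg_lt_zero.2 (hp.rootForm_self_pos γ hγ)))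
  have hnonneg := (posDefAt hp hq (γ + γ)).bilin_self_nonneg
    (sub_mem (mul_mem_weightSpace hz hx) (mul_mem_weightSpace hx hz))
  rw [hnorm] at hnonneg
  exact hnonneg.not_gt (mul_neg_of_neg_of_pos hneg (mul_pos two_pos
    (mul_pos (posDefAt hp hq γ z hz hne.2) (posDefAt hp hq γ x hx hne.1))))

end Ordered

end QShuffle

/-! ### Elements supported below a Lyndon word -/

lemma lt_append_of_ne_nil (w : Word r) {b : Word r} (hb : b ≠ []) : w < w ++ b := by
  induction w with
  | nil =>
    obtain ⟨c, b, rfl⟩ := List.exists_cons_of_ne_nil hb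
    exact List.Lex.nil
  | cons c w ih => exact List.Lex.cons ih

namespace QShuffle

variable {𝕜 : Type*} [Field 𝕜] {D : ShuffleDatum r 𝕜} {γ δ ε μ ν : Fin r → ℕ}
  {u x y z : QShuffle D} {l : Word r}

variable (D) in
/-- The elements of `𝒰` of degree `ν` all of whose words are smaller than `l`. -/
def lowerSpace (l : Word r) (ν : Fin r → ℕ) : Submodule 𝕜 (QShuffle D) where
  carrier := {x | x ∈ weightSpace D ν ∧ ∀ w, x w ≠ 0 → w < l}
  add_mem' := by
    rintro x y ⟨hx, hxl⟩ ⟨hy, hyl⟩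
    refine ⟨add_mem hx hy, fun w hw => ?_⟩
    by_cases hxw : x w = 0
    · exact hyl w fun hyw => hw (by rw [add_apply, hxw, hyw, add_zero])
    · exact hxl w hxw
  zero_mem' := ⟨zero_mem _, fun _ hw => absurd rfl hw⟩
  smul_mem' := by
    rintro a x ⟨hx, hxl⟩
    exact ⟨Submodule.smul_mem _ a hx, fun w hw => hxl w (right_ne_zero_of_mul hw)⟩

lemma lowerSpace_le_weightSpace : lowerSpace D l ν ≤ weightSpace D ν := fun _ hx => hx.1

lemma rightDeriv_mem_lowerSpace {b : Word r} (hb : deg b = ν) (hν : ν ≠ 0)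
    (hz : z ∈ weightSpace D (μ + ν)) (hzl : ∀ w, z w ≠ 0 → w ≤ l) :
    rightDeriv b z ∈ lowerSpace D l μ :=
  ⟨rightDeriv_mem_weightSpace hb hz, fun w hw =>
    (lt_append_of_ne_nil w (deg_eq_zero_iff.not.1 (hb ▸ hν))).trans_le (hzl _ hw)⟩

lemma mul_mem_lowerSpace (hl : ∀ u v, l = u ++ v → u ≠ [] → v ≠ [] → l < v)
    (hδε : δ + ε = deg l) (hδ : δ ≠ 0) (hε : ε ≠ 0) (hx : x ∈ lowerSpace D l δ)
    (hy : y ∈ lowerSpace D l ε) : x * y ∈ lowerSpace D l (deg l) := by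
  refine ⟨hδε ▸ mul_mem_weightSpace hx.1 hy.1, fun s hs => ?_⟩
  obtain ⟨w, v, hshuffle, hw, hv⟩ := exists_isShuffle_of_mul_ne_zero hs
  have hdegw := deg_eq_of_apply_ne_zero hx.1 hw
  have hdegv := deg_eq_of_apply_ne_zero hy.1 hv
  refine hshuffle.lt_of_le_of_le hl (deg_eq_zero_iff.not.1 (hdegw ▸ hδ))
    (deg_eq_zero_iff.not.1 (hdegv ▸ hε)) ?_ (hx.2 w hw).le (hy.2 v hv).le
  rw [← sum_deg w, ← sum_deg v, ← sum_deg l, ← hδε, hdegw, hdegv, ← Finset.sum_add_distrib]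
  rfl

/-- `z` is homogeneous of degree `γ` and orthogonal to the left ideal generated by the elements of
`𝒰` of positive degree supported below `l`. -/
structure IsOrthogonalToLower (l : Word r) (γ : Fin r → ℕ) (z : QShuffle D) : Prop where
  mem : z ∈ weightSpace D γ
  bilin_mul_eq_zero : ∀ δ ε, δ + ε = γ → ε ≠ 0 → ∀ x ∈ weightSpace D δ, ∀ y ∈ lowerSpace D l ε,
    bilin D (x * y) z = 0

lemma IsOrthogonalToLower.leftDeriv {a : Word r} (ha : deg a = μ)
    (hz : IsOrthogonalToLower l (μ + ν) z) : IsOrthogonalToLower l ν (leftDeriv a z) where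
  mem := leftDeriv_mem_weightSpace ha hz.mem
  bilin_mul_eq_zero δ ε hδε hε x hx y hy := by
    rw [← bilin_letterProd_mul a (mul_mem hx.1 hy.1.1) hz.mem.1, ← mul_assoc]
    exact hz.bilin_mul_eq_zero (μ + δ) ε (by rw [add_assoc, hδε]) hε _
      (ha ▸ mul_mem_weightSpace (letterProd_mem_weightSpace a) hx) y hy

lemma IsOrthogonalToLower.bilin_eq_zero (hz : IsOrthogonalToLower l γ z) (hγ : γ ≠ 0)
    (hx : x ∈ lowerSpace D l γ) : bilin D x z = 0 :=
  one_mul x ▸ hz.bilin_mul_eq_zero 0 γ (zero_add γ) hγ 1 one_mem_weightSpace x hx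

lemma bilin_mul_eq_zero_of_orthogonal (hδε : δ + ε = ν) (hε : ε ≠ 0) (hz : z ∈ weightSpace D ν)
    (hzl : ∀ w, z w ≠ 0 → w ≤ l) (hx : x ∈ weightSpace D δ)
    (horth : ∀ y ∈ lowerSpace D l δ, bilin D y x = 0) (hy : y ∈ weightSpace D ε) :
    bilin D (x * y) z = 0 := by
  refine map_eq_of_forall_letterProd_deg (S := (bilin D).flip z ∘ₗ LinearMap.mulLeft 𝕜 x) (T := 0)
    (fun b hb => ?_) hy
  have hmem : rightDeriv b z ∈ lowerSpace D l δ := rightDeriv_mem_lowerSpace hb hε (hδε ▸ hz) hzl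
  calc bilin D (x * letterProd b) z
      = bilin D x (rightDeriv b z) := bilin_mul_letterProd b hx.1 hz.1
    _ = bilin D (rightDeriv b z) x := bilin_comm hx.1 hmem.1.1
    _ = 0 := horth _ hmem

section Ordered

variable [LinearOrder 𝕜]

lemma PosDefAt.exists_eq_add_orthogonal {A : Submodule 𝕜 (QShuffle D)} (h : PosDefAt D ν)
    (hA : A ≤ weightSpace D ν) (hu : u ∈ weightSpace D ν) :
    ∃ a ∈ A, ∃ b ∈ weightSpace D ν, u = a + b ∧ ∀ y ∈ A, bilin D y b = 0 := by
  have hle : weightSpace D ν ≤ A ⊔ (weightSpace D ν ⊓ A.orthogonalBilin (bilin D)) := by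
    refine weightSpace_le_of_forall_orthogonal fun x hx hxW => h.eq_zero hx (hxW x ?_ hx)
    refine Submodule.mem_sup_right ⟨hx, Submodule.mem_orthogonalBilin_iff.2 fun y hy => ?_⟩
    exact (bilin_comm (hA hy).1 hx.1).trans (hxW y (Submodule.mem_sup_left hy) (hA hy))
  obtain ⟨a, ha, b, hb, rfl⟩ := Submodule.mem_sup.1 (hle hu)
  exact ⟨a, ha, b, hb.1, rfl, Submodule.mem_orthogonalBilin_iff.1 hb.2⟩

variable [IsStrictOrderedRing 𝕜]

/-- If words of `z` and `x` had a common cut, then stripping the prefix from `z` and the suffix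
from `x` would give a smaller counterexample. -/
lemma IsOrthogonalToLower.eq_zero_or_eq_zero (hp : IsFiniteCartanForm D.p) (hq : 1 < D.q)
    (hz : IsOrthogonalToLower l γ z) (hx : x ∈ lowerSpace D l γ) (hγ : γ ≠ 0) :
    x = 0 ∨ z = 0 := by
  induction hn : ∑ j, γ j using Nat.strong_induction_on generalizing γ x z with
  | _ n ih =>
  refine NoCommonCut.eq_zero_or_eq_zero hp hq (fun w w' v v' hzw hxv hcut => ?_) hz.mem hx.1 hγ
    (hz.bilin_eq_zero hγ hx)
  by_contra! hne
  have hdegz : deg w + deg v = γ := by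
    rw [← hcut, ← deg_append, deg_eq_of_apply_ne_zero hz.mem hzw]
  have hdegx : deg v + deg v' = γ := by
    rw [← deg_append, deg_eq_of_apply_ne_zero hx.1 hxv]
  have hsum : ∑ j, deg v j < n := by
    rw [← hn, ← hdegz]
    simp only [Pi.add_apply, Finset.sum_add_distrib, sum_deg]
    exact Nat.lt_add_of_pos_left (List.length_pos_of_ne_nil hne.1)
  have hv' : deg v' ≠ 0 := by
    rw [add_left_cancel (hdegx.trans (hdegz.symm.trans (add_comm _ _)))]
    exact deg_eq_zero_iff.not.2 hne.1
  rcases ih _ hsum (hz := IsOrthogonalToLower.leftDeriv rfl (hdegz.symm ▸ hz))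
    (hx := rightDeriv_mem_lowerSpace rfl hv' (hdegx.symm ▸ hx.1) fun s hs => (hx.2 s hs).le)
    (deg_eq_zero_iff.not.2 hne.2) rfl with hderiv | hderiv
  · exact hxv (congrFun hderiv v)
  · exact hzw (congrFun hderiv w')

lemma isOrthogonalToLower_of_forall_le (hp : IsFiniteCartanForm D.p) (hq : 1 < D.q)
    (hl : ∀ u v, l = u ++ v → u ≠ [] → v ≠ [] → l < v) (hz : z ∈ weightSpace D (deg l))
    (hzl : ∀ w, z w ≠ 0 → w ≤ l) (horth : ∀ y ∈ lowerSpace D l (deg l), bilin D y z = 0) :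
    IsOrthogonalToLower l (deg l) z where
  mem := hz
  bilin_mul_eq_zero δ ε hδε hε x hx y hy := by
    rcases eq_or_ne δ 0 with rfl | hδ
    · rw [zero_add] at hδε
      rw [eq_smul_one_of_mem_weightSpace_zero hx, smul_one_mul, map_smul, LinearMap.smul_apply,
        horth y (hδε ▸ hy), smul_zero]
    · obtain ⟨a, ha, b, hb, rfl, hab⟩ :=
        (posDefAt hp hq δ).exists_eq_add_orthogonal lowerSpace_le_weightSpace hx
      rw [add_mul, map_add, LinearMap.add_apply, horth _ (mul_mem_lowerSpace hl hδε hδ hε ha hy),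
        bilin_mul_eq_zero_of_orthogonal hδε hε hz hzl hb hab hy.1, add_zero]

theorem lowerSpace_eq_bot (hp : IsFiniteCartanForm D.p) (hq : 1 < D.q) (hl₀ : l ≠ [])
    (hl : ∀ u v, l = u ++ v → u ≠ [] → v ≠ [] → l < v) (hu : u ∈ weightSpace D (deg l))
    (hul : u l ≠ 0) (hule : ∀ w, u w ≠ 0 → w ≤ l) : lowerSpace D l (deg l) = ⊥ := by
  rw [eq_bot_iff]
  intro v hv
  obtain ⟨a, ha, z, hz, rfl, horth⟩ :=
    (posDefAt hp hq (deg l)).exists_eq_add_orthogonal (lowerSpace_le_weightSpace (l := l)) hu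
  have hal : a l = 0 := by
    by_contra hne
    exact lt_irrefl l (ha.2 l hne)
  have hzl : ∀ w, z w ≠ 0 → w ≤ l := fun w hw => by
    by_cases haw : a w = 0
    · exact hule w (by rwa [add_apply, haw, zero_add])
    · exact (ha.2 w haw).le
  have hz₀ : z ≠ 0 := fun hz₀ => hul (by rw [add_apply, hal, hz₀, zero_apply, add_zero])
  exact ((isOrthogonalToLower_of_forall_le hp hq hl hz hzl horth).eq_zero_or_eq_zero hp hq hv
    (deg_eq_zero_iff.not.2 hl₀)).resolve_right hz₀

end Ordered

end QShuffle

/-! ### Specialization of the parameter -/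

namespace QShuffle

variable {𝕜 : Type*} [Field 𝕜] {D : ShuffleDatum r 𝕜} (φ : K →+* 𝕜)

variable (D) in
/-- The specialization of the coefficients of an element of `F` along `φ : ℚ(q) → 𝕜`. -/
def specialize : FA r →+ QShuffle D where
  toFun f := fun s => φ (f s)
  map_zero' := by ext _; exact map_zero φ
  map_add' f g := by ext s; exact map_add φ (f s) (g s)

lemma specialize_apply (f : FA r) (s : Word r) : specialize D φ f s = φ (f s) := rfl

lemma specialize_smul (c : K) (f : FA r) :
    specialize D φ (c • f) = φ c • specialize D φ f := by
  ext s; exact map_mul φ c (f s)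

lemma specialize_single (w : Word r) : specialize D φ (Finsupp.single w 1) = single w := by
  ext s
  by_cases h : s = w <;> simp [specialize_apply, single_apply, h]

lemma ext_rightDeriv {f g : QShuffle D} (hnil : f [] = g [])
    (hderiv : ∀ c, rightDeriv [c] f = rightDeriv [c] g) : f = g := by
  ext s
  rcases List.eq_nil_or_concat' s with rfl | ⟨t, c, rfl⟩
  · exact hnil
  · exact congrFun (hderiv c) t

lemma rightDeriv_single_append (c a : Fin r) (w : Word r) :
    rightDeriv [c] (single (w ++ [a]) : QShuffle D) = if c = a then single w else 0 := by
  ext s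
  split_ifs with h
  · simp [rightDeriv_apply, single_apply, h]
  · simp [rightDeriv_apply, single_apply, h]

lemma rightDeriv_specialize_mapDomain (a c : Fin r) (f : FA r) :
    rightDeriv [c] (specialize D φ (f.mapDomain (· ++ [a]))) =
      if c = a then specialize D φ f else 0 := by
  ext s
  rw [rightDeriv_apply, specialize_apply]
  split_ifs with h
  · rw [h, specialize_apply]
    exact congrArg φ (Finsupp.mapDomain_apply (List.append_left_injective [a]) f s)
  · rw [Finsupp.mapDomain_of_notMem_range, map_zero, zero_apply]
    rintro ⟨t, ht⟩
    exact h (by simpa using (List.append_inj' ht rfl).2.symm)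

lemma specialize_mapDomain_nil (a : Fin r) (f : FA r) :
    specialize D φ (f.mapDomain (· ++ [a])) [] = 0 := by
  rw [specialize_apply, Finsupp.mapDomain_of_notMem_range, map_zero]
  rintro ⟨t, ht⟩
  simp at ht

lemma pairW_singleton (w : Word r) (b : Fin r) :
    pairW D.p w [b] = rootPairing D.p b (deg w.reverse) := by
  induction w with
  | nil => simp [pairW, deg_nil]
  | cons c w ih =>
    rw [List.reverse_cons, deg_append, map_add, deg_singleton, rootPairing_single, ← ih,
      D.p_symm b c]
    simp [pairW, add_comm]

variable {φ}

lemma specialize_shAux (hφ : φ qq = D.q) (w x : Word r) :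
    specialize D φ (shAux D.p w x) = single w.reverse * single x.reverse := by
  induction w, x using shAux.induct with
  | case1 x => rw [shAux, specialize_single, List.reverse_nil, ← one_def, one_mul]
  | case2 w hw =>
    rw [shAux, specialize_single, List.reverse_nil, ← one_def, mul_one]
    exact hw
  | case3 a w b x ihw ihx =>
    rw [shAux]
    apply ext_rightDeriv
    · rw [map_add, specialize_smul, add_apply, smul_apply, specialize_mapDomain_nil,
        specialize_mapDomain_nil, mul_nil]
      simp [single_apply]
    · intro c
      rw [map_add, map_add, specialize_smul, map_smul, rightDeriv_specialize_mapDomain,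
        rightDeriv_specialize_mapDomain, ihw, ihx, rightDeriv_mul, twist_single, smul_mul_assoc,
        List.reverse_cons (a := a), List.reverse_cons (a := b), rightDeriv_single_append,
        rightDeriv_single_append, map_zpow₀, hφ, pairW_singleton, List.reverse_cons, ite_mul,
        zero_mul, mul_ite, mul_zero]
      rcases eq_or_ne c b with rfl | hcb
      · rfl
      · rw [if_neg hcb, smul_zero, smul_zero]

lemma specialize_eq_sum (f : FA r) :
    specialize D φ f = f.sum fun w a => φ a • single w := by
  conv_lhs => rw [← f.sum_single]
  rw [map_finsuppSum]
  refine Finsupp.sum_congr fun w _ => ?_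
  rw [← specialize_single φ, ← specialize_smul, Finsupp.smul_single_one]

lemma specialize_shuffle (hφ : φ qq = D.q) (f g : FA r) :
    specialize D φ (shuffle D.p f g) = specialize D φ f * specialize D φ g := by
  rw [specialize_eq_sum f, specialize_eq_sum g, shuffle, map_finsuppSum, Finsupp.sum, Finsupp.sum,
    Finset.sum_mul]
  refine Finset.sum_congr rfl fun w _ => ?_
  rw [map_finsuppSum, Finsupp.sum, Finsupp.sum, Finset.mul_sum]
  refine Finset.sum_congr rfl fun x _ => ?_
  rw [specialize_smul, specialize_shAux hφ, List.reverse_reverse, List.reverse_reverse, map_mul,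
    smul_mul_smul_comm]

lemma specialize_mem_letterAlgebra (hφ : φ qq = D.q) {u : FA r} (hu : InU D.p u) :
    specialize D φ u ∈ letterAlgebra D := by
  induction hu with
  | letter i => rw [specialize_single]; exact letter_mem i
  | one => rw [specialize_single]; exact one_mem _
  | add _ _ hf hg => rw [map_add]; exact add_mem hf hg
  | smul c _ hf => rw [specialize_smul]; exact Subalgebra.smul_mem _ hf _
  | mul _ _ hf hg => rw [specialize_shuffle hφ]; exact mul_mem hf hg

lemma exists_mem_weightSpace_of_isGood (hφ : φ qq = D.q) {g : Word r} (hg : IsGood D.p g) :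
    ∃ u ∈ weightSpace D (deg g), u g ≠ 0 ∧ ∀ w, u w ≠ 0 → w ≤ g := by
  obtain ⟨u, hu, ⟨ν, hν⟩, hug, hmax⟩ := hg
  have hsupp : ∀ w, specialize D φ u w ≠ 0 → w ∈ u.support := fun w hw =>
    Finsupp.mem_support_iff.2 ((map_ne_zero φ).1 hw)
  have hdeg : deg g = ν := hν g (Finsupp.mem_support_iff.2 hug)
  refine ⟨specialize D φ u, ⟨specialize_mem_letterAlgebra hφ hu, fun w hw => ?_⟩,
    (map_ne_zero φ).2 hug, fun w hw => ?_⟩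
  · by_contra hne
    exact hw ((hν w (hsupp w hne)).trans hdeg.symm)
  · exact le_iff_lt_or_eq.2 (hmax w (hsupp w hw))

end QShuffle

lemma exists_one_lt_transcendental : ∃ θ : ℝ, 1 < θ ∧ Transcendental ℚ θ := by
  obtain ⟨θ, htrans, hlt, _⟩ :=
    ((Algebraic.countable ℚ ℝ).dense_compl ℝ).exists_between (one_lt_two (α := ℝ))
  exact ⟨θ, hlt, htrans⟩

lemma exists_ringHom_qq_eq {θ : ℝ} (hθ : Transcendental ℚ θ) : ∃ φ : K →+* ℝ, φ qq = θ := by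
  have hinj : Function.Injective (Polynomial.aeval (R := ℚ) θ).toRingHom :=
    transcendental_iff_injective.1 hθ
  refine ⟨IsFractionRing.lift (A := Polynomial ℚ) hinj, ?_⟩
  rw [qq, ← RatFunc.algebraMap_X, IsFractionRing.lift_algebraMap]
  exact Polynomial.aeval_X θ

lemma le_of_isGood_of_isLyndon {p : Fin r → Fin r → ℤ} (hp : IsFiniteCartanForm p) {l g : Word r}
    (hl : IsGood p l) (hlyndon : IsLyndon l) (hg : IsGood p g) (hdeg : deg g = deg l) :
    l ≤ g := by
  by_contra! hlt
  obtain ⟨θ, hθ, htrans⟩ := exists_one_lt_transcendental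
  obtain ⟨φ, hφ⟩ := exists_ringHom_qq_eq htrans
  let D : ShuffleDatum r ℝ := ⟨p, hp.symm, θ, (one_pos.trans hθ).ne'⟩
  obtain ⟨u, hu, hul, hule⟩ := QShuffle.exists_mem_weightSpace_of_isGood (D := D) hφ hl
  obtain ⟨v, hv, hvg, hvle⟩ := QShuffle.exists_mem_weightSpace_of_isGood (D := D) hφ hg
  have hvlower : v ∈ QShuffle.lowerSpace D l (deg l) :=
    ⟨hdeg ▸ hv, fun w hw => (hvle w hw).trans_lt hlt⟩
  rw [QShuffle.lowerSpace_eq_bot hp hθ hlyndon.1 hlyndon.2 hu hul hule,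
    Submodule.mem_bot] at hvlower
  exact hvg (congrFun hvlower g)

theorem good_lyndon_smallest_good_of_degree_general {p : Fin r → Fin r → ℤ}
    (hp : IsFiniteCartanForm p) :
    (∀ l g : Word r, IsGood p l → IsLyndon l → IsGood p g → deg g = deg l → wle l g) ∧
    (∀ l l' : Word r, IsGood p l → IsLyndon l → IsGood p l' → IsLyndon l' →
      deg l = deg l' → l = l') :=
  ⟨fun _ _ hl hlyndon hg hdeg => le_iff_lt_or_eq.1 (le_of_isGood_of_isLyndon hp hl hlyndon hg hdeg),
    fun _ _ hl hlyndon hl' hlyndon' hdeg =>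
      (le_of_isGood_of_isLyndon hp hl hlyndon hl' hdeg.symm).antisymm
        (le_of_isGood_of_isLyndon hp hl' hlyndon' hl hdeg)⟩

lemma CartanData.isFiniteCartanForm_p (C : CartanData r) : IsFiniteCartanForm C.p where
  symm := C.dsymm
  offdiag_nonpos i j hij :=
    mul_nonpos_of_nonneg_of_nonpos (by rcases C.dval i with h | h | h <;> omega) (C.offdiag i j hij)
  dvd_two_mul i j := ⟨C.a i j, by simp only [CartanData.p, C.diag]; ring⟩
  rootForm_self_pos ν hν := by
    have hpos := C.posdef (fun i => ν i) fun h => hν (funext fun i => by simpa using congrFun h i)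
    have hcast : (rootForm C.p ν ν : ℚ) =
        ∑ i, ∑ j, (ν i : ℚ) * ν j * ((C.d i * C.a i j : ℤ) : ℚ) := by
      simp only [rootForm, rootPairing, CartanData.p, AddMonoidHom.coe_mk, ZeroHom.coe_mk,
        Finset.mul_sum, Int.cast_sum, Int.cast_mul, Int.cast_natCast]
      exact Finset.sum_congr rfl fun i _ => Finset.sum_congr rfl fun j _ => by ring
    exact_mod_cast hcast ▸ hpos

/-- Corollary 4.7: a good Lyndon word is the lexicographically smallest good word of its
degree; in particular two good Lyndon words of the same degree coincide. -/
theorem good_lyndon_smallest_good_of_degree {r : ℕ} (hr : 1 ≤ r) (C : CartanData r) :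
    (∀ l g : Word r, IsGood C.p l → IsLyndon l → IsGood C.p g → deg g = deg l →
      wle l g) ∧
    (∀ l l' : Word r, IsGood C.p l → IsLyndon l → IsGood C.p l' → IsLyndon l' →
      deg l = deg l' → l = l') :=
  good_lyndon_smallest_good_of_degree_general C.isFiniteCartanForm_p
end
end
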